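/- arXiv:1602.08875 — 2 statements merged into one kernel-verified Lean document; each statement's English description precedes it below -/
import Mathlib

section
/- Let C_0 > 0 and ε > 0. There exist C_1 = C_1(C_0, ε) and n_1 = n_1(C_0, ε) such that for all n ≥ n_1 the following holds: for every centered Gaussian process (G_i)_{i=1}^n with |E[G_i G_j] − min(i,j)| ≤ C_0 for all i, j ≤ n, every real sequence h = (h_i)_{i=1}^{n−1}, and every real t with |t| < n^{1/4}, (1−ε)·p_{B,Y}(n, t, h − (log n)^{3/4}) − C_1·e^{−(log n)^{3/2−ε}} ≤ p_{B,G}(n, t, h) ≤ (1+ε)·p_{B,Y}(n, t, h + (log n)^{3/4}) + C_1·e^{−(log n)^{3/2−ε}}, where h ± c denotes the shifted sequence (h_i ± c)_{i}. -/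
open MeasureTheory ProbabilityTheory

noncomputable section

/-- The barrier event `B_Z(n,t,h) = {Z_i ≤ h_i, i = 1,…,n−1; Z_n ∈ [t, t+1]}`. -/
def barrierEvent {Ω : Type} (Z : ℕ → Ω → ℝ) (n : ℕ) (t : ℝ) (h : ℕ → ℝ) : Set Ω :=
  {ω | (∀ i, 1 ≤ i → i ≤ n - 1 → Z i ω ≤ h i) ∧ Z n ω ∈ Set.Icc t (t + 1)}

/-- `(G_i)_{i=1,…,n}` is a centered Gaussian process with covariance `Rcov`: every
finite linear combination of values at indices in `{1,…,n}` is a centered Gaussian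
with the prescribed variance. -/
def IsCenteredGaussianCov {Ω : Type} [MeasurableSpace Ω] (P : Measure Ω)
    (G : ℕ → Ω → ℝ) (n : ℕ) (Rcov : ℕ → ℕ → ℝ) : Prop :=
  ∀ (k : ℕ) (idx : Fin k → ℕ) (l : Fin k → ℝ), (∀ a, 1 ≤ idx a ∧ idx a ≤ n) →
    Measure.map (fun ω => ∑ a, l a * G (idx a) ω) P
      = gaussianReal 0 (∑ a, ∑ b, l a * l b * Rcov (idx a) (idx b)).toNNReal

section CenteredGaussian

open scoped ENNReal

variable {ι : Type*} [Fintype ι]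

/-- Cramér–Wold: a finite measure on `ι → ℝ` is determined by its one-dimensional images. -/
lemma ext_of_map_linear {μ ν : Measure (ι → ℝ)} [IsFiniteMeasure μ] [IsFiniteMeasure ν]
    (h : ∀ l : ι → ℝ, μ.map (fun x ↦ ∑ i, l i * x i) = ν.map (fun x ↦ ∑ i, l i * x i)) :
    μ = ν := by
  classical
  refine Measure.ext_of_charFunDual <| funext fun L ↦ ?_
  have hL : (L : (ι → ℝ) → ℝ) = fun x ↦ ∑ i, L (Pi.single i 1) * x i := by
    ext x
    conv_lhs => rw [pi_eq_sum_univ' x]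
    simp only [map_sum, map_smul, smul_eq_mul]
    refine Finset.sum_congr rfl fun i _ ↦ ?_
    rw [mul_comm]
  rw [charFunDual_eq_charFun_map_one, charFunDual_eq_charFun_map_one, hL,
    h fun i ↦ L (Pi.single i 1)]

lemma map_linear_conv (μ ν : Measure (ι → ℝ)) [SFinite μ] [SFinite ν] (l : ι → ℝ) :
    (μ.conv ν).map (fun x ↦ ∑ i, l i * x i)
      = (μ.map (fun x ↦ ∑ i, l i * x i)).conv (ν.map (fun x ↦ ∑ i, l i * x i)) := by
  have hm : Measurable fun x : ι → ℝ ↦ ∑ i, l i * x i := by fun_prop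
  rw [Measure.conv, Measure.conv, Measure.map_map hm (by fun_prop), Measure.map_prod_map _ _ hm hm,
    Measure.map_map (by fun_prop) (by fun_prop)]
  congr 1
  ext x
  simp [mul_add, Finset.sum_add_distrib]

lemma conv_Iic (μ ν : Measure (ι → ℝ)) [SFinite μ] [SFinite ν] (h : ι → ℝ) :
    (μ.conv ν) (Set.Iic h) = ∫⁻ x, ν (Set.Iic (h - x)) ∂μ := by
  rw [← lintegral_indicator_one measurableSet_Iic, Measure.lintegral_conv
    (measurable_one.indicator measurableSet_Iic)]
  refine lintegral_congr fun x ↦ ?_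
  rw [← lintegral_indicator_one measurableSet_Iic]
  refine lintegral_congr fun y ↦ ?_
  have : x + y ∈ Set.Iic h ↔ y ∈ Set.Iic (h - x) := by
    simp [le_sub_iff_add_le, add_comm]
  by_cases hy : x + y ∈ Set.Iic h
  · rw [Set.indicator_of_mem hy, Set.indicator_of_mem (this.1 hy)]
    rfl
  · rw [Set.indicator_of_notMem hy, Set.indicator_of_notMem (mt this.2 hy)]

/-- The quadratic form of a matrix. -/
def quadForm (S : Matrix ι ι ℝ) (l : ι → ℝ) : ℝ := ∑ i, ∑ j, l i * l j * S i j

lemma quadForm_eq_dotProduct (S : Matrix ι ι ℝ) (l : ι → ℝ) :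
    quadForm S l = l ⬝ᵥ S.mulVec l := by
  simp only [quadForm, dotProduct, Matrix.mulVec, Finset.mul_sum]
  exact Finset.sum_congr rfl fun i _ ↦ Finset.sum_congr rfl fun j _ ↦ by ring

lemma quadForm_add (S T : Matrix ι ι ℝ) (l : ι → ℝ) :
    quadForm (S + T) l = quadForm S l + quadForm T l := by
  simp [quadForm, mul_add, Finset.sum_add_distrib]

lemma quadForm_nonneg {S : Matrix ι ι ℝ} (hS : S.PosSemidef) (l : ι → ℝ) :
    0 ≤ quadForm S l := by
  simpa [quadForm_eq_dotProduct] using hS.dotProduct_mulVec_nonneg l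

lemma quadForm_vecMulVec (d : ℝ) (v l : ι → ℝ) :
    quadForm (d • Matrix.vecMulVec v v) l = d * (∑ i, l i * v i) ^ 2 := by
  rw [sq, Finset.sum_mul_sum, Finset.mul_sum]
  simp only [quadForm, Matrix.smul_apply, Matrix.vecMulVec_apply, smul_eq_mul, Finset.mul_sum]
  exact Finset.sum_congr rfl fun i _ ↦ Finset.sum_congr rfl fun j _ ↦ by ring

lemma posSemidef_smul_vecMulVec {d : ℝ} (hd : 0 ≤ d) (v : ι → ℝ) :
    (d • Matrix.vecMulVec v v).PosSemidef := by
  have := (Matrix.posSemidef_vecMulVec_self_star v).smul hd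
  simpa using this

variable [DecidableEq ι]

/-- The centered Gaussian measure on `ι → ℝ` with covariance matrix `S`. -/
def centeredGaussian (S : Matrix ι ι ℝ) : Measure (ι → ℝ) :=
  (multivariateGaussian 0 S).map WithLp.ofLp

instance (S : Matrix ι ι ℝ) : IsProbabilityMeasure (centeredGaussian S) :=
  Measure.isProbabilityMeasure_map (by fun_prop)

lemma map_linear_centeredGaussian {S : Matrix ι ι ℝ} (hS : S.PosSemidef) (l : ι → ℝ) :
    (centeredGaussian S).map (fun x ↦ ∑ i, l i * x i)
      = gaussianReal 0 (quadForm S l).toNNReal := by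
  rw [centeredGaussian, Measure.map_map (by fun_prop) (by fun_prop)]
  set L := innerSL ℝ (WithLp.toLp 2 l : EuclideanSpace ℝ ι) with hLdef
  have hL : (fun x : ι → ℝ ↦ ∑ i, l i * x i) ∘ (WithLp.ofLp : EuclideanSpace ℝ ι → ι → ℝ)
      = L := by
    ext x
    simp [hLdef, PiLp.inner_apply, mul_comm]
  rw [hL, IsGaussian.map_eq_gaussianReal]
  congr 2
  · rw [L.integral_comp_id_comm IsGaussian.integrable_id, integral_id_multivariateGaussian,
      map_zero]
  · have hv : Var[L; multivariateGaussian 0 S]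
        = covarianceBilin (multivariateGaussian 0 S) (WithLp.toLp 2 l) (WithLp.toLp 2 l) := by
      rw [covarianceBilin_self IsGaussian.memLp_two_id]
      rfl
    rw [hv, covarianceBilin_multivariateGaussian hS, quadForm_eq_dotProduct]

lemma eq_centeredGaussian {S : Matrix ι ι ℝ} (hS : S.PosSemidef) {μ : Measure (ι → ℝ)}
    [IsFiniteMeasure μ] (h : ∀ l : ι → ℝ, μ.map (fun x ↦ ∑ i, l i * x i)
      = gaussianReal 0 (quadForm S l).toNNReal) :
    μ = centeredGaussian S :=
  ext_of_map_linear fun l ↦ by rw [h, map_linear_centeredGaussian hS]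

lemma centeredGaussian_add {S T : Matrix ι ι ℝ} (hS : S.PosSemidef) (hT : T.PosSemidef) :
    centeredGaussian (S + T) = (centeredGaussian S).conv (centeredGaussian T) := by
  refine (eq_centeredGaussian (hS.add hT) fun l ↦ ?_).symm
  rw [map_linear_conv, map_linear_centeredGaussian hS, map_linear_centeredGaussian hT,
    gaussianReal_conv_gaussianReal, quadForm_add, add_zero,
    Real.toNNReal_add (quadForm_nonneg hS l) (quadForm_nonneg hT l)]

lemma centeredGaussian_smul_vecMulVec {d : ℝ} (hd : 0 ≤ d) (v : ι → ℝ) :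
    centeredGaussian (d • Matrix.vecMulVec v v)
      = (gaussianReal 0 d.toNNReal).map (fun s i ↦ s * v i) := by
  have hm : Measurable fun (s : ℝ) (i : ι) ↦ s * v i := by fun_prop
  have := Measure.isProbabilityMeasure_map (μ := gaussianReal 0 d.toNNReal) hm.aemeasurable
  refine (eq_centeredGaussian (posSemidef_smul_vecMulVec hd v) fun l ↦ ?_).symm
  rw [Measure.map_map (by fun_prop) hm]
  have : (fun x : ι → ℝ ↦ ∑ i, l i * x i) ∘ (fun (s : ℝ) (i : ι) ↦ s * v i)
      = ((∑ i, l i * v i) * ·) := by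
    ext s
    simp only [Function.comp, Finset.sum_mul]
    exact Finset.sum_congr rfl fun i _ ↦ by ring
  rw [this, gaussianReal_map_const_mul, quadForm_vecMulVec, mul_zero]
  congr 1
  ext
  rw [Real.coe_toNNReal _ (by positivity)]
  simp [hd, mul_comm]

/-- The probability that a centered Gaussian vector with covariance `S` stays below `h`. -/
def orthantProb (S : Matrix ι ι ℝ) (h : ι → ℝ) : ℝ≥0∞ := centeredGaussian S (Set.Iic h)

lemma orthantProb_le_one (S : Matrix ι ι ℝ) (h : ι → ℝ) : orthantProb S h ≤ 1 := prob_le_one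

lemma orthantProb_mono (S : Matrix ι ι ℝ) : Monotone (orthantProb S) :=
  fun _ _ h ↦ measure_mono (Set.Iic_subset_Iic.2 h)

lemma orthantProb_add {S T : Matrix ι ι ℝ} (hS : S.PosSemidef) (hT : T.PosSemidef)
    (h : ι → ℝ) :
    orthantProb (S + T) h = ∫⁻ x, orthantProb T (h - x) ∂(centeredGaussian S) := by
  rw [orthantProb, centeredGaussian_add hS hT, conv_Iic]
  rfl

lemma orthantProb_smul_vecMulVec {d : ℝ} (hd : 0 ≤ d) (v h : ι → ℝ) :
    orthantProb (d • Matrix.vecMulVec v v) h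
      = gaussianReal 0 d.toNNReal {s | ∀ k, s * v k ≤ h k} := by
  have hm : Measurable fun (s : ℝ) (i : ι) ↦ s * v i := by fun_prop
  rw [orthantProb, centeredGaussian_smul_vecMulVec hd, Measure.map_apply hm measurableSet_Iic]
  rfl

/-- Replacing independent noises in two coordinates by a common noise increases the
orthant probability. -/
lemma orthantProb_pair_le {d : ℝ} (hd : 0 ≤ d) {i j : ι} (hij : i ≠ j) (h : ι → ℝ) :
    orthantProb (d • Matrix.vecMulVec (Pi.single i 1) (Pi.single i 1)
        + d • Matrix.vecMulVec (Pi.single j 1) (Pi.single j 1)) h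
      ≤ orthantProb (d • Matrix.vecMulVec (Pi.single i 1 + Pi.single j 1)
        (Pi.single i 1 + Pi.single j 1)) h := by
  set γ := gaussianReal 0 d.toNNReal with hγ
  have hm : Measurable fun (s : ℝ) (k : ι) ↦ s * (Pi.single i 1 : ι → ℝ) k := by fun_prop
  have hmono : Measurable fun x : ι → ℝ ↦
      orthantProb (d • Matrix.vecMulVec (Pi.single j 1) (Pi.single j 1)) (h - x) := by
    have : Measurable fun x : ι → ℝ ↦ centeredGaussian
        (d • Matrix.vecMulVec (Pi.single j 1 : ι → ℝ) (Pi.single j 1))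
        (Prod.mk x ⁻¹' {p : (ι → ℝ) × (ι → ℝ) | p.2 ≤ h - p.1}) :=
      measurable_measure_prodMk_left (measurableSet_le (by fun_prop) (by fun_prop))
    exact this
  rw [orthantProb_add (posSemidef_smul_vecMulVec hd _) (posSemidef_smul_vecMulVec hd _),
    centeredGaussian_smul_vecMulVec hd, lintegral_map hmono hm]
  simp only [orthantProb_smul_vecMulVec hd, ← hγ]
  by_cases hgood : ∀ k, k ≠ i → k ≠ j → 0 ≤ h k
  · calc _ ≤ ∫⁻ s, (Set.Iic (h i)).indicator (fun _ ↦ γ (Set.Iic (h j))) s ∂γ := by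
          refine lintegral_mono fun s ↦ ?_
          by_cases hs : s ≤ h i
          · rw [Set.indicator_of_mem (Set.mem_Iic.2 hs)]
            refine measure_mono fun s' hs' ↦ ?_
            simpa [hij.symm] using hs' j
          · refine (measure_mono_null (t := ∅) (fun s' hs' ↦ hs ?_) measure_empty).le.trans
              zero_le
            simpa [hij] using hs' i
      _ = γ (Set.Iic (h i)) * γ (Set.Iic (h j)) := by
          rw [lintegral_indicator measurableSet_Iic, setLIntegral_const, mul_comm]
      _ ≤ γ (Set.Iic (min (h i) (h j))) := by
          rcases le_total (h i) (h j) with hle | hle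
          · rw [min_eq_left hle]
            exact mul_le_of_le_one_right' prob_le_one
          · rw [min_eq_right hle]
            exact mul_le_of_le_one_left' prob_le_one
      _ ≤ _ := by
          refine measure_mono fun s hs k ↦ ?_
          have hs : s ≤ min (h i) (h j) := hs
          rcases eq_or_ne k i with rfl | hki
          · simpa [hij] using hs.trans (min_le_left _ _)
          rcases eq_or_ne k j with rfl | hkj
          · simpa [hij.symm] using hs.trans (min_le_right _ _)
          simpa [hki, hkj] using hgood k hki hkj
  · push Not at hgood
    obtain ⟨k, hki, hkj, hk⟩ := hgood
    refine (lintegral_eq_zero_of_ae_eq_zero (ae_of_all _ fun s ↦ ?_)).le.trans zero_le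
    refine measure_mono_null (t := ∅) (fun s' hs' ↦ ?_) measure_empty
    have := hs' k
    simp [hki, hkj] at this
    exact absurd hk (not_lt.2 this)

lemma orthantProb_add_le {B S T : Matrix ι ι ℝ} (hB : B.PosSemidef) (hS : S.PosSemidef)
    (hT : T.PosSemidef) (hST : ∀ h, orthantProb S h ≤ orthantProb T h) (h : ι → ℝ) :
    orthantProb (B + S) h ≤ orthantProb (B + T) h := by
  rw [orthantProb_add hB hS, orthantProb_add hB hT]
  exact lintegral_mono fun x ↦ hST _

lemma orthantProb_sum_pairs_le {B : Matrix ι ι ℝ} (hB : B.PosSemidef) (w : ι × ι → ℝ)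
    (hw : ∀ q, 0 ≤ w q) (hw0 : ∀ i, w (i, i) = 0) (s : Finset (ι × ι)) (h : ι → ℝ) :
    orthantProb (B + ∑ q ∈ s, (w q • Matrix.vecMulVec (Pi.single q.1 1) (Pi.single q.1 1)
        + w q • Matrix.vecMulVec (Pi.single q.2 1) (Pi.single q.2 1))) h
      ≤ orthantProb (B + ∑ q ∈ s, w q • Matrix.vecMulVec (Pi.single q.1 1 + Pi.single q.2 1)
        (Pi.single q.1 1 + Pi.single q.2 1)) h := by
  induction s using Finset.induction_on generalizing B with
  | empty => simp
  | insert q s hq ih =>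
    have hS : (w q • Matrix.vecMulVec (Pi.single q.1 1 : ι → ℝ) (Pi.single q.1 1)
        + w q • Matrix.vecMulVec (Pi.single q.2 1) (Pi.single q.2 1)).PosSemidef :=
      (posSemidef_smul_vecMulVec (hw q) _).add (posSemidef_smul_vecMulVec (hw q) _)
    have hT := posSemidef_smul_vecMulVec (hw q) (Pi.single q.1 1 + Pi.single q.2 1 : ι → ℝ)
    have hsum : (∑ q ∈ s, w q • Matrix.vecMulVec (Pi.single q.1 1 + Pi.single q.2 1 : ι → ℝ)
        (Pi.single q.1 1 + Pi.single q.2 1)).PosSemidef :=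
      Matrix.posSemidef_sum _ fun q _ ↦ posSemidef_smul_vecMulVec (hw q) _
    have hcomm : ∀ X Y : Matrix ι ι ℝ, B + (X + Y) = B + Y + X := fun X Y ↦ by abel
    rw [Finset.sum_insert hq, ← add_assoc B]
    refine (ih (hB.add hS)).trans ?_
    rw [add_right_comm B, Finset.sum_insert hq,
      hcomm (w q • Matrix.vecMulVec (Pi.single q.1 1 + Pi.single q.2 1) _)]
    refine orthantProb_add_le (hB.add hsum) hS hT (fun g ↦ ?_) h
    obtain ⟨i, j⟩ := q
    by_cases hij : i = j
    · subst hij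
      simp [hw0]
    · exact orthantProb_pair_le (hw _) hij g

/-- One step of the interpolation proof of Slepian's inequality: a symmetric perturbation with
nonnegative entries and zero diagonal, whose row sums are at most one, increases the orthant
probability. -/
lemma orthantProb_le_add_perturbation {B D : Matrix ι ι ℝ} (hB : B.PosSemidef)
    (hD : D.IsSymm) (hD0 : ∀ i, D i i = 0) (hDnn : ∀ i j, 0 ≤ D i j)
    (hrow : ∀ i, ∑ j, D i j ≤ 1) (h : ι → ℝ) :
    orthantProb (B + 1) h ≤ orthantProb (B + D + 1) h := by
  set w : ι × ι → ℝ := fun q ↦ D q.1 q.2 / 2 with hw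
  have hsymm : ∀ i j, D i j = D j i := fun i j ↦ hD.apply j i
  have h11 : ∀ a b, ∑ q : ι × ι, w q * ((Pi.single q.1 1 : ι → ℝ) a * (Pi.single q.1 1 : ι → ℝ) b)
      = if a = b then ∑ j, D a j / 2 else 0 := fun a b ↦ by
    rw [Fintype.sum_prod_type]
    rcases eq_or_ne a b with rfl | hab
    · simp [Pi.single_apply, hw, Finset.sum_ite_irrel]
    · simp [Pi.single_apply, Finset.sum_ite_irrel, hab]
  have h22 : ∀ a b, ∑ q : ι × ι, w q * ((Pi.single q.2 1 : ι → ℝ) a * (Pi.single q.2 1 : ι → ℝ) b)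
      = if a = b then ∑ j, D a j / 2 else 0 := fun a b ↦ by
    rw [Fintype.sum_prod_type_right]
    rcases eq_or_ne a b with rfl | hab
    · simp [Pi.single_apply, hw, Finset.sum_ite_irrel, hsymm _ a]
    · simp [Pi.single_apply, Finset.sum_ite_irrel, hab]
  have h12 : ∀ a b, ∑ q : ι × ι, w q * ((Pi.single q.1 1 : ι → ℝ) a * (Pi.single q.2 1 : ι → ℝ) b)
      = D a b / 2 := fun a b ↦ by
    rw [Fintype.sum_prod_type]
    simp [Pi.single_apply, hw]
  have h21 : ∀ a b, ∑ q : ι × ι, w q * ((Pi.single q.2 1 : ι → ℝ) a * (Pi.single q.1 1 : ι → ℝ) b)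
      = D a b / 2 := fun a b ↦ by
    rw [Fintype.sum_prod_type]
    simp [Pi.single_apply, hw, hsymm a b]
  have hdiag : ∑ q, (w q • Matrix.vecMulVec (Pi.single q.1 1 : ι → ℝ) (Pi.single q.1 1)
        + w q • Matrix.vecMulVec (Pi.single q.2 1) (Pi.single q.2 1))
      = Matrix.diagonal fun i ↦ ∑ j, D i j := by
    ext a b
    rw [Matrix.sum_apply]
    simp only [Matrix.add_apply, Matrix.smul_apply, Matrix.vecMulVec_apply, smul_eq_mul,
      Finset.sum_add_distrib, h11, h22, Matrix.diagonal_apply]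
    split_ifs
    · rw [← Finset.sum_div, add_halves]
    · exact add_zero 0
  have hfull : ∑ q, w q • Matrix.vecMulVec (Pi.single q.1 1 + Pi.single q.2 1 : ι → ℝ)
        (Pi.single q.1 1 + Pi.single q.2 1)
      = (Matrix.diagonal fun i ↦ ∑ j, D i j) + D := by
    rw [← hdiag]
    ext a b
    rw [Matrix.add_apply, Matrix.sum_apply, Matrix.sum_apply]
    simp only [Matrix.add_apply, Matrix.smul_apply, Matrix.vecMulVec_apply, smul_eq_mul,
      Pi.add_apply, add_mul, mul_add, Finset.sum_add_distrib, h11, h22, h12, h21]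
    ring
  have hbase : (B + (Matrix.diagonal fun i ↦ 1 - ∑ j, D i j)).PosSemidef :=
    hB.add (Matrix.PosSemidef.diagonal fun i ↦ sub_nonneg.2 (hrow i))
  have key := orthantProb_sum_pairs_le hbase w (fun q ↦ div_nonneg (hDnn _ _) zero_le_two)
    (fun i ↦ by simp [hw, hD0]) Finset.univ h
  have hone : (Matrix.diagonal fun i ↦ 1 - ∑ j, D i j) + (Matrix.diagonal fun i ↦ ∑ j, D i j)
      = (1 : Matrix ι ι ℝ) := by
    rw [Matrix.diagonal_add, ← Matrix.diagonal_one]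
    simp
  have hlow : B + (Matrix.diagonal fun i ↦ 1 - ∑ j, D i j)
      + (Matrix.diagonal fun i ↦ ∑ j, D i j) = B + 1 := by rw [add_assoc, hone]
  have hhigh : B + (Matrix.diagonal fun i ↦ 1 - ∑ j, D i j)
      + ((Matrix.diagonal fun i ↦ ∑ j, D i j) + D) = B + D + 1 := by rw [← hone]; abel
  rwa [hdiag, hfull, hlow, hhigh] at key

/-- **Slepian's inequality** for covariance matrices of the form `A + 1`, `B + 1`. -/
theorem slepian_add_one {A B : Matrix ι ι ℝ} (hA : A.PosSemidef) (hB : B.PosSemidef)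
    (hdiag : ∀ i, A i i = B i i) (hle : ∀ i j, A i j ≤ B i j) (h : ι → ℝ) :
    orthantProb (A + 1) h ≤ orthantProb (B + 1) h := by
  obtain ⟨N, hN⟩ := exists_nat_gt (∑ i, ∑ j, (B - A) i j)
  have hnn : ∀ i j, 0 ≤ (B - A) i j := fun i j ↦ sub_nonneg.2 (hle i j)
  have hN0 : (0 : ℝ) < N :=
    (Finset.sum_nonneg fun i _ ↦ Finset.sum_nonneg fun j _ ↦ hnn i j).trans_lt hN
  have hsymm : (B - A).IsSymm := by
    have hA' := hA.isHermitian
    have hB' := hB.isHermitian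
    rw [Matrix.IsHermitian, Matrix.conjTranspose_eq_transpose_of_trivial] at hA' hB'
    rw [Matrix.IsSymm, Matrix.transpose_sub, hA', hB']
  have hstep : ∀ k : ℕ, k ≤ N →
      orthantProb (A + 1) h ≤ orthantProb (A + ((k : ℝ) / N) • (B - A) + 1) h := by
    intro k
    induction k with
    | zero => simp
    | succ k ih =>
      intro hk
      refine (ih (by lia)).trans ?_
      have hk1 : (k : ℝ) / N ≤ 1 := by
        rw [div_le_one hN0]
        exact_mod_cast (by lia : k ≤ N)
      have hconv : A + ((k : ℝ) / N) • (B - A)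
          = (1 - (k : ℝ) / N) • A + ((k : ℝ) / N) • B := by
        rw [smul_sub, sub_smul, one_smul]
        abel
      have hpsd : (A + ((k : ℝ) / N) • (B - A)).PosSemidef := by
        rw [hconv]
        exact (hA.smul (sub_nonneg.2 hk1)).add (hB.smul (by positivity))
      have hsucc : A + (((k + 1 : ℕ) : ℝ) / N) • (B - A)
          = A + ((k : ℝ) / N) • (B - A) + (1 / (N : ℝ)) • (B - A) := by
        rw [add_assoc, ← add_smul, ← add_div]
        push_cast
        rfl
      rw [hsucc]
      refine orthantProb_le_add_perturbation hpsd (hsymm.smul _) (fun i ↦ ?_) (fun i j ↦ ?_)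
        (fun i ↦ ?_) h
      · simp [hdiag]
      · exact mul_nonneg (by positivity) (hnn i j)
      · simp only [Matrix.smul_apply, smul_eq_mul, ← Finset.mul_sum]
        rw [one_div, inv_mul_le_one₀ hN0]
        exact (Finset.single_le_sum (f := fun i ↦ ∑ j, (B - A) i j)
          (fun i _ ↦ Finset.sum_nonneg fun j _ ↦ hnn i j) (Finset.mem_univ i)).trans hN.le
  have := hstep N le_rfl
  rwa [div_self hN0.ne', one_smul, add_sub_cancel] at this

lemma gaussianReal_Ici_le {v : ℝ} (c r : ℝ) (hv : v ≤ c) (hc : 0 ≤ c) (hr : 0 ≤ r) :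
    gaussianReal 0 v.toNNReal (Set.Ici r) ≤ ENNReal.ofReal (Real.exp (-r ^ 2 / (2 * c))) := by
  have hsub : HasSubgaussianMGF (id : ℝ → ℝ) c.toNNReal (gaussianReal 0 v.toNNReal) :=
    { integrable_exp_mul := fun t ↦ integrable_exp_mul_gaussianReal t
      mgf_le := fun t ↦ by
        rw [mgf_id_gaussianReal]
        refine Real.exp_le_exp.2 ?_
        have : (v.toNNReal : ℝ) ≤ c.toNNReal := by exact_mod_cast Real.toNNReal_le_toNNReal hv
        nlinarith [sq_nonneg t] }
  have h := hsub.measure_ge_le hr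
  rw [Real.coe_toNNReal _ hc] at h
  exact (ENNReal.le_ofReal_iff_toReal_le (measure_ne_top _ _) (Real.exp_nonneg _)).2 h

lemma map_eval_centeredGaussian {S : Matrix ι ι ℝ} (hS : S.PosSemidef) (i : ι) (c : ℝ) :
    (centeredGaussian S).map (fun x ↦ c * x i) = gaussianReal 0 (c ^ 2 * S i i).toNNReal := by
  have h := map_linear_centeredGaussian hS (Pi.single i c)
  have h1 : (fun x : ι → ℝ ↦ ∑ j, (Pi.single i c : ι → ℝ) j * x j) = fun x ↦ c * x i := by
    ext x
    simp [Pi.single_apply]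
  have h2 : quadForm S (Pi.single i c) = c ^ 2 * S i i := by
    simp [quadForm, Pi.single_apply, sq]
  rwa [h1, h2] at h

/-- Tail bound for one coordinate of a Gaussian vector, in either direction. -/
lemma centeredGaussian_tail {S : Matrix ι ι ℝ} (hS : S.PosSemidef) {c r : ℝ} (hc : 0 ≤ c)
    (hSc : ∀ i, S i i ≤ c) (hr : 0 ≤ r) {σ : ℝ} (hσ : σ ^ 2 = 1) :
    centeredGaussian S {x | ∃ i, r < σ * x i}
      ≤ Fintype.card ι * ENNReal.ofReal (Real.exp (-r ^ 2 / (2 * c))) := by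
  have hset : {x : ι → ℝ | ∃ i, r < σ * x i} ⊆ ⋃ i, {x | r ≤ σ * x i} := by
    rintro x ⟨i, hi⟩
    exact Set.mem_iUnion.2 ⟨i, hi.le⟩
  refine (measure_mono hset).trans <| (measure_iUnion_fintype_le _ _).trans ?_
  rw [← nsmul_eq_mul, ← Finset.card_univ]
  refine Finset.sum_le_card_nsmul _ _ _ fun i _ ↦ ?_
  have h := gaussianReal_Ici_le c r (hSc i) hc hr
  rwa [← one_mul (S i i), ← hσ, ← map_eval_centeredGaussian hS i σ,
    Measure.map_apply (by fun_prop) measurableSet_Ici] at h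

lemma orthantProb_le_add_noise {S N : Matrix ι ι ℝ} (hS : S.PosSemidef) (hN : N.PosSemidef)
    {c r : ℝ} (hc : 0 ≤ c) (hNc : ∀ i, N i i ≤ c) (hr : 0 ≤ r) (h : ι → ℝ) :
    orthantProb S h ≤ orthantProb (S + N) (fun i ↦ h i + r)
      + Fintype.card ι * ENNReal.ofReal (Real.exp (-r ^ 2 / (2 * c))) := by
  have hmeas : MeasurableSet {x : ι → ℝ | ∃ i, r < 1 * x i} := by
    simp only [Set.ofPred_exists]
    exact MeasurableSet.iUnion fun i ↦ measurableSet_lt (by fun_prop) (by fun_prop)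
  rw [add_comm S N, orthantProb_add hN hS]
  calc orthantProb S h = ∫⁻ _, orthantProb S h ∂(centeredGaussian N) := by simp
    _ ≤ ∫⁻ x, (orthantProb S ((fun i ↦ h i + r) - x)
          + {x : ι → ℝ | ∃ i, r < 1 * x i}.indicator 1 x) ∂(centeredGaussian N) := by
        refine lintegral_mono fun x ↦ ?_
        by_cases hx : x ∈ {x : ι → ℝ | ∃ i, r < 1 * x i}
        · rw [Set.indicator_of_mem hx]
          exact (orthantProb_le_one S h).trans le_add_self
        · refine le_add_right (orthantProb_mono S fun i ↦ ?_)
          have : ¬ r < 1 * x i := fun hi ↦ hx ⟨i, hi⟩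
          simp only [Pi.sub_apply]
          linarith
    _ ≤ _ := by
        rw [lintegral_add_right _ (measurable_one.indicator hmeas), lintegral_indicator_one hmeas]
        gcongr
        exact centeredGaussian_tail hN hc hNc hr (one_pow 2)

lemma orthantProb_add_noise_le {S N : Matrix ι ι ℝ} (hS : S.PosSemidef) (hN : N.PosSemidef)
    {c r : ℝ} (hc : 0 ≤ c) (hNc : ∀ i, N i i ≤ c) (hr : 0 ≤ r) (h : ι → ℝ) :
    orthantProb (S + N) h ≤ orthantProb S (fun i ↦ h i + r)
      + Fintype.card ι * ENNReal.ofReal (Real.exp (-r ^ 2 / (2 * c))) := by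
  have hmeas : MeasurableSet {x : ι → ℝ | ∃ i, r < -1 * x i} := by
    simp only [Set.ofPred_exists]
    exact MeasurableSet.iUnion fun i ↦ measurableSet_lt (by fun_prop) (by fun_prop)
  rw [add_comm S N, orthantProb_add hN hS]
  calc _ ≤ ∫⁻ x, (orthantProb S (fun i ↦ h i + r)
          + {x : ι → ℝ | ∃ i, r < -1 * x i}.indicator 1 x) ∂(centeredGaussian N) := by
        refine lintegral_mono fun x ↦ ?_
        by_cases hx : x ∈ {x : ι → ℝ | ∃ i, r < -1 * x i}
        · rw [Set.indicator_of_mem hx]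
          exact (orthantProb_le_one S _).trans le_add_self
        · refine le_add_right (orthantProb_mono S fun i ↦ ?_)
          have : ¬ r < -1 * x i := fun hi ↦ hx ⟨i, hi⟩
          simp only [Pi.sub_apply]
          linarith
    _ ≤ _ := by
        rw [lintegral_add_right _ (measurable_one.indicator hmeas), lintegral_indicator_one hmeas,
          lintegral_const, measure_univ, mul_one]
        gcongr
        exact centeredGaussian_tail hN hc hNc hr (by norm_num)

/-- Two centered Gaussian vectors with uniformly close covariances have comparable orthant
probabilities, up to a shift and a Gaussian error. -/
theorem orthantProb_le_of_cov_close {S T : Matrix ι ι ℝ} (hS : S.PosSemidef)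
    (hT : T.PosSemidef) {c r : ℝ} (hc : 0 ≤ c) (hST : ∀ i j, |S i j - T i j| ≤ c)
    (hr : 0 ≤ r) (h : ι → ℝ) :
    orthantProb S h ≤ orthantProb T (fun i ↦ h i + 2 * r)
      + 2 * Fintype.card ι * ENNReal.ofReal (Real.exp (-r ^ 2 / (2 * (2 * c + 1)))) := by
  set d : ι → ℝ := fun i ↦ T i i + c - S i i with hd
  have hbound := fun i j ↦ abs_le.1 (hST i j)
  have hd0 : ∀ i, 0 ≤ d i := fun i ↦ by simp only [hd]; linarith [hbound i i]
  have hdc : ∀ i, d i ≤ 2 * c := fun i ↦ by simp only [hd]; linarith [hbound i i]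
  set J : Matrix ι ι ℝ := c • Matrix.vecMulVec 1 1 with hJ
  have hJapp : ∀ i j, J i j = c := fun i j ↦ by simp [hJ]
  have hDpsd : (Matrix.diagonal d).PosSemidef := Matrix.PosSemidef.diagonal hd0
  have hJpsd : J.PosSemidef := posSemidef_smul_vecMulVec hc 1
  have h1 := orthantProb_le_add_noise (r := r) hS (hDpsd.add Matrix.PosSemidef.one)
    (c := 2 * c + 1) (by linarith) (fun i ↦ by simpa using hdc i) hr h
  have h2 := slepian_add_one (hS.add hDpsd) (hT.add hJpsd) (fun i ↦ by simp [hJapp, hd])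
    (fun i j ↦ by
      rcases eq_or_ne i j with rfl | hij
      · simp [hJapp, hd]
      · rw [Matrix.add_apply, Matrix.add_apply, Matrix.diagonal_apply_ne _ hij, hJapp]
        linarith [hbound i j]) (fun i ↦ h i + r)
  have h3 := orthantProb_add_noise_le (r := r) hT (hJpsd.add Matrix.PosSemidef.one)
    (c := 2 * c + 1) (by linarith) (fun i ↦ by simp [hJapp]; linarith) hr (fun i ↦ h i + r)
  rw [add_assoc, add_assoc] at h2
  have hshift : (fun i ↦ h i + r + r) = fun i ↦ h i + 2 * r := by ext; ring
  rw [hshift] at h3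
  calc _ ≤ _ := h1.trans (add_le_add_left (h2.trans h3) _)
    _ = _ := by ring

end CenteredGaussian

section Conditioning

open scoped ENNReal

/-- The covariance matrix, given the value at time `m + 1`, of a Gaussian process with
covariance `K` at the times `1, …, m`. -/
def bridgeCov (K : ℕ → ℕ → ℝ) (m : ℕ) : Matrix (Fin m) (Fin m) ℝ :=
  .of fun i j ↦ K (i + 1) (j + 1) - K (i + 1) (m + 1) * K (j + 1) (m + 1) / K (m + 1) (m + 1)

lemma quadForm_bridgeCov {K : ℕ → ℕ → ℝ} {m : ℕ} (hsymm : ∀ i j, K i j = K j i)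
    (hk : 0 < K (m + 1) (m + 1)) (l : Fin (m + 1) → ℝ) :
    ∑ i : Fin (m + 1), ∑ j : Fin (m + 1), l i * l j * K (i + 1) (j + 1)
      = (∑ i : Fin m, l i.castSucc * (K (i + 1) (m + 1) / K (m + 1) (m + 1)) + l (Fin.last m)) ^ 2
          * K (m + 1) (m + 1)
        + quadForm (bridgeCov K m) fun i ↦ l i.castSucc := by
  set k := K (m + 1) (m + 1) with hkdef
  set b := ∑ i : Fin m, l i.castSucc * K (i + 1) (m + 1) with hb
  have h1 : ∑ i : Fin m, l i.castSucc * (K (i + 1) (m + 1) / k) = b / k := by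
    rw [hb, Finset.sum_div]
    exact Finset.sum_congr rfl fun i _ ↦ by ring
  have h2 : quadForm (bridgeCov K m) (fun i ↦ l i.castSucc)
      = ∑ i : Fin m, ∑ j : Fin m, l i.castSucc * l j.castSucc * K (i + 1) (j + 1) - b ^ 2 / k := by
    rw [sq, hb, Finset.sum_mul_sum, Finset.sum_div, quadForm, ← Finset.sum_sub_distrib]
    refine Finset.sum_congr rfl fun i _ ↦ ?_
    rw [Finset.sum_div, ← Finset.sum_sub_distrib]
    refine Finset.sum_congr rfl fun j _ ↦ ?_
    simp only [bridgeCov, Matrix.of_apply, ← hkdef]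
    ring
  have h3 : ∑ i : Fin m, l i.castSucc * l (Fin.last m) * K (i + 1) (m + 1)
      = l (Fin.last m) * b := by
    rw [hb, Finset.mul_sum]
    exact Finset.sum_congr rfl fun i _ ↦ by ring
  have h4 : ∑ i : Fin m, l (Fin.last m) * l i.castSucc * K (m + 1) (i + 1)
      = l (Fin.last m) * b := by
    rw [hb, Finset.mul_sum]
    exact Finset.sum_congr rfl fun i _ ↦ by rw [hsymm]; ring
  rw [h1, h2, Fin.sum_univ_castSucc]
  simp only [Fin.sum_univ_castSucc, Fin.val_castSucc, Fin.val_last, Finset.sum_add_distrib, h3, h4,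
    ← hkdef]
  field_simp
  ring

lemma posSemidef_bridgeCov {K : ℕ → ℕ → ℝ} {m : ℕ} (hsymm : ∀ i j, K i j = K j i)
    (hk : 0 < K (m + 1) (m + 1))
    (hnn : ∀ l : Fin (m + 1) → ℝ, 0 ≤ ∑ i, ∑ j, l i * l j * K (i + 1) (j + 1)) :
    (bridgeCov K m).PosSemidef := by
  refine Matrix.PosSemidef.of_dotProduct_mulVec_nonneg ?_ fun x ↦ ?_
  · ext i j
    simp only [Matrix.conjTranspose_apply, bridgeCov, Matrix.of_apply, star_trivial]
    rw [hsymm (j + 1) (i + 1)]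
    ring
  · rw [star_trivial, ← quadForm_eq_dotProduct]
    have h := hnn (Fin.snoc x (-∑ i : Fin m, x i * (K (i + 1) (m + 1) / K (m + 1) (m + 1))))
    rw [quadForm_bridgeCov hsymm hk] at h
    simpa using h

/-- The path with final value `p.1` and bridge `p.2`. -/
def pathOfBridge (K : ℕ → ℕ → ℝ) (m : ℕ) (p : ℝ × (Fin m → ℝ)) : Fin (m + 1) → ℝ :=
  Fin.snoc (α := fun _ ↦ ℝ) (fun i : Fin m ↦ p.2 i + K (i + 1) (m + 1) / K (m + 1) (m + 1) * p.1)
    p.1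

lemma measurable_pathOfBridge (K : ℕ → ℕ → ℝ) (m : ℕ) : Measurable (pathOfBridge K m) := by
  refine measurable_pi_lambda _ fun i ↦ ?_
  refine Fin.lastCases ?_ (fun i ↦ ?_) i
  · simp only [pathOfBridge, Fin.snoc_last]
    fun_prop
  · simp only [pathOfBridge, Fin.snoc_castSucc]
    fun_prop

/-- The law of a Gaussian process up to time `m + 1` as a linear combination of its final value
and of an independent bridge. -/
lemma map_eq_map_prod_bridge {Ω : Type} [MeasurableSpace Ω] {P : Measure Ω}
    [IsProbabilityMeasure P] {G : ℕ → Ω → ℝ} {m : ℕ} {K : ℕ → ℕ → ℝ}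
    (hG : IsCenteredGaussianCov P G (m + 1) K) (hsymm : ∀ i j, K i j = K j i)
    (hk : 0 < K (m + 1) (m + 1)) (hpsd : (bridgeCov K m).PosSemidef)
    (hX : AEMeasurable (fun ω (i : Fin (m + 1)) ↦ G (i + 1) ω) P) :
    P.map (fun ω (i : Fin (m + 1)) ↦ G (i + 1) ω)
      = ((gaussianReal 0 (K (m + 1) (m + 1)).toNNReal).prod (centeredGaussian (bridgeCov K m))).map
        (pathOfBridge K m) := by
  have hΦ := measurable_pathOfBridge K m
  have := Measure.isProbabilityMeasure_map (μ := P) hX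
  have := Measure.isProbabilityMeasure_map (μ := (gaussianReal 0 (K (m + 1) (m + 1)).toNNReal).prod
    (centeredGaussian (bridgeCov K m))) hΦ.aemeasurable
  refine ext_of_map_linear fun l ↦ ?_
  have hl : Measurable fun x : Fin (m + 1) → ℝ ↦ ∑ i, l i * x i := by fun_prop
  rw [AEMeasurable.map_map_of_aemeasurable hl.aemeasurable hX, Measure.map_map hl hΦ]
  have hlaw := hG (m + 1) (fun i ↦ i + 1) l fun i ↦ ⟨by lia, by lia⟩
  set c := ∑ i : Fin m, l i.castSucc * (K (i + 1) (m + 1) / K (m + 1) (m + 1)) + l (Fin.last m)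
    with hc
  have hsplit : (fun x : Fin (m + 1) → ℝ ↦ ∑ i, l i * x i) ∘ pathOfBridge K m
      = (fun q : ℝ × ℝ ↦ q.1 + q.2) ∘
        Prod.map (fun s ↦ c * s) (fun x : Fin m → ℝ ↦ ∑ i, l i.castSucc * x i) := by
    ext p
    simp only [Function.comp, pathOfBridge, Fin.sum_univ_castSucc, Fin.snoc_castSucc, Fin.snoc_last, Prod.map,
      hc, mul_add, Finset.sum_add_distrib, add_mul, Finset.sum_mul, mul_assoc]
    ring
  have hm : Measurable fun x : Fin m → ℝ ↦ ∑ i, l i.castSucc * x i := by fun_prop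
  refine hlaw.trans ?_
  rw [hsplit, ← Measure.map_map (by fun_prop) (by fun_prop),
    ← Measure.map_prod_map _ _ (by fun_prop) hm,
    map_linear_centeredGaussian hpsd, gaussianReal_map_const_mul,
    quadForm_bridgeCov hsymm hk, ← hc,
    Real.toNNReal_add (by positivity) (quadForm_nonneg hpsd _)]
  refine Eq.trans ?_ gaussianReal_conv_gaussianReal.symm
  simp only [mul_zero, add_zero]
  congr 2
  ext
  rw [Real.coe_toNNReal _ (by positivity)]
  simp [hk.le]

lemma aemeasurable_of_isCenteredGaussianCov {Ω : Type} [MeasurableSpace Ω] {P : Measure Ω}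
    {G : ℕ → Ω → ℝ} {n : ℕ} {K : ℕ → ℕ → ℝ} (hG : IsCenteredGaussianCov P G n K) {i : ℕ}
    (hi : 1 ≤ i) (hin : i ≤ n) : AEMeasurable (G i) P := by
  have h := hG 1 (fun _ ↦ i) (fun _ ↦ 1) fun _ ↦ ⟨hi, hin⟩
  simp only [Finset.univ_unique, Finset.sum_singleton, one_mul] at h
  refine AEMeasurable.of_map_ne_zero ?_
  rw [h]
  exact IsProbabilityMeasure.ne_zero _

/-- The barrier probability, obtained by conditioning on the final value. -/
lemma measure_barrierEvent_eq_lintegral {Ω : Type} [MeasurableSpace Ω] {P : Measure Ω}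
    [IsProbabilityMeasure P] {G : ℕ → Ω → ℝ} {m : ℕ} {K : ℕ → ℕ → ℝ}
    (hG : IsCenteredGaussianCov P G (m + 1) K) (hsymm : ∀ i j, K i j = K j i)
    (hk : 0 < K (m + 1) (m + 1)) (hpsd : (bridgeCov K m).PosSemidef) (t : ℝ) (h : ℕ → ℝ) :
    P (barrierEvent G (m + 1) t h)
      = ∫⁻ s in Set.Icc t (t + 1), orthantProb (bridgeCov K m)
          (fun i ↦ h (i + 1) - K (i + 1) (m + 1) / K (m + 1) (m + 1) * s)
        ∂(gaussianReal 0 (K (m + 1) (m + 1)).toNNReal) := by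
  have hX : AEMeasurable (fun ω (i : Fin (m + 1)) ↦ G (i + 1) ω) P :=
    aemeasurable_pi_lambda _ fun i ↦ aemeasurable_of_isCenteredGaussianCov hG (by lia) (by lia)
  set B : Set (Fin (m + 1) → ℝ) :=
    {x | (∀ i : Fin m, x i.castSucc ≤ h (i + 1)) ∧ x (Fin.last m) ∈ Set.Icc t (t + 1)} with hB
  have hBm : MeasurableSet B := by
    refine MeasurableSet.inter ?_ (measurableSet_Icc.preimage (measurable_pi_apply _))
    exact MeasurableSet.congr (MeasurableSet.iInter fun i : Fin m ↦
      measurableSet_le (measurable_pi_apply i.castSucc) (measurable_const (a := h (i + 1))))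
      (Set.ext fun _ ↦ Set.mem_iInter)
  have hpre : barrierEvent G (m + 1) t h = (fun ω (i : Fin (m + 1)) ↦ G (i + 1) ω) ⁻¹' B := by
    ext ω
    simp only [barrierEvent, hB, Set.mem_preimage, Set.mem_ofPred_eq, Fin.val_castSucc,
      Fin.val_last]
    refine and_congr_left fun _ ↦ ⟨fun H i ↦ H _ (by lia) (by lia), fun H i hi him ↦ ?_⟩
    have := H ⟨i - 1, by lia⟩
    simpa [Nat.sub_add_cancel hi] using this
  rw [hpre, ← Measure.map_apply_of_aemeasurable hX hBm,
    map_eq_map_prod_bridge hG hsymm hk hpsd hX]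
  have hΦ := measurable_pathOfBridge K m
  rw [Measure.map_apply hΦ hBm, Measure.prod_apply (hΦ hBm),
    ← lintegral_indicator measurableSet_Icc]
  refine lintegral_congr fun s ↦ ?_
  by_cases hs : s ∈ Set.Icc t (t + 1)
  · rw [Set.indicator_of_mem hs, orthantProb]
    congr 1
    ext x
    simp [hB, pathOfBridge, Pi.le_def, le_sub_iff_add_le, Set.mem_Icc.1 hs]
  · rw [Set.indicator_of_notMem hs]
    refine measure_mono_null (t := ∅) (fun x hx ↦ hs ?_) measure_empty
    simpa [hB, pathOfBridge] using hx.2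

end Conditioning

section Comparison

open scoped ENNReal

lemma abs_div_sub_div_le {a k x N C : ℝ} (hC : 0 < C) (hN : 2 * C ≤ N) (ha : |a - x| ≤ C)
    (hk : |k - N| ≤ C) (hx : 0 ≤ x) (hxN : x ≤ N) : |a / k - x / N| ≤ 4 * C / N := by
  rw [abs_le] at ha hk
  have hN0 : 0 < N := by linarith
  have hk0 : 0 < k := by linarith
  have h : a / k - x / N = ((a - x) * N + x * (N - k)) / (k * N) := by
    field_simp
    ring
  rw [h, abs_div, abs_of_pos (mul_pos hk0 hN0), div_le_div_iff₀ (by positivity) hN0]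
  have h1 : |(a - x) * N + x * (N - k)| ≤ 2 * C * N := by
    rw [abs_le]
    constructor <;> nlinarith
  nlinarith [mul_pos hC hN0]

lemma abs_sub_mul_div_sub_le {r a b k x y z N C : ℝ} (hC : 0 < C) (hN : 2 * C ≤ N)
    (hr : |r - z| ≤ C) (ha : |a - x| ≤ C) (hb : |b - y| ≤ C) (hk : |k - N| ≤ C)
    (hx : 0 ≤ x) (hxN : x ≤ N) (hy : 0 ≤ y) (hyN : y ≤ N) :
    |(r - a * b / k) - (z - x * y / N)| ≤ 8 * C := by
  have hN0 : 0 < N := by linarith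
  have h : (r - a * b / k) - (z - x * y / N)
      = (r - z) - (a * (b / k - y / N) + (a - x) * (y / N)) := by ring
  have h1 : |a * (b / k - y / N)| ≤ (3 / 2 * N) * (4 * C / N) := by
    rw [abs_mul]
    refine mul_le_mul ?_ (abs_div_sub_div_le hC hN hb hk hy hyN) (abs_nonneg _) (by positivity)
    rw [abs_le] at ha ⊢
    constructor <;> linarith
  have h2 : |(a - x) * (y / N)| ≤ C * 1 := by
    rw [abs_mul, abs_of_nonneg (div_nonneg hy hN0.le)]
    exact mul_le_mul ha ((div_le_one hN0).2 hyN) (by positivity) hC.le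
  have h3 : (3 / 2 * N) * (4 * C / N) = 6 * C := by
    field_simp
    norm_num
  rw [h]
  rw [abs_le] at h1 h2 hr ⊢
  constructor <;> linarith

/-- Centered Gaussian densities with nearby large variances are comparable on the scale of the
standard deviation. -/
lemma gaussianPDFReal_le_of_abs_sub_le {k₁ k₂ N C s : ℝ} (hC : 0 < C) (hN : 2 * C ≤ N)
    (h₁ : |k₁ - N| ≤ C) (h₂ : |k₂ - N| ≤ C) (hs : s ^ 2 ≤ 4 * N) :
    gaussianPDFReal 0 k₁.toNNReal s
      ≤ (1 + 4 * C / N) * Real.exp (16 * C / N) * gaussianPDFReal 0 k₂.toNNReal s := by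
  rw [abs_le] at h₁ h₂
  have hN0 : 0 < N := by linarith
  have hk₁ : N / 2 ≤ k₁ := by linarith
  have hk₂ : N / 2 ≤ k₂ := by linarith
  have hk₁0 : 0 < k₁ := by linarith
  have hk₂0 : 0 < k₂ := by linarith
  have hsqrt : √(2 * Real.pi * k₂) ≤ (1 + 4 * C / N) * √(2 * Real.pi * k₁) := by
    refine Real.sqrt_le_iff.2 ⟨by positivity, ?_⟩
    rw [mul_pow, Real.sq_sqrt (by positivity)]
    have h1 : k₂ ≤ (1 + 4 * C / N) * k₁ := by
      have : 4 * C / N * (N / 2) ≤ 4 * C / N * k₁ := by gcongr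
      have h2 : 4 * C / N * (N / 2) = 2 * C := by
        field_simp
        norm_num
      linarith
    have h2 : (1 + 4 * C / N) * 1 ≤ (1 + 4 * C / N) * (1 + 4 * C / N) := by
      gcongr
      have : 0 < 4 * C / N := by positivity
      linarith
    have h3 : k₂ ≤ (1 + 4 * C / N) ^ 2 * k₁ := by nlinarith
    nlinarith [Real.pi_pos]
  have hexp : -s ^ 2 / (2 * k₁) ≤ 16 * C / N + -s ^ 2 / (2 * k₂) := by
    have h1 : -s ^ 2 / (2 * k₁) - -s ^ 2 / (2 * k₂) = s ^ 2 / 2 * (k₁ - k₂) / (k₁ * k₂) := by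
      field_simp
      ring
    have h2 : s ^ 2 / 2 * (k₁ - k₂) / (k₁ * k₂) ≤ (4 * N) / 2 * (2 * C) / (N / 2 * (N / 2)) := by
      have h3 : k₁ - k₂ ≤ 2 * C := by linarith
      calc s ^ 2 / 2 * (k₁ - k₂) / (k₁ * k₂) ≤ s ^ 2 / 2 * (2 * C) / (k₁ * k₂) := by gcongr
        _ ≤ _ := by gcongr
    have h3 : (4 * N) / 2 * (2 * C) / (N / 2 * (N / 2)) = 16 * C / N := by
      field_simp
      norm_num
    linarith
  simp only [gaussianPDFReal, Real.coe_toNNReal _ hk₁0.le, Real.coe_toNNReal _ hk₂0.le, sub_zero]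
  have h4 : (√(2 * Real.pi * k₁))⁻¹ ≤ (1 + 4 * C / N) * (√(2 * Real.pi * k₂))⁻¹ := by
    rw [← div_eq_mul_inv, inv_eq_one_div, div_le_div_iff₀ (by positivity) (by positivity), one_mul]
    exact hsqrt
  calc (√(2 * Real.pi * k₁))⁻¹ * Real.exp (-s ^ 2 / (2 * k₁))
      ≤ ((1 + 4 * C / N) * (√(2 * Real.pi * k₂))⁻¹)
          * Real.exp (16 * C / N + -s ^ 2 / (2 * k₂)) := by gcongr
    _ = _ := by rw [Real.exp_add]; ring

lemma restrict_gaussianReal_le {k₁ k₂ N C ε : ℝ} (hC : 0 < C) (hN : 2 * C ≤ N)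
    (h₁ : |k₁ - N| ≤ C) (h₂ : |k₂ - N| ≤ C)
    (hε : (1 + 4 * C / N) * Real.exp (16 * C / N) ≤ 1 + ε) {A : Set ℝ}
    (hA : MeasurableSet A) (hs : ∀ s ∈ A, s ^ 2 ≤ 4 * N) :
    (gaussianReal 0 k₁.toNNReal).restrict A
      ≤ ENNReal.ofReal (1 + ε) • (gaussianReal 0 k₂.toNNReal).restrict A := by
  have hv₁ : k₁.toNNReal ≠ 0 := by
    rw [abs_le] at h₁
    exact (Real.toNNReal_pos.2 (by linarith)).ne'
  have hv₂ : k₂.toNNReal ≠ 0 := by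
    rw [abs_le] at h₂
    exact (Real.toNNReal_pos.2 (by linarith)).ne'
  refine Measure.le_iff.2 fun B hB ↦ ?_
  rw [Measure.smul_apply, Measure.restrict_apply hB, Measure.restrict_apply hB,
    gaussianReal_apply _ hv₁, gaussianReal_apply _ hv₂, smul_eq_mul,
    ← lintegral_const_mul _ (measurable_gaussianPDF _ _)]
  refine setLIntegral_mono' (hB.inter hA) fun s hsA ↦ ?_
  have hN0 : 0 < N := by linarith
  have hε' : 0 ≤ 1 + ε := le_trans (by positivity) hε
  rw [gaussianPDF, gaussianPDF, ← ENNReal.ofReal_mul hε']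
  refine ENNReal.ofReal_le_ofReal ?_
  refine (gaussianPDFReal_le_of_abs_sub_le hC hN h₁ h₂ (hs s hsA.2)).trans ?_
  gcongr
  exact gaussianPDFReal_nonneg _ _ _

/-- The actual covariance function of a Gaussian process may replace the prescribed one. -/
lemma exists_covariance {Ω : Type} [MeasurableSpace Ω] {P : Measure Ω} [IsProbabilityMeasure P]
    {G : ℕ → Ω → ℝ} {n : ℕ} {R : ℕ → ℕ → ℝ} (hG : IsCenteredGaussianCov P G n R) {C : ℝ}
    (hR : ∀ i j, 1 ≤ i → i ≤ n → 1 ≤ j → j ≤ n → |R i j - ((min i j : ℕ) : ℝ)| ≤ C) :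
    ∃ K : ℕ → ℕ → ℝ, IsCenteredGaussianCov P G n K ∧ (∀ i j, K i j = K j i) ∧
      (∀ (k : ℕ) (idx : Fin k → ℕ) (l : Fin k → ℝ), (∀ a, 1 ≤ idx a ∧ idx a ≤ n) →
        0 ≤ ∑ a, ∑ b, l a * l b * K (idx a) (idx b)) ∧
      ∀ i j, 1 ≤ i → i ≤ n → 1 ≤ j → j ≤ n → |K i j - ((min i j : ℕ) : ℝ)| ≤ 3 * C := by
  have hmeas : ∀ i, 1 ≤ i → i ≤ n → AEMeasurable (G i) P := fun i hi hin ↦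
    aemeasurable_of_isCenteredGaussianCov hG hi hin
  have hL2 : ∀ i, 1 ≤ i → i ≤ n → MemLp (G i) 2 P := fun i hi hin ↦ by
    have h := hG 1 (fun _ ↦ i) (fun _ ↦ 1) fun _ ↦ ⟨hi, hin⟩
    simp only [Finset.univ_unique, Finset.sum_singleton, one_mul] at h
    have h2 : MemLp id 2 (P.map (G i)) := by
      rw [show P.map (G i) = _ from h]
      exact memLp_id_gaussianReal' 2 (by simp)
    exact (memLp_map_measure_iff (by fun_prop) (hmeas i hi hin)).1 h2
  have hform : ∀ (k : ℕ) (idx : Fin k → ℕ) (l : Fin k → ℝ), (∀ a, 1 ≤ idx a ∧ idx a ≤ n) →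
      ∑ a, ∑ b, l a * l b * cov[G (idx a), G (idx b); P]
        = max (∑ a, ∑ b, l a * l b * R (idx a) (idx b)) 0 := fun k idx l hidx ↦ by
    have hm : AEMeasurable (fun ω ↦ ∑ a, l a * G (idx a) ω) P :=
      Finset.aemeasurable_fun_sum _ fun a _ ↦ (hmeas _ (hidx a).1 (hidx a).2).const_mul _
    have hl : ∀ a, MemLp (fun ω ↦ l a * G (idx a) ω) 2 P := fun a ↦
      (hL2 _ (hidx a).1 (hidx a).2).const_mul _
    have hv := variance_id_map hm
    rw [hG k idx l hidx, variance_id_gaussianReal, Real.coe_toNNReal', ← covariance_self hm,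
      covariance_fun_sum_fun_sum hl hl] at hv
    rw [hv]
    refine Finset.sum_congr rfl fun a _ ↦ Finset.sum_congr rfl fun b _ ↦ ?_
    rw [covariance_const_mul_left, covariance_const_mul_right]
    ring
  refine ⟨fun i j ↦ cov[G i, G j; P], fun k idx l hidx ↦ ?_, fun i j ↦ covariance_comm _ _,
    fun k idx l hidx ↦ ?_, fun i j hi hin hj hjn ↦ ?_⟩
  · rw [hG k idx l hidx, hform k idx l hidx]
    congr 1
    ext
    simp
  · rw [hform k idx l hidx]
    exact le_max_right _ _
  have hdiag : ∀ i, 1 ≤ i → i ≤ n → |cov[G i, G i; P] - i| ≤ C := fun i hi hin ↦ by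
    have h := hform 1 (fun _ ↦ i) (fun _ ↦ 1) fun _ ↦ ⟨hi, hin⟩
    simp only [Finset.univ_unique, Finset.sum_singleton, one_mul] at h
    have h2 := hR i i hi hin hi hin
    have h3 : (0 : ℝ) ≤ i := Nat.cast_nonneg i
    rw [h]
    simp only [min_self] at h2
    refine le_trans ?_ h2
    simpa [max_eq_left h3] using abs_max_sub_max_le_abs (R i i) i 0
  have h := hform 2 ![i, j] ![1, 1] (by simp [Fin.forall_fin_two, hi, hin, hj, hjn])
  simp only [Fin.sum_univ_two, Matrix.cons_val_zero, Matrix.cons_val_one, one_mul] at h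
  rw [covariance_comm (G j) (G i)] at h
  have hmax := abs_max_sub_max_le_abs (R i i + R i j + (R j i + R j j))
    (i + ((min i j : ℕ) : ℝ) + (((min i j : ℕ) : ℝ) + j)) 0
  rw [← h, max_eq_left (by positivity)] at hmax
  have hi' := hdiag i hi hin
  have hj' := hdiag j hj hjn
  have h1 := hR i i hi hin hi hin
  have h2 := hR i j hi hin hj hjn
  have h3 := hR j i hj hjn hi hin
  have h4 := hR j j hj hjn hj hjn
  rw [min_comm] at h3
  simp only [min_self] at h1 h4
  have h5 : |R i i + R i j + (R j i + R j j)
      - (i + ((min i j : ℕ) : ℝ) + (((min i j : ℕ) : ℝ) + j))| ≤ 4 * C := by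
    rw [abs_le] at h1 h2 h3 h4 ⊢
    constructor <;> linarith
  have h6 := hmax.trans h5
  rw [abs_le] at h6 hi' hj' ⊢
  constructor <;> linarith

/-- One-sided comparison of the barrier probabilities of two Gaussian processes whose covariances
are uniformly close to that of the Gaussian random walk. -/
lemma measure_barrierEvent_le {Ω Ω' : Type} [MeasurableSpace Ω] [MeasurableSpace Ω']
    {P : Measure Ω} [IsProbabilityMeasure P] {P' : Measure Ω'} [IsProbabilityMeasure P']
    {G : ℕ → Ω → ℝ} {G' : ℕ → Ω' → ℝ} {m : ℕ} {R R' : ℕ → ℕ → ℝ} {C : ℝ}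
    (hC : 0 < C)
    (hG : IsCenteredGaussianCov P G (m + 1) R) (hG' : IsCenteredGaussianCov P' G' (m + 1) R')
    (hR : ∀ i j, 1 ≤ i → i ≤ m + 1 → 1 ≤ j → j ≤ m + 1 →
      |R i j - ((min i j : ℕ) : ℝ)| ≤ C)
    (hR' : ∀ i j, 1 ≤ i → i ≤ m + 1 → 1 ≤ j → j ≤ m + 1 →
      |R' i j - ((min i j : ℕ) : ℝ)| ≤ C)
    (hm : 6 * C ≤ (m + 1 : ℕ)) {ε : ℝ}
    (hε : (1 + 12 * C / (m + 1 : ℕ)) * Real.exp (48 * C / (m + 1 : ℕ)) ≤ 1 + ε) {t r L : ℝ}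
    (ht : (|t| + 1) ^ 2 ≤ 4 * (m + 1 : ℕ)) (hr : 0 ≤ r) (hrL : 2 * r + 48 * C ≤ L) (h : ℕ → ℝ) :
    (P (barrierEvent G (m + 1) t h)).toReal
      ≤ (1 + ε) * (P' (barrierEvent G' (m + 1) t fun i ↦ h i + L)).toReal
        + 2 * (m * Real.exp (-r ^ 2 / (2 * (96 * C + 1)))) := by
  obtain ⟨K, hK, hsymm, hnn, hKC⟩ := exists_covariance hG hR
  obtain ⟨K', hK', hsymm', hnn', hKC'⟩ := exists_covariance hG' hR'
  set N : ℝ := ((m + 1 : ℕ) : ℝ) with hN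
  have hC3 : 0 < 3 * C := by positivity
  have hN3 : 2 * (3 * C) ≤ N := by linarith
  have hN1 : 1 ≤ N := by simp [hN]
  have hε' : (1 + 4 * (3 * C) / N) * Real.exp (16 * (3 * C) / N) ≤ 1 + ε := by
    convert hε using 4 <;> ring
  have hε0 : 0 ≤ 1 + ε := le_trans (by positivity) hε
  have hcol : ∀ {K : ℕ → ℕ → ℝ}, (∀ i j, 1 ≤ i → i ≤ m + 1 → 1 ≤ j → j ≤ m + 1 →
      |K i j - ((min i j : ℕ) : ℝ)| ≤ 3 * C) → ∀ i, 1 ≤ i → i ≤ m + 1 →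
      |K i (m + 1) - i| ≤ 3 * C := fun hKC i hi him ↦ by
    simpa [min_eq_left him] using hKC i (m + 1) hi him (by lia) le_rfl
  have hk := hcol hKC (m + 1) (by lia) le_rfl
  have hk' := hcol hKC' (m + 1) (by lia) le_rfl
  have hk0 : 0 < K (m + 1) (m + 1) := by
    rw [abs_le] at hk
    linarith
  have hk0' : 0 < K' (m + 1) (m + 1) := by
    rw [abs_le] at hk'
    linarith
  have hpsd := posSemidef_bridgeCov hsymm hk0 fun l ↦
    hnn (m + 1) (fun i ↦ i + 1) l fun i ↦ ⟨by lia, by lia⟩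
  have hpsd' := posSemidef_bridgeCov hsymm' hk0' fun l ↦
    hnn' (m + 1) (fun i ↦ i + 1) l fun i ↦ ⟨by lia, by lia⟩
  have hcast : ∀ i : Fin m, ((i + 1 : ℕ) : ℝ) ≤ N := fun i ↦ Nat.cast_le.2 (by lia)
  have hbridge : ∀ {K : ℕ → ℕ → ℝ}, (∀ i j, 1 ≤ i → i ≤ m + 1 → 1 ≤ j → j ≤ m + 1 →
      |K i j - ((min i j : ℕ) : ℝ)| ≤ 3 * C) → ∀ i j : Fin m,
      |bridgeCov K m i j
        - (((min (i + 1) (j + 1) : ℕ) : ℝ) - ((i + 1 : ℕ) : ℝ) * ((j + 1 : ℕ) : ℝ) / N)|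
        ≤ 8 * (3 * C) := fun hKC i j ↦
    abs_sub_mul_div_sub_le hC3 hN3 (hKC _ _ (by lia) (by lia) (by lia) (by lia))
      (hcol hKC _ (by lia) (by lia)) (hcol hKC _ (by lia) (by lia)) (hcol hKC _ (by lia) le_rfl)
      (Nat.cast_nonneg _) (hcast i) (Nat.cast_nonneg _) (hcast j)
  have hclose : ∀ i j, |bridgeCov K m i j - bridgeCov K' m i j| ≤ 48 * C := fun i j ↦ by
    have h1 := hbridge hKC i j
    have h2 := hbridge hKC' i j
    rw [abs_le] at h1 h2 ⊢
    constructor <;> linarith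
  have hs : ∀ s ∈ Set.Icc t (t + 1), s ^ 2 ≤ 4 * N := fun s hs ↦ by
    refine le_trans (sq_le_sq' ?_ ?_) ht
    · linarith [hs.1, neg_abs_le t]
    · linarith [hs.2, le_abs_self t]
  set E : ℝ≥0∞ := 2 * m * ENNReal.ofReal (Real.exp (-r ^ 2 / (2 * (2 * (48 * C) + 1)))) with hE
  have hpt : ∀ s ∈ Set.Icc t (t + 1),
      orthantProb (bridgeCov K m)
          (fun i ↦ h (i + 1) - K (i + 1) (m + 1) / K (m + 1) (m + 1) * s)
        ≤ orthantProb (bridgeCov K' m)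
          (fun i ↦ h (i + 1) + L - K' (i + 1) (m + 1) / K' (m + 1) (m + 1) * s) + E := by
    intro s hst
    refine (orthantProb_le_of_cov_close hpsd hpsd' (by positivity) hclose hr _).trans ?_
    rw [hE, Fintype.card_fin]
    gcongr ?_ + _
    refine orthantProb_mono _ fun i ↦ ?_
    have h1 := abs_div_sub_div_le hC3 hN3 (hcol hKC (i + 1) (by lia) (by lia)) hk
      (Nat.cast_nonneg _) (hcast i)
    have h2 := abs_div_sub_div_le hC3 hN3 (hcol hKC' (i + 1) (by lia) (by lia)) hk'
      (Nat.cast_nonneg _) (hcast i)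
    set a := K (i + 1) (m + 1) / K (m + 1) (m + 1)
    set a' := K' (i + 1) (m + 1) / K' (m + 1) (m + 1)
    have h3 : |a' - a| ≤ 24 * C / N := by
      have h4 : 24 * C / N = 4 * (3 * C) / N + 4 * (3 * C) / N := by ring
      rw [h4]
      rw [abs_le] at h1 h2 ⊢
      constructor <;> linarith
    have h5 : |s| ≤ 2 * N := abs_le_of_sq_le_sq (by nlinarith [hs s hst]) (by positivity)
    have h6 : (a' - a) * s ≤ 24 * C / N * (2 * N) := by
      refine (le_abs_self _).trans ?_
      rw [abs_mul]
      gcongr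
    have h7 : 24 * C / N * (2 * N) = 48 * C := by
      field_simp
      norm_num
    linarith
  have hmain : P (barrierEvent G (m + 1) t h)
      ≤ ENNReal.ofReal (1 + ε) * P' (barrierEvent G' (m + 1) t fun i ↦ h i + L) + E := by
    rw [measure_barrierEvent_eq_lintegral hK hsymm hk0 hpsd,
      measure_barrierEvent_eq_lintegral hK' hsymm' hk0' hpsd']
    refine (setLIntegral_mono' measurableSet_Icc hpt).trans ?_
    rw [lintegral_add_right _ measurable_const, lintegral_const,
      Measure.restrict_apply_univ]
    refine add_le_add ?_ (mul_le_of_le_one_right' prob_le_one)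
    rw [← smul_eq_mul, ← lintegral_smul_measure]
    exact lintegral_mono' (restrict_gaussianReal_le hC3 hN3 hk hk' hε' measurableSet_Icc hs) le_rfl
  have hEreal : E = ENNReal.ofReal (2 * (m * Real.exp (-r ^ 2 / (2 * (96 * C + 1))))) := by
    rw [hE, ENNReal.ofReal_mul (by norm_num), ENNReal.ofReal_mul (by positivity), mul_assoc]
    norm_num [← mul_assoc]
  rw [hEreal] at hmain
  refine (ENNReal.toReal_mono (by finiteness) hmain).trans_eq ?_
  rw [ENNReal.toReal_add (by finiteness) (by finiteness), ENNReal.toReal_mul,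
    ENNReal.toReal_ofReal hε0, ENNReal.toReal_ofReal (by positivity)]

open Filter Topology in
lemma eventually_mul_exp_le {κ ε : ℝ} (hκ : 0 < κ) (hε : 0 < ε) :
    ∀ᶠ n : ℕ in atTop, (n : ℝ) * Real.exp (-(κ * (Real.log n ^ ((3 : ℝ) / 4)) ^ 2))
      ≤ Real.exp (-(Real.log n ^ ((3 : ℝ) / 2 - ε))) := by
  have hlog : Tendsto (fun n : ℕ ↦ Real.log n) atTop atTop :=
    Real.tendsto_log_atTop.comp tendsto_natCast_atTop_atTop
  have h1 := hlog.eventually ((tendsto_rpow_neg_atTop hε).eventually_le_const (half_pos hκ))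
  have h2 := hlog.eventually ((tendsto_rpow_neg_atTop (y := 1 / 2) (by norm_num)).eventually_le_const
    (half_pos hκ))
  filter_upwards [h1, h2, hlog.eventually_gt_atTop 0, eventually_gt_atTop 0] with n h1 h2 hx hn
  have hn' : (0 : ℝ) < n := Nat.cast_pos.2 hn
  set x := Real.log n with hxdef
  have h3 : (x ^ ((3 : ℝ) / 4)) ^ 2 = x ^ ((3 : ℝ) / 2) := by
    rw [← Real.rpow_natCast, ← Real.rpow_mul hx.le]
    norm_num
  have h4 : x = x ^ ((3 : ℝ) / 2) * x ^ (-(1 / 2) : ℝ) := by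
    rw [← Real.rpow_add hx]
    norm_num
  have h5 : x ^ ((3 : ℝ) / 2 - ε) = x ^ ((3 : ℝ) / 2) * x ^ (-ε) := by
    rw [← Real.rpow_add hx, sub_eq_add_neg]
  have h6 : 0 ≤ x ^ ((3 : ℝ) / 2) := by positivity
  rw [h3, ← Real.exp_log hn', ← Real.exp_add, ← hxdef, Real.exp_le_exp]
  have h7 : x ≤ x ^ ((3 : ℝ) / 2) * (κ / 2) := h4.le.trans (by gcongr)
  have h8 : x ^ ((3 : ℝ) / 2 - ε) ≤ x ^ ((3 : ℝ) / 2) * (κ / 2) := h5.le.trans (by gcongr)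
  linarith

open Filter Topology in
lemma eventually_one_add_mul_exp_le (a b : ℝ) {ε : ℝ} (hε : 0 < ε) :
    ∀ᶠ n : ℕ in atTop, (1 + a / n) * Real.exp (b / n) ≤ 1 + ε := by
  have h : Tendsto (fun n : ℕ ↦ (1 + a / n) * Real.exp (b / n)) atTop
      (𝓝 ((1 + 0) * Real.exp 0)) :=
    ((tendsto_const_div_atTop_nhds_zero_nat a).const_add 1).mul
      ((Real.continuous_exp.tendsto 0).comp (tendsto_const_div_atTop_nhds_zero_nat b))
  refine h.eventually_le_const ?_
  simpa using hε

lemma sq_abs_add_one_le {n : ℕ} (hn : 1 ≤ n) {t : ℝ} (ht : |t| < (n : ℝ) ^ ((1 : ℝ) / 4)) :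
    (|t| + 1) ^ 2 ≤ 4 * (n : ℝ) := by
  have hn' : (1 : ℝ) ≤ n := Nat.one_le_cast.2 hn
  have h1 : (1 : ℝ) ≤ (n : ℝ) ^ ((1 : ℝ) / 4) := Real.one_le_rpow hn' (by norm_num)
  have h2 : ((n : ℝ) ^ ((1 : ℝ) / 4)) ^ 2 ≤ n := by
    rw [← Real.rpow_natCast, ← Real.rpow_mul (by positivity)]
    exact Real.rpow_le_self_of_one_le hn' (by norm_num)
  nlinarith [abs_nonneg t]

end Comparison

/-- Barrier probability comparison between a centered Gaussian process whose covariance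
is within `C₀` of `min(i,j)` and the Gaussian random walk `Y` (covariance `min(i,j)`):
`(1−ε) p_{B,Y}(n,t,h−(log n)^{3/4}) − C₁ e^{−(log n)^{3/2−ε}} ≤ p_{B,G}(n,t,h)
  ≤ (1+ε) p_{B,Y}(n,t,h+(log n)^{3/4}) + C₁ e^{−(log n)^{3/2−ε}}`. -/
theorem stmt_18 (C₀ ε : ℝ) (hC₀ : 0 < C₀) (hε : 0 < ε) :
    ∃ (C₁ : ℝ) (n₁ : ℕ), ∀ n : ℕ, n₁ ≤ n →
      ∀ (Ω : Type) (_ : MeasurableSpace Ω) (P : Measure Ω), IsProbabilityMeasure P →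
      ∀ (G : ℕ → Ω → ℝ) (Rcov : ℕ → ℕ → ℝ),
        IsCenteredGaussianCov P G n Rcov →
        (∀ i j, 1 ≤ i → i ≤ n → 1 ≤ j → j ≤ n →
          |Rcov i j - ((min i j : ℕ) : ℝ)| ≤ C₀) →
      ∀ (Ω' : Type) (_ : MeasurableSpace Ω') (P' : Measure Ω'), IsProbabilityMeasure P' →
      ∀ Y : ℕ → Ω' → ℝ,
        IsCenteredGaussianCov P' Y n (fun i j => ((min i j : ℕ) : ℝ)) →
      ∀ (h : ℕ → ℝ) (t : ℝ), |t| < (n : ℝ) ^ ((1 : ℝ) / 4) →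
        (1 - ε) * (P' (barrierEvent Y n t
              (fun i => h i - Real.log n ^ ((3 : ℝ) / 4)))).toReal
            - C₁ * Real.exp (-(Real.log n ^ ((3 : ℝ) / 2 - ε)))
          ≤ (P (barrierEvent G n t h)).toReal ∧
        (P (barrierEvent G n t h)).toReal
          ≤ (1 + ε) * (P' (barrierEvent Y n t
              (fun i => h i + Real.log n ^ ((3 : ℝ) / 4)))).toReal
            + C₁ * Real.exp (-(Real.log n ^ ((3 : ℝ) / 2 - ε))) := by
  have hκ : 0 < (18 * (96 * C₀ + 1))⁻¹ := by positivity
  have hshift := ((tendsto_rpow_atTop (by norm_num : (0 : ℝ) < 3 / 4)).comp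
    (Real.tendsto_log_atTop.comp tendsto_natCast_atTop_atTop)).eventually_ge_atTop (144 * C₀)
  obtain ⟨n₁, hn₁⟩ := Filter.eventually_atTop.1
    ((eventually_mul_exp_le hκ hε).and ((eventually_one_add_mul_exp_le (12 * C₀) (48 * C₀) hε).and
      (hshift.and ((tendsto_natCast_atTop_atTop.eventually_ge_atTop (6 * C₀)).and
        (Filter.eventually_ge_atTop 1)))))
  refine ⟨2, n₁, fun n hn Ω _ P _ G R hG hR Ω' _ P' _ Y hY h t ht ↦ ?_⟩
  obtain ⟨herr, hdens, hL, hn6, hn1⟩ := hn₁ n hn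
  obtain ⟨m, rfl⟩ := Nat.exists_eq_add_of_le' hn1
  have hYcov : ∀ i j : ℕ, 1 ≤ i → i ≤ m + 1 → 1 ≤ j → j ≤ m + 1 →
      |((min i j : ℕ) : ℝ) - ((min i j : ℕ) : ℝ)| ≤ C₀ := by simp [hC₀.le]
  have ht' := sq_abs_add_one_le hn1 ht
  simp only [Function.comp] at hL
  set L := Real.log ((m + 1 : ℕ) : ℝ) ^ ((3 : ℝ) / 4)
  set e := Real.exp (-(Real.log ((m + 1 : ℕ) : ℝ) ^ ((3 : ℝ) / 2 - ε)))
  have hr : 0 ≤ L / 3 := by linarith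
  have hrL : 2 * (L / 3) + 48 * C₀ ≤ L := by linarith
  have herr' : 2 * (m * Real.exp (-(L / 3) ^ 2 / (2 * (96 * C₀ + 1)))) ≤ 2 * e := by
    have h1 : -(L / 3) ^ 2 / (2 * (96 * C₀ + 1)) = -((18 * (96 * C₀ + 1))⁻¹ * L ^ 2) := by
      field_simp
      ring
    rw [h1]
    refine mul_le_mul_of_nonneg_left (le_trans ?_ herr) (by norm_num)
    gcongr
    simp
  have he : 0 < e := Real.exp_pos _
  constructor
  · have hlow := measure_barrierEvent_le hC₀ hY hG hYcov hR hn6 hdens ht' hr hrL fun i ↦ h i - L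
    simp only [sub_add_cancel] at hlow
    set p := (P (barrierEvent G (m + 1) t h)).toReal
    set q := (P' (barrierEvent Y (m + 1) t fun i ↦ h i - L)).toReal
    have hp : 0 ≤ p := ENNReal.toReal_nonneg
    have hq : 0 ≤ q := ENNReal.toReal_nonneg
    rcases le_total 1 ε with hε1 | hε1
    · nlinarith [mul_nonneg (sub_nonneg.2 hε1) hq]
    · nlinarith [mul_le_mul_of_nonneg_left (hlow.trans (add_le_add_right herr' _))
        (sub_nonneg.2 hε1), mul_nonneg hε.le he.le, mul_nonneg (mul_nonneg hε.le hε.le) hp]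
  · have hup := measure_barrierEvent_le hC₀ hG hY hR hYcov hn6 hdens ht' hr hrL h
    linarith

end
end

section
/- Let C > 0. There exists C_1 = C_1(C) such that for all sufficiently large n the following holds: for every centered Gaussian process (G_i)_{i=1}^n with |E[G_i G_j] − min(i,j)| ≤ C for all i, j ≤ n, every real sequence h = (h_i) with |h_i| ≤ C·log n for all i ≤ n, and every real t with t < h_{n−1} and |t| ≤ n^{1/4}, one has p_{B,G}(n, t, h) ≤ C_1·(|t| + log n)·log n / n^{3/2}. -/
open MeasureTheory ProbabilityTheory

noncomputable section

section

open scoped NNReal ENNReal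

theorem integrable_id_gaussianReal (μ : ℝ) (v : ℝ≥0) :
    Integrable (fun x : ℝ => x) (gaussianReal μ v) :=
  (memLp_id_gaussianReal (μ := μ) (v := v) 1).integrable (by norm_num)

theorem integral_abs_gaussianReal_le (v : ℝ≥0) :
    ∫ x, |x| ∂gaussianReal 0 v ≤ √(v : ℝ) := by
  have h2 : MemLp (fun x : ℝ => |x|) 2 (gaussianReal 0 v) :=
    (memLp_id_gaussianReal (μ := 0) (v := v) 2).abs
  have hv := variance_nonneg (fun x : ℝ => |x|) (gaussianReal 0 v)
  rw [variance_eq_sub h2] at hv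
  have h3 : ∫ x, x ^ 2 ∂gaussianReal 0 v = v := by
    have := variance_fun_id_gaussianReal (μ := 0) (v := v)
    rw [variance_eq_sub (X := fun x : ℝ => x) (memLp_id_gaussianReal (μ := 0) (v := v) 2)] at this
    simpa using this
  simp only [Pi.pow_apply, sq_abs] at hv
  rw [h3] at hv
  exact Real.le_sqrt_of_sq_le (by linarith)

theorem setIntegral_Ioi_zero_gaussianReal (v : ℝ≥0) :
    ∫ x in Set.Ioi 0, x ∂gaussianReal 0 v = (∫ x, |x| ∂gaussianReal 0 v) / 2 := by
  have hi := integrable_id_gaussianReal 0 v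
  have h1 : ∫ x, x ∂gaussianReal 0 v = 0 := integral_id_gaussianReal
  have h2 : ∀ x : ℝ, (Set.Ioi (0:ℝ)).indicator (fun x => x) x = (|x| + x) / 2 := by
    intro x
    by_cases hx : 0 < x
    · rw [Set.indicator_of_mem (by exact hx), abs_of_pos hx]; ring
    · rw [Set.indicator_of_notMem (by simpa using hx), abs_of_nonpos (not_lt.1 hx)]; ring
  rw [← integral_indicator measurableSet_Ioi]
  simp_rw [h2]
  rw [integral_div, integral_add hi.abs hi, h1, add_zero]

theorem measureReal_Ioi_zero_gaussianReal {v : ℝ≥0} (hv : v ≠ 0) :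
    (gaussianReal 0 v).real (Set.Ioi 0) = 1 / 2 := by
  have : NullSingletonClass (gaussianReal 0 v) := nullSingletonClass_gaussianReal hv
  have h1 : (gaussianReal 0 v).real (Set.Iio 0) = (gaussianReal 0 v).real (Set.Ioi 0) := by
    have := gaussianReal_map_neg (μ := 0) (v := v)
    rw [neg_zero] at this
    conv_lhs => rw [← this]
    rw [map_measureReal_apply measurable_neg measurableSet_Iio]
    simp
  have h2 := measureReal_compl (μ := gaussianReal 0 v) (measurableSet_Ioi (a := (0:ℝ)))
  have h3 : (gaussianReal 0 v).real (Set.Iic 0) = (gaussianReal 0 v).real (Set.Iio 0) :=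
    measureReal_congr Iio_ae_eq_Iic.symm
  rw [Set.compl_Ioi, h3, h1] at h2
  simp only [probReal_univ] at h2
  linarith

/-- The mean overshoot of a centred Gaussian over a nonnegative level is at most its standard
deviation. -/
theorem setIntegral_overshoot_gaussianReal_nonpos {v : ℝ≥0} (hv : v ≠ 0) {y r : ℝ} (hy : 0 ≤ y)
    (hr : √(v : ℝ) ≤ r) : ∫ x in Set.Ioi y, (x - (y + r)) ∂gaussianReal 0 v ≤ 0 := by
  have hvp : (0 : ℝ) < v := by positivity
  set p := gaussianPDFReal 0 v with hp
  have conv : ∀ (s : Set ℝ) (f : ℝ → ℝ), MeasurableSet s →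
      ∫ x in s, f x ∂gaussianReal 0 v = ∫ x in s, p x * f x := by
    intro s f hs
    rw [← integral_indicator hs, integral_gaussianReal_eq_integral_smul hv,
      ← integral_indicator hs]
    congr 1 with x
    by_cases hx : x ∈ s <;> simp [hx, hp]
  have hint : ∀ a : ℝ, Integrable (fun x => p x * (x - a)) := by
    intro a
    have h := (integrable_id_gaussianReal 0 v).sub (integrable_const a)
    rw [gaussianReal_of_var_ne_zero 0 hv] at h
    have := (integrable_withDensity_iff_integrable_smul₀' (measurable_gaussianPDF 0 v).aemeasurable
      (by simp [gaussianPDF])).1 h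
    simpa [toReal_gaussianPDF] using this
  have hshift : ∀ z, p (z + y) = p z * Real.exp (-(2 * z * y + y ^ 2) / (2 * v)) := by
    intro z
    simp only [hp, gaussianPDFReal, sub_zero, mul_assoc, ← Real.exp_add]
    congr 2
    field_simp
    ring
  have h0 : ∫ z in Set.Ioi 0, p z * (z - r) ≤ 0 := by
    rw [← conv _ (fun z => z - r) measurableSet_Ioi,
      integral_sub (integrable_id_gaussianReal 0 v).integrableOn (integrable_const _).integrableOn,
      setIntegral_Ioi_zero_gaussianReal]
    simp only [integral_const, measureReal_restrict_apply_univ, smul_eq_mul]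
    rw [measureReal_Ioi_zero_gaussianReal hv]
    linarith [integral_abs_gaussianReal_le v]
  rw [conv _ _ measurableSet_Ioi]
  have htrans : ∫ x in Set.Ioi y, p x * (x - (y + r)) =
      ∫ z in Set.Ioi 0, p (z + y) * (z - r) := by
    rw [← integral_indicator measurableSet_Ioi, ← integral_indicator measurableSet_Ioi,
      ← integral_add_right_eq_self _ y]
    congr 1 with z
    simp only [Set.indicator, Set.mem_Ioi]
    have : y < z + y ↔ 0 < z := by constructor <;> intro h <;> linarith
    simp only [this]
    split_ifs <;> ring_nf
  rw [htrans]
  set e := Real.exp (-(2 * r * y + y ^ 2) / (2 * v)) with he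
  calc ∫ z in Set.Ioi 0, p (z + y) * (z - r)
      ≤ ∫ z in Set.Ioi 0, e * (p z * (z - r)) := by
        apply setIntegral_mono_on _ ((hint r).const_mul e).integrableOn measurableSet_Ioi
        · intro z _
          rw [hshift]
          have hpz : 0 ≤ p z := gaussianPDFReal_nonneg _ _ _
          rcases le_total r z with h | h
          · have : Real.exp (-(2 * z * y + y ^ 2) / (2 * v)) ≤ e := by
              apply Real.exp_le_exp.2
              gcongr
            nlinarith [mul_nonneg hpz (sub_nonneg.2 h)]
          · have : e ≤ Real.exp (-(2 * z * y + y ^ 2) / (2 * v)) := by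
              apply Real.exp_le_exp.2
              gcongr
            nlinarith [mul_nonneg hpz (sub_nonneg.2 h)]
        · have := ((hint (y + r)).comp_add_right y).integrableOn (s := Set.Ioi 0)
          refine this.congr (Filter.Eventually.of_forall fun z => ?_)
          simp only
          ring
    _ = e * ∫ z in Set.Ioi 0, p z * (z - r) := integral_const_mul _ _
    _ ≤ 0 := mul_nonpos_of_nonneg_of_nonpos (Real.exp_pos _).le h0

theorem setIntegral_Iic_gaussianReal_le {v : ℝ≥0} (hv : v ≠ 0) {y r : ℝ} (hy : 0 ≤ y)
    (hr : √(v : ℝ) ≤ r) : ∫ x in Set.Iic y, (y + r - x) ∂gaussianReal 0 v ≤ y + r := by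
  have hi := integrable_id_gaussianReal 0 v
  have hi' : Integrable (fun x => y + r - x) (gaussianReal 0 v) := (integrable_const _).sub hi
  have h1 := integral_add_compl (measurableSet_Iic (a := y)) hi'
  have h2 : ∫ x, (y + r - x) ∂gaussianReal 0 v = y + r := by
    rw [integral_sub (integrable_const _) hi, integral_id_gaussianReal]; simp
  have h3 := setIntegral_overshoot_gaussianReal_nonpos hv hy hr
  have h4 : ∫ x in Set.Ioi y, (y + r - x) ∂gaussianReal 0 v =
      -∫ x in Set.Ioi y, (x - (y + r)) ∂gaussianReal 0 v := by
    rw [← integral_neg]; congr 1 with x; ring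
  rw [Set.compl_Iic, h4, h2] at h1
  linarith

theorem gaussianReal_Iic_neg_sqrt (v : ℝ≥0) :
    gaussianReal 0 1 (Set.Iic (-1)) ≤ gaussianReal 0 v (Set.Iic (-√(v : ℝ))) := by
  have h := gaussianReal_map_const_mul (μ := 0) (v := 1) (√(v : ℝ))
  have h' : gaussianReal 0 v = (gaussianReal 0 1).map (√(v : ℝ) * ·) := by
    rw [h]; congr 1
    · simp
    · ext; simp
  rw [h', Measure.map_apply (by fun_prop) measurableSet_Iic]
  apply measure_mono
  intro x hx
  simp only [Set.mem_Iic, Set.mem_preimage] at *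
  nlinarith [Real.sqrt_nonneg (v : ℝ)]

theorem gaussianReal_Iic_pos (a : ℝ) : 0 < (gaussianReal 0 1).real (Set.Iic a) := by
  rw [measureReal_def, ENNReal.toReal_pos_iff]
  refine ⟨pos_iff_ne_zero.2 fun h => ?_, measure_lt_top _ _⟩
  have := gaussianReal_absolutelyContinuous' 0 one_ne_zero h
  simp at this

/-- If `ν`, normalised, lies stochastically below `γ_T`, this persists after adding an independent
Gaussian step and killing above `b`. -/
theorem mul_gaussianReal_Iic_le_conv_restrict {ν : Measure ℝ} [IsFiniteMeasure ν] {T : ℝ≥0}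
    (hdom : ∀ x, ν Set.univ * gaussianReal 0 T (Set.Iic x) ≤ ν (Set.Iic x)) (v : ℝ≥0) (b x : ℝ) :
    ((ν ∗ gaussianReal 0 v).restrict (Set.Iic b)) Set.univ * gaussianReal 0 (T + v) (Set.Iic x)
      ≤ ((ν ∗ gaussianReal 0 v).restrict (Set.Iic b)) (Set.Iic x) := by
  set γ := gaussianReal 0 v
  have hconv : ∀ (μ : Measure ℝ) [IsFiniteMeasure μ] (x : ℝ),
      (μ ∗ γ) (Set.Iic x) = ∫⁻ z, μ (Set.Iic (x - z)) ∂γ := by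
    intro μ _ x
    rw [Measure.conv_comm, ← lintegral_indicator_one measurableSet_Iic,
      Measure.lintegral_conv (measurable_one.indicator measurableSet_Iic)]
    congr 1 with z
    rw [← lintegral_indicator_one measurableSet_Iic]
    congr 1 with y
    simp only [Set.indicator, Set.mem_Iic, le_sub_iff_add_le', Pi.one_apply]
  have hdom' : ∀ x, ν Set.univ * gaussianReal 0 (T + v) (Set.Iic x) ≤ (ν ∗ γ) (Set.Iic x) := by
    intro x
    have : gaussianReal 0 (T + v) = gaussianReal 0 T ∗ γ := by
      rw [gaussianReal_conv_gaussianReal, add_zero]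
    rw [this, hconv, hconv, ← lintegral_const_mul' _ _ (measure_ne_top _ _)]
    exact lintegral_mono fun z => hdom _
  have htot : (ν ∗ γ) Set.univ = ν Set.univ := by
    rw [← lintegral_one, Measure.lintegral_conv measurable_const]
    simp
  rw [Measure.restrict_apply_univ, Measure.restrict_apply measurableSet_Iic, Set.Iic_inter_Iic]
  rcases le_total x b with h | h
  · rw [min_eq_left h]
    refine le_trans (mul_le_mul' ?_ le_rfl) (hdom' x)
    rw [← htot]
    exact measure_mono (Set.subset_univ _)
  · rw [min_eq_right h]
    exact mul_le_of_le_one_right' prob_le_one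

theorem integrable_id_conv {ν γ : Measure ℝ} [IsFiniteMeasure ν] [IsProbabilityMeasure γ]
    (hν : Integrable (fun x : ℝ => x) ν) (hγ : Integrable (fun x : ℝ => x) γ) :
    Integrable (fun x : ℝ => x) (ν ∗ γ) := by
  rw [Measure.conv, integrable_map_measure (by fun_prop) (by fun_prop)]
  exact hν.comp_fst γ |>.add (hγ.comp_snd ν)

/-- The mean distance to a level slightly above the barrier does not increase when a Gaussian step
is made and the walk is killed above the barrier. -/
theorem setIntegral_conv_gaussianReal_le {ν : Measure ℝ} [IsFiniteMeasure ν]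
    (hν : Integrable (fun x : ℝ => x) ν) {v : ℝ≥0} (hv : v ≠ 0) {b B : ℝ}
    (hsupp : ∀ᵐ x ∂ν, x ≤ b) (hB : b + √(v : ℝ) ≤ B) :
    ∫ x in Set.Iic b, (B - x) ∂(ν ∗ gaussianReal 0 v) ≤ ∫ x, (B - x) ∂ν := by
  set γ := gaussianReal 0 v
  have hγ : Integrable (fun x : ℝ => x) γ := integrable_id_gaussianReal 0 v
  have hi : Integrable (fun x => B - x) (ν ∗ γ) :=
    (integrable_const _).sub (integrable_id_conv hν hγ)
  have hi' := hi.indicator (measurableSet_Iic (a := b))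
  rw [← integral_indicator measurableSet_Iic, integral_conv hi']
  have hip : Integrable (fun p : ℝ × ℝ => (Set.Iic b).indicator (fun x => B - x) (p.1 + p.2))
      (ν.prod γ) := by
    rw [Measure.conv, integrable_map_measure (by fun_prop (disch := measurability))
      (by fun_prop)] at hi'
    exact hi'
  refine integral_mono_ae hip.integral_prod_left ((integrable_const _).sub hν) ?_
  filter_upwards [hsupp] with x hx
  have h := setIntegral_Iic_gaussianReal_le hv (sub_nonneg.2 hx) (r := B - b) (by linarith)
  rw [← integral_indicator measurableSet_Iic] at h
  calc _ = ∫ z, (Set.Iic (b - x)).indicator (fun z => b - x + (B - b) - z) z ∂γ := by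
        congr 1 with z
        simp only [Set.indicator, Set.mem_Iic, le_sub_iff_add_le']
        split_ifs <;> ring
    _ ≤ b - x + (B - b) := h
    _ = B - x := by ring

theorem sqrt_mul_measureReal_le_integral {ν : Measure ℝ} [IsFiniteMeasure ν]
    (hν : Integrable (fun x : ℝ => x) ν) {T : ℝ≥0} {B : ℝ} (hB : 0 ≤ B)
    (hdom : ∀ x, ν Set.univ * gaussianReal 0 T (Set.Iic x) ≤ ν (Set.Iic x))
    (hsupp : ∀ᵐ x ∂ν, x ≤ B) :
    (gaussianReal 0 1).real (Set.Iic (-1)) * √(T : ℝ) * ν.real Set.univ ≤ ∫ x, (B - x) ∂ν := by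
  have hi : Integrable (fun x => B - x) ν := (integrable_const _).sub hν
  have h1 : ν.real Set.univ * (gaussianReal 0 1).real (Set.Iic (-1)) ≤
      ν.real (Set.Iic (-√(T : ℝ))) := by
    simp only [measureReal_def]
    rw [← ENNReal.toReal_mul]
    refine ENNReal.toReal_mono (measure_ne_top _ _) (le_trans ?_ (hdom _))
    exact mul_le_mul' le_rfl (gaussianReal_Iic_neg_sqrt T)
  have h2 : √(T : ℝ) * ν.real (Set.Iic (-√(T : ℝ))) ≤ ∫ x, (B - x) ∂ν := by
    calc √(T : ℝ) * ν.real (Set.Iic (-√(T : ℝ)))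
        = ∫ x in Set.Iic (-√(T : ℝ)), √(T : ℝ) ∂ν := by simp [mul_comm]
      _ ≤ ∫ x in Set.Iic (-√(T : ℝ)), (B - x) ∂ν := by
          refine setIntegral_mono_on (integrable_const _).integrableOn hi.integrableOn
            measurableSet_Iic fun x hx => ?_
          simp only [Set.mem_Iic] at hx
          linarith
      _ ≤ ∫ x, (B - x) ∂ν := by
          refine setIntegral_le_integral hi ?_
          filter_upwards [hsupp] with x hx
          simpa using hx
  calc _ = √(T : ℝ) * (ν.real Set.univ * (gaussianReal 0 1).real (Set.Iic (-1))) := by ring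
    _ ≤ _ := le_trans (by gcongr) h2

/-- Persistence estimate for a Gaussian walk killed above a slowly growing barrier, phrased through
the sub-probability laws `ν k` of the walk at time `k` on the event of survival. -/
theorem exists_persistence_bound (c m : ℝ) (hc : 0 < c) (hm : 0 ≤ m) :
    ∃ A : ℝ, 0 < A ∧ ∀ (K : ℕ) (a : ℝ) (v : ℕ → ℝ≥0) (b : ℕ → ℝ) (ν : ℕ → Measure ℝ),
      1 ≤ K → 0 ≤ a →
      (∀ k, (v k : ℝ) = ((k : ℝ) + 1) ^ 9 - (k : ℝ) ^ 9 + c * ((k : ℝ) + 1) ^ 2) →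
      (∀ k, b k = a + m * (k : ℝ) ^ 3) →
      ν 0 = Measure.dirac 0 →
      (∀ k < K, ν (k + 1) = (ν k ∗ gaussianReal 0 (v k)).restrict (Set.Iic (b (k + 1)))) →
      (ν K).real Set.univ ≤ A * (a + 1) / √((K : ℝ) ^ 9) := by
  set κ := (gaussianReal 0 1).real (Set.Iic (-1)) with hκ
  have hκ0 : 0 < κ := gaussianReal_Iic_pos _
  set R := m + √(9 + c) with hR
  have hR0 : 0 < R := by positivity
  have hsum : Summable (fun k : ℕ => 1 / (k : ℝ) ^ (3 / 2 : ℝ)) :=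
    Real.summable_one_div_nat_rpow.2 (by norm_num)
  set S₀ := ∑' k : ℕ, 1 / (k : ℝ) ^ (3 / 2 : ℝ) 
  set E := Real.exp (15 * R / κ * S₀) with hE
  refine ⟨(1 + R) * E / κ, by positivity, ?_⟩
  intro K a v b ν hK ha hv hb hν0 hνs
  have hv0 : ∀ k, v k ≠ 0 := by
    intro k hk
    have := hv k
    rw [hk] at this
    have h1 : (k : ℝ) ^ 9 ≤ ((k : ℝ) + 1) ^ 9 := by gcongr; linarith
    have h2 : 0 < c * ((k : ℝ) + 1) ^ 2 := by positivity
    simp at this; linarith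
  have hfin : ∀ k ≤ K, IsFiniteMeasure (ν k) := by
    intro k
    induction k with
    | zero => intro _; rw [hν0]; infer_instance
    | succ k ih =>
      intro hk
      have := ih (by omega)
      rw [hνs k (by omega)]; infer_instance
  have hint : ∀ k ≤ K, Integrable (fun x : ℝ => x) (ν k) := by
    intro k
    induction k with
    | zero => intro _; rw [hν0]; exact integrable_dirac (by simp)
    | succ k ih =>
      intro hk
      have := hfin k (by omega)
      rw [hνs k (by omega)]
      exact (integrable_id_conv (ih (by omega)) (integrable_id_gaussianReal _ _)).restrict
  have hmono : ∀ k, b k ≤ b (k + 1) := by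
    intro k; rw [hb, hb]; push_cast; gcongr; linarith
  have hsupp : ∀ k ≤ K, ∀ᵐ x ∂ν k, x ≤ b k := by
    intro k hk
    cases k with
    | zero => rw [hν0, ae_dirac_eq]; simp [hb, ha]
    | succ k =>
      rw [hνs k (by omega)]
      exact ae_restrict_mem measurableSet_Iic
  set T : ℕ → ℝ≥0 := fun k => ∑ j ∈ Finset.range k, v j with hT
  have hdom : ∀ k ≤ K, ∀ x, ν k Set.univ * gaussianReal 0 (T k) (Set.Iic x) ≤ ν k (Set.Iic x) := by
    intro k
    induction k with
    | zero => intro _ x; simp [hν0, hT, gaussianReal_zero_var]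
    | succ k ih =>
      intro hk x
      have := hfin k (by omega)
      rw [hνs k (by omega)]
      have hTs : T (k + 1) = T k + v k := by simp [hT, Finset.sum_range_succ]
      rw [hTs]
      exact mul_gaussianReal_Iic_le_conv_restrict (ih (by omega)) _ _ _
  have hTk : ∀ k : ℕ, (k : ℝ) ^ 9 ≤ (T k : ℝ) := by
    intro k
    induction k with
    | zero => simp
    | succ k ih =>
      have hTs : (T (k + 1) : ℝ) = T k + v k := by simp [hT, Finset.sum_range_succ]
      rw [hTs, hv]; push_cast
      have : 0 ≤ c * ((k : ℝ) + 1) ^ 2 := by positivity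
      linarith
  set B : ℕ → ℝ := fun k => a + R * (k : ℝ) ^ 4 with hBdef
  have hbB : ∀ k, b (k + 1) + √(v k : ℝ) ≤ B (k + 1) := by
    intro k
    have hk : (0 : ℝ) ≤ k := k.cast_nonneg
    have h1 : √(v k : ℝ) ≤ √(9 + c) * ((k : ℝ) + 1) ^ 4 := by
      rw [hv]
      refine Real.sqrt_le_iff.2 ⟨by positivity, ?_⟩
      rw [mul_pow, Real.sq_sqrt (by positivity)]
      have h2 : ((k : ℝ) + 1) ^ 9 - (k : ℝ) ^ 9 ≤ 9 * ((k : ℝ) + 1) ^ 8 := by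
        have : 0 ≤ (k : ℝ) ^ 9 + 9 * ((k : ℝ) + 1) ^ 8 - ((k : ℝ) + 1) ^ 9 := by
          ring_nf; positivity
        linarith
      have h3 : ((k : ℝ) + 1) ^ 2 ≤ ((k : ℝ) + 1) ^ 8 :=
        pow_le_pow_right₀ (by linarith) (by norm_num)
      nlinarith
    have h4 : ((k : ℝ) + 1) ^ 3 ≤ ((k : ℝ) + 1) ^ 4 :=
      pow_le_pow_right₀ (by linarith) (by norm_num)
    simp only [hb, hBdef, hR]; push_cast
    nlinarith
  have hbB' : ∀ k ≤ K, ∀ᵐ x ∂ν k, x ≤ B k := by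
    intro k hk
    filter_upwards [hsupp k hk] with x hx
    refine hx.trans ?_
    cases k with
    | zero => simp [hb, hBdef]
    | succ k => linarith [hbB k, Real.sqrt_nonneg (v k : ℝ)]
  set D : ℕ → ℝ := fun k => ∫ x, (B k - x) ∂ν k with hD
  set q : ℕ → ℝ := fun k => (ν k).real Set.univ with hq
  have hstep : ∀ k < K, D (k + 1) ≤ D k + (B (k + 1) - B k) * q k := by
    intro k hk
    have := hfin k hk.le
    have hs : ∀ᵐ x ∂ν k, x ≤ b (k + 1) := by
      filter_upwards [hsupp k hk.le] with x hx using hx.trans (hmono k)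
    have h := setIntegral_conv_gaussianReal_le (hint k hk.le) (hv0 k) hs (hbB k)
    rw [← hνs k hk] at h
    refine h.trans_eq ?_
    simp only [hD]
    rw [integral_sub (integrable_const _) (hint k hk.le),
      integral_sub (integrable_const _) (hint k hk.le)]
    simp [hq]; ring
  have hlow : ∀ k ≤ K, κ * √((k : ℝ) ^ 9) * q k ≤ D k := by
    intro k hk
    have := hfin k hk
    refine le_trans ?_ (sqrt_mul_measureReal_le_integral (hint k hk)
      (by simp only [hBdef]; positivity)
      (hdom k hk) (hbB' k hk))
    gcongr
    exact hTk k
  have hD0 : ∀ k ≤ K, 0 ≤ D k := fun k hk => le_trans (by positivity) (hlow k hk)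
  have hgrow : ∀ k, 1 ≤ k → k < K →
      D (k + 1) ≤ D k * Real.exp (15 * R / κ * (1 / (k : ℝ) ^ (3 / 2 : ℝ))) := by
    intro k hk1 hk
    have hk1' : (1 : ℝ) ≤ k := by exact_mod_cast hk1
    have hk0 : (0 : ℝ) < k := by linarith
    have hBk : B (k + 1) - B k ≤ 15 * R * (k : ℝ) ^ 3 := by
      simp only [hBdef]; push_cast
      have : ((k : ℝ) + 1) ^ 4 - (k : ℝ) ^ 4 ≤ 15 * (k : ℝ) ^ 3 := by
        have h2 : (k : ℝ) ^ 2 ≤ (k : ℝ) ^ 3 := pow_le_pow_right₀ hk1' (by norm_num)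
        have h3 : (k : ℝ) ≤ (k : ℝ) ^ 3 := le_self_pow₀ hk1' (by norm_num)
        nlinarith
      nlinarith
    have hpow : √((k : ℝ) ^ 9) = (k : ℝ) ^ 3 * (k : ℝ) ^ (3 / 2 : ℝ) := by
      rw [Real.sqrt_eq_rpow, ← Real.rpow_natCast, ← Real.rpow_natCast, ← Real.rpow_mul hk0.le,
        ← Real.rpow_add hk0]
      norm_num
    have hr : 0 < (k : ℝ) ^ (3 / 2 : ℝ) := by positivity
    have hqk : (k : ℝ) ^ 3 * q k ≤ D k * (1 / κ * (1 / (k : ℝ) ^ (3 / 2 : ℝ))) := by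
      have := hlow k hk.le
      rw [hpow] at this
      rw [← mul_div_mul_comm, one_mul, mul_one_div, le_div_iff₀ (by positivity)]
      linarith
    have hq0 : 0 ≤ q k := measureReal_nonneg
    calc D (k + 1) ≤ D k + (B (k + 1) - B k) * q k := hstep k hk
      _ ≤ D k + 15 * R * ((k : ℝ) ^ 3 * q k) := by nlinarith
      _ ≤ D k + 15 * R * (D k * (1 / κ * (1 / (k : ℝ) ^ (3 / 2 : ℝ)))) := by gcongr
      _ = D k * (15 * R / κ * (1 / (k : ℝ) ^ (3 / 2 : ℝ)) + 1) := by ring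
      _ ≤ _ := by
        gcongr
        · exact hD0 k hk.le
        · exact Real.add_one_le_exp _
  have hone : D 1 ≤ a + R := by
    have h := hstep 0 (by omega)
    simp only [hD, hν0, hq, hBdef] at h ⊢
    simp at h ⊢
    linarith
  have hall : ∀ k, 1 ≤ k → k ≤ K →
      D k ≤ (a + R) * Real.exp (15 * R / κ * ∑ j ∈ Finset.range k, 1 / (j : ℝ) ^ (3 / 2 : ℝ)) := by
    intro k hk
    induction k, hk using Nat.le_induction with
    | base => intro _; simpa using hone
    | succ k hk1 ih =>
      intro hk
      rw [Finset.sum_range_succ, mul_add, Real.exp_add, ← mul_assoc]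
      exact (hgrow k hk1 (by omega)).trans (by gcongr; exact ih (by omega))
  have hDK : D K ≤ (a + R) * E := by
    refine (hall K hK le_rfl).trans ?_
    simp only [hE]
    gcongr
    exact hsum.sum_le_tsum _ (fun j _ => by positivity)
  have hfinal := (hlow K le_rfl).trans hDK
  have hKp : 0 < √((K : ℝ) ^ 9) := by positivity
  change q K ≤ _
  rw [le_div_iff₀ hKp, div_mul_eq_mul_div, le_div_iff₀ hκ0]
  have hE0 : 0 < E := Real.exp_pos _
  calc q K * √((K : ℝ) ^ 9) * κ = κ * √((K : ℝ) ^ 9) * q K := by ring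
    _ ≤ (a + R) * E := hfinal
    _ ≤ (1 + R) * E * (a + 1) := by
        nlinarith [mul_nonneg ha hR0.le, mul_nonneg (mul_nonneg ha hR0.le) hE0.le]

/-- One step of a walk killed above a barrier: adding an independent increment convolves the law. -/
theorem map_restrict_inter_eq_conv_restrict {Ω E : Type*} {mΩ : MeasurableSpace Ω}
    {mE : MeasurableSpace E} {P : Measure Ω} [IsProbabilityMeasure P] {V : Ω → E} {f : E → ℝ}
    {ξ : Ω → ℝ} (hV : Measurable V) (hf : Measurable f) (hξ : Measurable ξ)
    (hind : IndepFun V ξ P) {s : Set E} (hs : MeasurableSet s) (b : ℝ) :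
    (P.restrict (V ⁻¹' s ∩ {ω | f (V ω) + ξ ω ≤ b})).map (fun ω => f (V ω) + ξ ω) =
      ((P.restrict (V ⁻¹' s)).map (fun ω => f (V ω)) ∗ P.map ξ).restrict (Set.Iic b) := by
  have hfV : Measurable fun ω => f (V ω) := hf.comp hV
  have : IsProbabilityMeasure (P.map ξ) := Measure.isProbabilityMeasure_map hξ.aemeasurable
  have hprod : ((P.restrict (V ⁻¹' s)).map fun ω => f (V ω)).prod (P.map ξ) =
      (P.restrict (V ⁻¹' s)).map fun ω => (f (V ω), ξ ω) := by
    refine Measure.prod_eq fun u w hu hw => ?_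
    rw [Measure.map_apply (hfV.prodMk hξ) (hu.prod hw), Measure.map_apply hfV hu,
      Measure.map_apply hξ hw, Measure.restrict_apply ((hfV.prodMk hξ) (hu.prod hw)),
      Measure.restrict_apply (hfV hu)]
    have h := hind.measure_inter_preimage_eq_mul (f ⁻¹' u ∩ s) w ((hf hu).inter hs) hw
    rw [show (fun ω => f (V ω)) ⁻¹' u ∩ V ⁻¹' s = V ⁻¹' (f ⁻¹' u ∩ s) from rfl, ← h]
    congr 1
    ext ω
    simp only [Set.mem_inter_iff, Set.mem_preimage, Set.mem_prod]
    tauto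
  rw [Measure.conv, hprod, Measure.map_map (by fun_prop) (hfV.prodMk hξ),
    Measure.restrict_map (by fun_prop) measurableSet_Iic]
  rw [Measure.restrict_restrict (by exact (hfV.add hξ) measurableSet_Iic), Set.inter_comm]
  rfl

theorem exists_gaussianWalk_persistence_bound (c m : ℝ) (hc : 0 < c) (hm : 0 ≤ m) :
    ∃ A : ℝ, 0 < A ∧ ∀ {Ω : Type} [MeasurableSpace Ω] (P : Measure Ω)
      [IsProbabilityMeasure P] (S : ℕ → Ω → ℝ) (K : ℕ) (a : ℝ) (v : ℕ → ℝ≥0),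
      1 ≤ K → 0 ≤ a →
      (∀ k, (v k : ℝ) = ((k : ℝ) + 1) ^ 9 - (k : ℝ) ^ 9 + c * ((k : ℝ) + 1) ^ 2) →
      (∀ k, Measurable (S k)) → (∀ ω, S 0 ω = 0) →
      (∀ k < K, IndepFun (fun ω (j : Fin (k + 1)) => S j ω) (fun ω => S (k + 1) ω - S k ω) P) →
      (∀ k < K, P.map (fun ω => S (k + 1) ω - S k ω) = gaussianReal 0 (v k)) →
      P.real {ω | ∀ j, 1 ≤ j → j ≤ K → S j ω ≤ a + m * (j : ℝ) ^ 3} ≤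
        A * (a + 1) / √((K : ℝ) ^ 9) := by
  obtain ⟨A, hA, H⟩ := exists_persistence_bound c m hc hm
  refine ⟨A, hA, ?_⟩
  intro Ω mΩ P _ S K a v hK ha hv hS hS0 hind hlaw
  set U : ℕ → Set Ω := fun k => {ω | ∀ j, 1 ≤ j → j ≤ k → S j ω ≤ a + m * (j : ℝ) ^ 3}
  have h := H K a v (fun k => a + m * (k : ℝ) ^ 3) (fun k => (P.restrict (U k)).map (S k)) hK ha hv
    (fun _ => rfl) ?_ ?_
  · rwa [map_measureReal_apply (hS K) MeasurableSet.univ, Set.preimage_univ,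
      measureReal_restrict_apply_univ] at h
  · have hU : U 0 = Set.univ := by
      ext ω; simp only [U, Set.mem_ofPred_eq, Set.mem_univ, iff_true]; intro j; omega
    have hc : S 0 = fun _ => 0 := funext hS0
    simp only [hU, Measure.restrict_univ, hc, Measure.map_const, measure_univ, one_smul]
  · intro k hk
    set s : Set (Fin (k + 1) → ℝ) :=
      ⋂ j : Fin (k + 1), {x | 1 ≤ (j : ℕ) → x j ≤ a + m * ((j : ℕ) : ℝ) ^ 3}
    have hs : MeasurableSet s := by
      refine MeasurableSet.iInter fun j => ?_
      by_cases hj : 1 ≤ (j : ℕ)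
      · simpa [hj] using measurableSet_le (measurable_pi_apply j) measurable_const
      · simp [hj]
    have h := map_restrict_inter_eq_conv_restrict (P := P)
      (V := fun ω (j : Fin (k + 1)) => S j ω) (f := fun x => x (Fin.last k))
      (ξ := fun ω => S (k + 1) ω - S k ω)
      (measurable_pi_lambda _ fun j => hS j) (measurable_pi_apply _)
      ((hS (k + 1)).sub (hS k)) (hind k hk) hs (a + m * ((k + 1 : ℕ) : ℝ) ^ 3)
    rw [hlaw k hk] at h
    simp only [Fin.val_last, add_sub_cancel] at h
    have h1 : (fun ω (j : Fin (k + 1)) => S j ω) ⁻¹' s = U k := by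
      ext ω
      simp only [s, U, Set.mem_preimage, Set.mem_iInter, Set.mem_ofPred_eq]
      exact ⟨fun h j hj hjk => h ⟨j, by omega⟩ hj, fun h j hj => h j hj (by omega)⟩
    have h2 : U (k + 1) = U k ∩ {ω | S (k + 1) ω ≤ a + m * ((k + 1 : ℕ) : ℝ) ^ 3} := by
      ext ω
      simp only [U, Set.mem_inter_iff, Set.mem_ofPred_eq]
      refine ⟨fun h => ⟨fun j h1 h2 => h j h1 (by omega), h _ (by omega) le_rfl⟩, ?_⟩
      rintro ⟨h1, h2⟩ j hj hjk
      rcases Nat.lt_or_ge k j with h | h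
      · obtain rfl : j = k + 1 := by omega
        exact h2
      · exact h1 j hj h
    rw [h1, ← h2] at h
    exact h

theorem ProbabilityTheory.IsGaussianProcess.of_mem_span {Ω S T : Type*} {mΩ : MeasurableSpace Ω}
    {P : Measure Ω} {X : T → Ω → ℝ} (hX : IsGaussianProcess X P) {Y : S → Ω → ℝ}
    (hY : ∀ s, Y s ∈ Submodule.span ℝ (Set.range X)) : IsGaussianProcess Y P := by
  refine hX.of_isGaussianProcess fun s => ?_
  obtain ⟨c, hc⟩ := Finsupp.mem_span_range_iff_exists_finsupp.1 (hY s)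
  refine ⟨c.support, ∑ i : c.support, c i • ContinuousLinearMap.proj i, fun ω => ?_⟩
  rw [← hc, Finsupp.sum]
  simp [Finset.sum_apply]
  exact (Finset.sum_coe_sort c.support fun i => c i * X i ω).symm

theorem ProbabilityTheory.IsGaussianProcess.integral_eq_zero_of_mem_span {Ω T : Type*}
    {mΩ : MeasurableSpace Ω} {P : Measure Ω} {X : T → Ω → ℝ} (hX : IsGaussianProcess X P)
    (h0 : ∀ t, ∫ ω, X t ω ∂P = 0) {Y : Ω → ℝ} (hY : Y ∈ Submodule.span ℝ (Set.range X)) :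
    ∫ ω, Y ω ∂P = 0 := by
  obtain ⟨c, rfl⟩ := Finsupp.mem_span_range_iff_exists_finsupp.1 hY
  simp only [Finsupp.sum, Finset.sum_apply, Pi.smul_apply, smul_eq_mul]
  rw [integral_finsetSum _ fun i _ => (hX.hasGaussianLaw_eval i).integrable.const_mul _]
  simp [integral_const_mul, h0]

theorem measurable_of_mem_span {Ω T : Type*} {mΩ : MeasurableSpace Ω} {X : T → Ω → ℝ}
    (hX : ∀ t, Measurable (X t)) {Y : Ω → ℝ} (hY : Y ∈ Submodule.span ℝ (Set.range X)) :
    Measurable Y := by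
  obtain ⟨c, rfl⟩ := Finsupp.mem_span_range_iff_exists_finsupp.1 hY
  rw [Finsupp.sum, Finset.sum_fn]
  exact Finset.measurable_sum _ fun i _ => (hX i).const_smul (c i)

theorem ProbabilityTheory.IsGaussianProcess.indepFun_of_mem_span {Ω S S' T : Type*}
    {mΩ : MeasurableSpace Ω} {P : Measure Ω} {X : T → Ω → ℝ} (hX : IsGaussianProcess X P)
    {Y : S → Ω → ℝ} {Z : S' → Ω → ℝ} (hY : ∀ s, Y s ∈ Submodule.span ℝ (Set.range X))
    (hZ : ∀ s, Z s ∈ Submodule.span ℝ (Set.range X)) (h : ∀ s s', cov[Y s, Z s'; P] = 0) :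
    IndepFun (fun ω s => Y s ω) (fun ω s => Z s ω) P := by
  have hYZ : IsGaussianProcess (Sum.elim Y Z) P := hX.of_mem_span fun s => by
    cases s with
    | inl s => exact hY s
    | inr s => exact hZ s
  exact hYZ.indepFun_of_covariance_eq_zero (fun s => hYZ.aemeasurable (Sum.inl s))
    (fun s => hYZ.aemeasurable (Sum.inr s)) h

theorem gaussianReal_Icc_le (μ : ℝ) {v : ℝ≥0} (hv : v ≠ 0) (x w : ℝ) :
    gaussianReal μ v (Set.Icc x (x + w)) ≤ ENNReal.ofReal (w / √(2 * Real.pi * v)) := by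
  rw [gaussianReal_apply μ hv]
  calc ∫⁻ y in Set.Icc x (x + w), gaussianPDF μ v y
      ≤ ∫⁻ y in Set.Icc x (x + w), ENNReal.ofReal (√(2 * Real.pi * v))⁻¹ := by
        refine lintegral_mono fun y => ENNReal.ofReal_le_ofReal ?_
        rw [gaussianPDFReal]
        refine mul_le_of_le_one_right (by positivity) (Real.exp_le_one_iff.2 ?_)
        exact div_nonpos_of_nonpos_of_nonneg (neg_nonpos.2 (sq_nonneg _)) (by positivity)
    _ = _ := by
        rw [setLIntegral_const, Real.volume_Icc, ← ENNReal.ofReal_mul (by positivity)]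
        congr 1
        ring

theorem IndepFun.measure_inter_add_mem_Icc_le {Ω E : Type*} {mΩ : MeasurableSpace Ω}
    {mE : MeasurableSpace E} {P : Measure Ω} [IsProbabilityMeasure P] {U : Ω → E} {M : Ω → ℝ}
    (hU : Measurable U) (hM : Measurable M) (hind : IndepFun U M P) {s : Set E}
    (hs : MeasurableSet s) {g : E → ℝ} (hg : Measurable g) {w : ℝ} {δ : ℝ≥0∞}
    (hδ : ∀ y, P.map M (Set.Icc y (y + w)) ≤ δ) (x : ℝ) :
    P {ω | U ω ∈ s ∧ g (U ω) + M ω ∈ Set.Icc x (x + w)} ≤ P (U ⁻¹' s) * δ := by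
  have : IsProbabilityMeasure (P.map M) := Measure.isProbabilityMeasure_map hM.aemeasurable
  set A : Set (E × ℝ) := {p | p.1 ∈ s ∧ g p.1 + p.2 ∈ Set.Icc x (x + w)}
  have hA : MeasurableSet A :=
    (measurable_fst hs).inter (((hg.comp measurable_fst).add measurable_snd) measurableSet_Icc)
  have h := hind.map_prod_eq_prod_map_map hU.aemeasurable hM.aemeasurable
  have h1 : P {ω | U ω ∈ s ∧ g (U ω) + M ω ∈ Set.Icc x (x + w)} =
      P.map (fun ω => (U ω, M ω)) A := by
    rw [Measure.map_apply (hU.prodMk hM) hA]; rfl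
  rw [h1, h, Measure.prod_apply hA, ← Measure.map_apply hU hs, mul_comm, ← setLIntegral_const,
    ← lintegral_indicator hs]
  refine lintegral_mono fun u => ?_
  by_cases hu : u ∈ s
  · rw [Set.indicator_of_mem hu]
    refine le_trans (measure_mono ?_) (hδ (x - g u))
    rintro y ⟨-, h2, h3⟩
    dsimp at h2 h3
    exact ⟨by linarith, by linarith⟩
  · rw [Set.indicator_of_notMem hu]
    have : Prod.mk u ⁻¹' A = ∅ := by
      ext y; simp [A, hu]
    simp [this]

/-- The variance function of the walks used to dominate the process near its two endpoints. -/
def walkVariance (c : ℝ) (k : ℕ) : ℝ :=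
  (k : ℝ) ^ 9 + ∑ i ∈ Finset.range k, c * ((i : ℝ) + 1) ^ 2

theorem walkVariance_succ_sub (c : ℝ) (k : ℕ) : walkVariance c (k + 1) - walkVariance c k =
    ((k : ℝ) + 1) ^ 9 - (k : ℝ) ^ 9 + c * ((k : ℝ) + 1) ^ 2 := by
  simp only [walkVariance, Finset.sum_range_succ]; push_cast; ring

theorem exists_gaussianProcess_persistence_bound (c m : ℝ) (hc : 0 < c) (hm : 0 ≤ m) :
    ∃ A : ℝ, 0 < A ∧ ∀ {Ω : Type} [MeasurableSpace Ω] (P : Measure Ω)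
      [IsProbabilityMeasure P] (F : ℕ → Ω → ℝ) (K : ℕ) (a : ℝ),
      1 ≤ K → 0 ≤ a → (∀ k, Measurable (F k)) → IsGaussianProcess F P →
      (∀ k, ∫ ω, F k ω ∂P = 0) → (∀ ω, F 0 ω = 0) →
      (∀ j k, j ≤ k → k ≤ K → cov[F j, F k; P] = walkVariance c j) →
      P.real {ω | ∀ j, 1 ≤ j → j ≤ K → F j ω ≤ a + m * (j : ℝ) ^ 3} ≤
        A * (a + 1) / √((K : ℝ) ^ 9) := by
  obtain ⟨A, hA, H⟩ := exists_gaussianWalk_persistence_bound c m hc hm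
  refine ⟨A, hA, ?_⟩
  intro Ω _ P _ F K a hK ha hF hG h0 hF0 hcov
  have hv : ∀ k : ℕ, 0 ≤ ((k : ℝ) + 1) ^ 9 - (k : ℝ) ^ 9 + c * ((k : ℝ) + 1) ^ 2 := by
    intro k
    have h1 : (k : ℝ) ^ 9 ≤ ((k : ℝ) + 1) ^ 9 := by gcongr; linarith
    have h2 : 0 < c * ((k : ℝ) + 1) ^ 2 := by positivity
    linarith
  have hmem : ∀ k, F k ∈ Submodule.span ℝ (Set.range F) := fun k => Submodule.subset_span ⟨k, rfl⟩
  have hL2 : ∀ k, MemLp (F k) 2 P := fun k => (hG.hasGaussianLaw_eval k).memLp_two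
  have hmemd : ∀ k, F (k + 1) - F k ∈ Submodule.span ℝ (Set.range F) := fun k =>
    Submodule.sub_mem _ (hmem _) (hmem _)
  refine H P F K a (fun k => ⟨_, hv k⟩) hK ha (fun _ => rfl) hF hF0 (fun k hk => ?_) fun k hk => ?_
  · have h := hG.indepFun_of_mem_span (Y := fun j : Fin (k + 1) => F j)
      (Z := fun _ : Unit => F (k + 1) - F k) (fun j => hmem _) (fun _ => hmemd k) ?_
    · exact h.comp (φ := id) (ψ := fun z : Unit → ℝ => z ()) measurable_id (by fun_prop)
    · intro j _
      rw [covariance_sub_right (hL2 _) (hL2 _) (hL2 _), hcov _ _ (by omega) (by omega),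
        hcov _ _ (by omega) (by omega), sub_self]
  · have hg : HasGaussianLaw (F (k + 1) - F k) P := hG.hasGaussianLaw_sub
    have h := hg.map_eq_gaussianReal
    rw [hG.integral_eq_zero_of_mem_span h0 (hmemd k)] at h
    refine h.trans ?_
    congr 1
    have hvar : Var[F (k + 1) - F k; P] =
        ((k : ℝ) + 1) ^ 9 - (k : ℝ) ^ 9 + c * ((k : ℝ) + 1) ^ 2 := by
      rw [← covariance_self (hg.aemeasurable), covariance_sub_sub (hL2 _) (hL2 _) (hL2 _) (hL2 _),
        hcov _ _ le_rfl (by omega), covariance_comm, hcov _ _ (Nat.le_succ k) (by omega),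
        hcov _ _ le_rfl (by omega), ← walkVariance_succ_sub]
      ring
    rw [hvar, Real.toNNReal_of_nonneg (hv k)]
    rfl

theorem exists_two_sided_persistence_bound (c m : ℝ) (hc : 0 < c) (hm : 0 ≤ m) :
    ∃ A : ℝ, 0 < A ∧ ∀ {Ω : Type} [MeasurableSpace Ω] (P : Measure Ω)
      [IsProbabilityMeasure P] (F L : ℕ → Ω → ℝ) (N : Ω → ℝ) (K : ℕ) (n a₁ a₂ x w : ℝ),
      1 ≤ K → 3 * (K : ℝ) ^ 9 ≤ n → 0 ≤ a₁ → 0 ≤ a₂ → 0 ≤ w →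
      (∀ k, Measurable (F k)) → (∀ k, Measurable (L k)) → Measurable N →
      IsGaussianProcess (Sum.elim (Sum.elim F L) fun _ : Unit => N) P →
      (∀ k, ∫ ω, F k ω ∂P = 0) → (∀ k, ∫ ω, L k ω ∂P = 0) →
      (∀ ω, F 0 ω = 0) → (∀ ω, L 0 ω = 0) →
      (∀ j k, j ≤ k → k ≤ K → cov[F j, F k; P] = walkVariance c j) →
      (∀ j k, j ≤ k → k ≤ K → cov[L j, L k; P] = walkVariance c j) →
      (∀ j k, j ≤ K → k ≤ K → cov[F j, L k; P] = 0) →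
      (∀ k ≤ K, cov[N, F k; P] = (k : ℝ) ^ 9) → (∀ k ≤ K, cov[N, L k; P] = -(k : ℝ) ^ 9) →
      n ≤ Var[N; P] →
      P.real {ω | (∀ j, 1 ≤ j → j ≤ K → F j ω ≤ a₁ + m * (j : ℝ) ^ 3) ∧
          (∀ j, 1 ≤ j → j ≤ K → L j ω ≤ a₂ + m * (j : ℝ) ^ 3) ∧ N ω ∈ Set.Icc x (x + w)} ≤
        A * (a₁ + 1) / √((K : ℝ) ^ 9) * (A * (a₂ + 1) / √((K : ℝ) ^ 9)) * (w / √(n / 3)) := by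
  obtain ⟨A, hA, H⟩ := exists_gaussianProcess_persistence_bound c m hc hm
  refine ⟨A, hA, ?_⟩
  intro Ω _ P _ F L N K n a₁ a₂ x w hK hn ha₁ ha₂ hw hF hL hN hG hF0 hL0 hFz hLz hFF hLL hFL hNF hNL
    hNN
  have hGF : IsGaussianProcess F P := hG.comp_right fun k => Sum.inl (Sum.inl k)
  have hGL : IsGaussianProcess L P := hG.comp_right fun k => Sum.inl (Sum.inr k)
  have hGN : HasGaussianLaw N P := hG.hasGaussianLaw_eval (Sum.inr ())
  set V := Submodule.span ℝ (Set.range (Sum.elim (Sum.elim F L) fun _ : Unit => N))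
  have hFV : ∀ k, F k ∈ V := fun k => Submodule.subset_span ⟨Sum.inl (Sum.inl k), rfl⟩
  have hLV : ∀ k, L k ∈ V := fun k => Submodule.subset_span ⟨Sum.inl (Sum.inr k), rfl⟩
  have hNV : N ∈ V := Submodule.subset_span ⟨Sum.inr (), rfl⟩
  have hF2 : ∀ k, MemLp (F k) 2 P := fun k => (hGF.hasGaussianLaw_eval k).memLp_two
  have hL2 : ∀ k, MemLp (L k) 2 P := fun k => (hGL.hasGaussianLaw_eval k).memLp_two
  have hN2 : MemLp N 2 P := hGN.memLp_two
  set Δ : ℕ → ℝ := fun j => ((j : ℝ) + 1) ^ 9 - (j : ℝ) ^ 9 with hΔ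
  set α : ℕ → ℝ := fun j => Δ j / (walkVariance c (j + 1) - walkVariance c j) with hα
  have hΔ0 : ∀ j, 0 ≤ Δ j := by
    intro j
    have h1 : (j : ℝ) ^ 9 ≤ ((j : ℝ) + 1) ^ 9 := by gcongr; linarith
    simp only [hΔ]; linarith
  have hvΔ : ∀ j, Δ j < walkVariance c (j + 1) - walkVariance c j := by
    intro j
    rw [walkVariance_succ_sub]
    have h2 : 0 < c * ((j : ℝ) + 1) ^ 2 := by positivity
    simp only [hΔ]; linarith
  have hα1 : ∀ j, α j ≤ 1 := fun j =>
    div_le_one_of_le₀ (hvΔ j).le ((hΔ0 j).trans (hvΔ j).le)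
  have hαv : ∀ j, α j * (walkVariance c (j + 1) - walkVariance c j) = Δ j := fun j =>
    div_mul_cancel₀ _ ((hΔ0 j).trans_lt (hvΔ j)).ne'
  set D : ℕ → Ω → ℝ := fun j => (F (j + 1) - F j) - (L (j + 1) - L j) with hD
  set M : Ω → ℝ := N - ∑ j ∈ Finset.range K, α j • D j with hM
  have hDV : ∀ j, D j ∈ V := fun j => V.sub_mem (V.sub_mem (hFV _) (hFV _))
    (V.sub_mem (hLV _) (hLV _))
  have hMV : M ∈ V := V.sub_mem hNV (V.sum_mem fun j _ => V.smul_mem _ (hDV j))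
  have hD2 : ∀ j, MemLp (D j) 2 P := fun j => ((hF2 _).sub (hF2 _)).sub ((hL2 _).sub (hL2 _))
  have hcovD : ∀ (j) (Y : Ω → ℝ), MemLp Y 2 P → cov[D j, Y; P] =
      (cov[F (j + 1), Y; P] - cov[F j, Y; P]) - (cov[L (j + 1), Y; P] - cov[L j, Y; P]) := by
    intro j Y hY
    simp only [hD]
    rw [covariance_sub_left ((hF2 _).sub (hF2 _)) ((hL2 _).sub (hL2 _)) hY,
      covariance_sub_left (hF2 _) (hF2 _) hY, covariance_sub_left (hL2 _) (hL2 _) hY]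
  have hcovM : ∀ Y : Ω → ℝ, MemLp Y 2 P →
      cov[M, Y; P] = cov[N, Y; P] - ∑ j ∈ Finset.range K, α j * cov[D j, Y; P] := by
    intro Y hY
    simp only [hM]
    rw [covariance_sub_left hN2 (memLp_finsetSum' _ fun j _ => (hD2 j).const_smul _) hY,
      covariance_sum_left' (fun j _ => (hD2 j).const_smul _) hY]
    simp only [covariance_smul_left]
  have htel : ∀ k ≤ K, ∑ j ∈ Finset.range K,
      α j * (walkVariance c (min (j + 1) k) - walkVariance c (min j k)) = (k : ℝ) ^ 9 := by
    intro k hk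
    have : ∀ j, α j * (walkVariance c (min (j + 1) k) - walkVariance c (min j k)) =
        ((min (j + 1) k : ℕ) : ℝ) ^ 9 - ((min j k : ℕ) : ℝ) ^ 9 := by
      intro j
      rcases Nat.lt_or_ge j k with h | h
      · rw [min_eq_left (by omega : j + 1 ≤ k), min_eq_left h.le, hαv]
        simp [hΔ]
      · rw [min_eq_right (by omega : k ≤ j + 1), min_eq_right h]
        ring
    simp_rw [this]
    rw [Finset.sum_range_sub (fun j => ((min j k : ℕ) : ℝ) ^ 9)]
    simp [hk]
  have hFF' : ∀ j k, j ≤ K → k ≤ K → cov[F j, F k; P] = walkVariance c (min j k) := by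
    intro j k hj hk
    rcases le_total j k with h | h
    · rw [hFF j k h hk, min_eq_left h]
    · rw [covariance_comm, hFF k j h hj, min_eq_right h]
  have hLL' : ∀ j k, j ≤ K → k ≤ K → cov[L j, L k; P] = walkVariance c (min j k) := by
    intro j k hj hk
    rcases le_total j k with h | h
    · rw [hLL j k h hk, min_eq_left h]
    · rw [covariance_comm, hLL k j h hj, min_eq_right h]
  have hMF : ∀ k ≤ K, cov[M, F k; P] = 0 := by
    intro k hk
    rw [hcovM _ (hF2 k), hNF k hk, sub_eq_zero, ← htel k hk]
    refine Finset.sum_congr rfl fun j hj => ?_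
    rw [Finset.mem_range] at hj
    rw [hcovD _ _ (hF2 k), hFF' _ _ (by omega) hk, hFF' _ _ hj.le hk,
      covariance_comm (L (j + 1)), covariance_comm (L j), hFL _ _ hk (by omega), hFL _ _ hk hj.le]
    ring
  have hML : ∀ k ≤ K, cov[M, L k; P] = 0 := by
    intro k hk
    rw [hcovM _ (hL2 k), hNL k hk, sub_eq_zero, ← htel k hk, ← Finset.sum_neg_distrib]
    refine Finset.sum_congr rfl fun j hj => ?_
    rw [Finset.mem_range] at hj
    rw [hcovD _ _ (hL2 k), hLL' _ _ (by omega) hk, hLL' _ _ hj.le hk,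
      hFL _ _ (by omega) hk, hFL _ _ hj.le hk]
    ring
  have hMg : HasGaussianLaw M P := (hG.of_mem_span (Y := fun _ : Unit => M)
    fun _ => hMV).hasGaussianLaw_eval ()
  have hM2 : MemLp M 2 P := hMg.memLp_two
  have hvarM : n / 3 ≤ Var[M; P] := by
    rw [← covariance_self hMg.aemeasurable, hcovM _ hM2]
    have h1 : ∀ j ∈ Finset.range K, α j * cov[D j, M; P] = 0 := by
      intro j hj
      rw [Finset.mem_range] at hj
      rw [hcovD _ _ hM2, covariance_comm (F (j + 1)), covariance_comm (F j),
        covariance_comm (L (j + 1)), covariance_comm (L j), hMF _ (by omega), hMF _ hj.le,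
        hML _ (by omega), hML _ hj.le]
      ring
    rw [Finset.sum_eq_zero h1, sub_zero, covariance_comm, hcovM _ hN2,
      covariance_self hGN.aemeasurable]
    have h2 : ∑ j ∈ Finset.range K, α j * cov[D j, N; P] ≤
        ∑ j ∈ Finset.range K, 2 * (((j + 1 : ℕ) : ℝ) ^ 9 - (j : ℝ) ^ 9) := by
      refine Finset.sum_le_sum fun j hj => ?_
      rw [Finset.mem_range] at hj
      rw [hcovD _ _ hN2, covariance_comm (F (j + 1)), covariance_comm (F j),
        covariance_comm (L (j + 1)), covariance_comm (L j), hNF _ (by omega), hNF _ hj.le,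
        hNL _ (by omega), hNL _ hj.le]
      have := hα1 j
      have h3 := hΔ0 j
      simp only [hΔ] at h3
      push_cast
      nlinarith
    rw [← Finset.mul_sum, Finset.sum_range_sub (fun j => ((j : ℕ) : ℝ) ^ 9)] at h2
    simp at h2
    linarith
  have hKp : (0 : ℝ) < (K : ℝ) ^ 9 := by positivity
  have hn0 : 0 < n / 3 := by linarith
  have hvp : Var[M; P].toNNReal ≠ 0 := by
    rw [Ne, Real.toNNReal_eq_zero, not_le]; linarith
  have hδ : ∀ y, P.map M (Set.Icc y (y + w)) ≤ ENNReal.ofReal (w / √(n / 3)) := by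
    intro y
    rw [hMg.map_eq_gaussianReal]
    refine (gaussianReal_Icc_le _ hvp y w).trans (ENNReal.ofReal_le_ofReal ?_)
    gcongr
    rw [Real.coe_toNNReal _ (by linarith)]
    nlinarith [Real.pi_gt_three]
  set Y : ℕ ⊕ ℕ → Ω → ℝ := Sum.elim (fun k => F (min k K)) fun k => L (min k K) with hYdef
  have hYV : ∀ i, Y i ∈ V := by
    rintro (k | k)
    · exact hFV _
    · exact hLV _
  have hYm : ∀ i, Measurable (Y i) := by
    rintro (k | k)
    · exact hF _
    · exact hL _
  have hMm : Measurable M := by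
    refine measurable_of_mem_span ?_ hMV
    rintro ((k | k) | k)
    exacts [hF k, hL k, hN]
  have hind : IndepFun (fun ω i => Y i ω) M P := by
    have h := hG.indepFun_of_mem_span (Y := Y) (Z := fun _ : Unit => M) hYV (fun _ => hMV) ?_
    · exact h.comp (φ := id) (ψ := fun z : Unit → ℝ => z ()) measurable_id (by fun_prop)
    · rintro (k | k) _
      · rw [covariance_comm]; exact hMF _ (min_le_right _ _)
      · rw [covariance_comm]; exact hML _ (min_le_right _ _)
  have hindFL : IndepFun (fun ω k => F (min k K) ω) (fun ω k => L (min k K) ω) P :=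
    hG.indepFun_of_mem_span (Y := fun k => F (min k K)) (Z := fun k => L (min k K))
      (fun _ => hFV _) (fun _ => hLV _) fun _ _ => hFL _ _ (min_le_right _ _) (min_le_right _ _)
  have hs : ∀ a : ℝ, MeasurableSet
      {u : ℕ → ℝ | ∀ j, 1 ≤ j → j ≤ K → u j ≤ a + m * (j : ℝ) ^ 3} := by
    intro a
    simp only [Set.ofPred_forall]
    exact MeasurableSet.iInter fun j => MeasurableSet.iInter fun _ => MeasurableSet.iInter fun _ =>
      measurableSet_le (measurable_pi_apply j) measurable_const
  set s := fun a : ℝ => {u : ℕ → ℝ | ∀ j, 1 ≤ j → j ≤ K → u j ≤ a + m * (j : ℝ) ^ 3} with hsdef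
  set g : (ℕ ⊕ ℕ → ℝ) → ℝ := fun u => ∑ j ∈ Finset.range K,
    α j * ((u (Sum.inl (j + 1)) - u (Sum.inl j)) - (u (Sum.inr (j + 1)) - u (Sum.inr j))) with hg
  have hgm : Measurable g := by fun_prop
  set B : Set (ℕ ⊕ ℕ → ℝ) := {u | (fun k => u (Sum.inl k)) ∈ s a₁ ∧ (fun k => u (Sum.inr k)) ∈ s a₂}
  have hBm : MeasurableSet B :=
    ((hs a₁).preimage (measurable_pi_lambda _ fun k => measurable_pi_apply _)).inter
      ((hs a₂).preimage (measurable_pi_lambda _ fun k => measurable_pi_apply _))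
  have hmain := IndepFun.measure_inter_add_mem_Icc_le (measurable_pi_lambda _ hYm) hMm hind hBm hgm
    hδ x
  have hprod := hindFL.measure_inter_preimage_eq_mul (s a₁) (s a₂) (hs a₁) (hs a₂)
  have hev : ∀ (Z : ℕ → Ω → ℝ) (a : ℝ), (fun ω k => Z (min k K) ω) ⁻¹' s a =
      {ω | ∀ j, 1 ≤ j → j ≤ K → Z j ω ≤ a + m * (j : ℝ) ^ 3} := by
    intro Z a
    ext ω
    simp only [hsdef, Set.mem_preimage, Set.mem_ofPred_eq]
    refine forall_congr' fun j => forall_congr' fun _ => forall_congr' fun hj => ?_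
    rw [min_eq_left hj]
  have hsub : {ω | (∀ j, 1 ≤ j → j ≤ K → F j ω ≤ a₁ + m * (j : ℝ) ^ 3) ∧
      (∀ j, 1 ≤ j → j ≤ K → L j ω ≤ a₂ + m * (j : ℝ) ^ 3) ∧ N ω ∈ Set.Icc x (x + w)} ⊆
      {ω | (fun i => Y i ω) ∈ B ∧ g (fun i => Y i ω) + M ω ∈ Set.Icc x (x + w)} := by
    rintro ω ⟨h1, h2, h3⟩
    have hgN : g (fun i => Y i ω) + M ω = N ω := by
      have : g (fun i => Y i ω) = (∑ j ∈ Finset.range K, α j • D j) ω := by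
        simp only [hg, Finset.sum_apply]
        refine Finset.sum_congr rfl fun j hj => ?_
        rw [Finset.mem_range] at hj
        simp [hYdef, hD, min_eq_left hj.le, min_eq_left (show j + 1 ≤ K from hj)]
      rw [this]; simp [hM]
    refine ⟨⟨?_, ?_⟩, by rwa [hgN]⟩
    · have : ω ∈ (fun ω k => F (min k K) ω) ⁻¹' s a₁ := by rw [hev]; exact h1
      exact this
    · have : ω ∈ (fun ω k => L (min k K) ω) ⁻¹' s a₂ := by rw [hev]; exact h2
      exact this
  have hPB : P ((fun ω i => Y i ω) ⁻¹' B) =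
      P {ω | ∀ j, 1 ≤ j → j ≤ K → F j ω ≤ a₁ + m * (j : ℝ) ^ 3} *
      P {ω | ∀ j, 1 ≤ j → j ≤ K → L j ω ≤ a₂ + m * (j : ℝ) ^ 3} := by
    rw [← hev, ← hev, ← hprod]; rfl
  have hbF := H P F K a₁ hK ha₁ hF hGF hF0 hFz hFF
  have hbL := H P L K a₂ hK ha₂ hL hGL hL0 hLz hLL
  calc _ ≤ (P ((fun ω i => Y i ω) ⁻¹' B) * ENNReal.ofReal (w / √(n / 3))).toReal := by
        refine ENNReal.toReal_mono ?_ ((measure_mono hsub).trans hmain)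
        exact ENNReal.mul_ne_top (measure_ne_top _ _) ENNReal.ofReal_ne_top
    _ ≤ _ := by
        rw [hPB, ENNReal.toReal_mul, ENNReal.toReal_mul, ENNReal.toReal_ofReal (by positivity)]
        gcongr
        exacts [hbF, hbL]

theorem sum_one_div_succ_sq_le (k : ℕ) :
    ∑ i ∈ Finset.range k, 1 / ((i : ℝ) + 1) ^ 2 ≤ 2 := by
  have h : ∀ k : ℕ, ∑ i ∈ Finset.range (k + 1), 1 / ((i : ℝ) + 1) ^ 2 ≤ 2 - 1 / ((k : ℝ) + 1) := by
    intro k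
    induction k with
    | zero => norm_num
    | succ k ih =>
      rw [Finset.sum_range_succ]
      push_cast
      have : 1 / ((k : ℝ) + 1 + 1) ^ 2 ≤ 1 / ((k : ℝ) + 1) - 1 / ((k : ℝ) + 1 + 1) := by
        rw [div_sub_div _ _ (by positivity) (by positivity),
          div_le_div_iff₀ (by positivity) (by positivity)]
        nlinarith [(k.cast_nonneg : (0 : ℝ) ≤ k)]
      linarith
  refine (Finset.sum_le_sum_of_subset_of_nonneg (Finset.range_mono k.le_succ)
    fun i _ _ => by positivity).trans ((h k).trans ?_)
  have : 0 ≤ 1 / ((k : ℝ) + 1) := by positivity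
  linarith

/-- Coercivity, with respect to the `ℓ¹` norm, of the covariance form of a walk whose `i`-th step
has variance `c (i + 1) ^ 2`. -/
theorem mul_sum_abs_sq_le_walk_quadraticForm {K : ℕ} {c : ℝ} (hc : 0 < c) (x : Fin K → ℝ) :
    c / 8 * (∑ k, |x k|) ^ 2 ≤ ∑ j, ∑ k, x j * x k *
      ∑ i ∈ Finset.range (min (j : ℕ) (k : ℕ) + 1), c * ((i : ℝ) + 1) ^ 2 := by
  set X : ℕ → ℝ := fun i => ∑ j : Fin K, if i ≤ (j : ℕ) then x j else 0 with hX
  have hform : ∑ j, ∑ k, x j * x k *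
      ∑ i ∈ Finset.range (min (j : ℕ) (k : ℕ) + 1), c * ((i : ℝ) + 1) ^ 2 =
      ∑ i ∈ Finset.range K, c * ((i : ℝ) + 1) ^ 2 * X i ^ 2 := by
    have h1 : ∀ j k : Fin K, x j * x k *
        ∑ i ∈ Finset.range (min (j : ℕ) (k : ℕ) + 1), c * ((i : ℝ) + 1) ^ 2 =
        ∑ i ∈ Finset.range K, c * ((i : ℝ) + 1) ^ 2 *
          ((if i ≤ (j : ℕ) then x j else 0) * (if i ≤ (k : ℕ) then x k else 0)) := by
      intro j k
      have hs : Finset.range (min (j : ℕ) (k : ℕ) + 1) =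
          (Finset.range K).filter fun i => i ≤ (j : ℕ) ∧ i ≤ (k : ℕ) := by
        ext i
        simp only [Finset.mem_range, Finset.mem_filter]
        have := j.2
        omega
      rw [hs, Finset.sum_filter, Finset.mul_sum]
      refine Finset.sum_congr rfl fun i _ => ?_
      by_cases h1 : i ≤ (j : ℕ) <;> by_cases h2 : i ≤ (k : ℕ) <;> simp [h1, h2]
      ring
    simp_rw [h1]
    rw [Finset.sum_congr rfl fun j _ => Finset.sum_comm, Finset.sum_comm]
    refine Finset.sum_congr rfl fun i _ => ?_
    simp_rw [← Finset.mul_sum]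
    rw [sq (X i), ← Finset.sum_mul]
  have hx : ∀ k : Fin K, x k = X k - X (k + 1) := by
    intro k
    simp only [hX]
    rw [← Finset.sum_sub_distrib, Finset.sum_eq_single k]
    · simp
    · intro j _ hj
      have : (j : ℕ) ≠ k := fun h => hj (Fin.ext h)
      by_cases h : (k : ℕ) ≤ j
      · rw [if_pos h, if_pos (by omega)]; ring
      · rw [if_neg h, if_neg (by omega)]; ring
    · simp
  have hXK : X K = 0 := by
    refine Finset.sum_eq_zero fun j _ => if_neg ?_
    have := j.2
    omega
  have h2 : ∑ k, |x k| ≤ 2 * ∑ i ∈ Finset.range K, |X i| := by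
    calc ∑ k, |x k| ≤ ∑ k : Fin K, (|X k| + |X (k + 1)|) :=
          Finset.sum_le_sum fun k _ => by rw [hx k]; exact abs_sub _ _
      _ = ∑ k ∈ Finset.range K, (|X k| + |X (k + 1)|) :=
          Fin.sum_univ_eq_sum_range (fun k => |X k| + |X (k + 1)|) K
      _ ≤ _ := by
          rw [Finset.sum_add_distrib]
          have h := Finset.sum_range_succ' (fun i => |X i|) K
          rw [Finset.sum_range_succ, hXK] at h
          simp only [abs_zero, add_zero] at h
          linarith [abs_nonneg (X 0)]
  have h3 : (∑ i ∈ Finset.range K, |X i|) ^ 2 ≤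
      (∑ i ∈ Finset.range K, 1 / (c * ((i : ℝ) + 1) ^ 2)) *
        ∑ i ∈ Finset.range K, c * ((i : ℝ) + 1) ^ 2 * X i ^ 2 := by
    refine Finset.sum_sq_le_sum_mul_sum_of_sq_le_mul _ (fun i _ => by positivity)
      (fun i _ => by positivity) fun i _ => ?_
    rw [sq_abs]
    apply le_of_eq
    field_simp
  have h4 : ∑ i ∈ Finset.range K, 1 / (c * ((i : ℝ) + 1) ^ 2) ≤ 2 / c := by
    calc _ = 1 / c * ∑ i ∈ Finset.range K, 1 / ((i : ℝ) + 1) ^ 2 := by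
          rw [Finset.mul_sum]
          exact Finset.sum_congr rfl fun i _ => by rw [div_mul_div_comm, one_mul]
      _ ≤ 1 / c * 2 := by gcongr; exact sum_one_div_succ_sq_le K
      _ = 2 / c := by ring
  rw [hform]
  set D := ∑ i ∈ Finset.range K, c * ((i : ℝ) + 1) ^ 2 * X i ^ 2
  have hD : 0 ≤ D := Finset.sum_nonneg fun i _ => by positivity
  calc c / 8 * (∑ k, |x k|) ^ 2 ≤ c / 8 * (2 * ∑ i ∈ Finset.range K, |X i|) ^ 2 := by
        gcongr
    _ ≤ c / 8 * (4 * (2 / c * D)) := by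
        rw [mul_pow]
        have := h3.trans (mul_le_mul_of_nonneg_right h4 hD)
        norm_num
        gcongr
    _ = D := by field_simp; ring

theorem sum_sum_mul_min_nonneg {ι : Type*} [Fintype ι] (τ : ι → ℕ) (l : ι → ℝ) :
    0 ≤ ∑ i, ∑ j, l i * l j * ((min (τ i) (τ j) : ℕ) : ℝ) := by
  set T := Finset.univ.sup τ
  have h1 : ∀ i j, l i * l j * ((min (τ i) (τ j) : ℕ) : ℝ) =
      ∑ m ∈ Finset.range T, (if m < τ i then l i else 0) * (if m < τ j then l j else 0) := by
    intro i j
    have hs : Finset.range (min (τ i) (τ j)) =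
        (Finset.range T).filter fun m => m < τ i ∧ m < τ j := by
      ext m
      simp only [Finset.mem_range, Finset.mem_filter]
      have : τ i ≤ T := Finset.le_sup (Finset.mem_univ i)
      omega
    have hcard : ((min (τ i) (τ j) : ℕ) : ℝ) = ∑ m ∈ Finset.range (min (τ i) (τ j)), (1 : ℝ) := by
      simp
    rw [hcard, hs, Finset.sum_filter, Finset.mul_sum]
    refine Finset.sum_congr rfl fun m _ => ?_
    by_cases h1 : m < τ i <;> by_cases h2 : m < τ j <;> simp [h1, h2]
  simp_rw [h1]
  rw [Finset.sum_congr rfl fun j _ => Finset.sum_comm, Finset.sum_comm]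
  refine Finset.sum_nonneg fun m _ => ?_
  rw [← Finset.sum_mul_sum]
  exact mul_self_nonneg _

/-- Covariance added to `min (τ i) (τ j)` in order to dominate the process: a slow walk near each
endpoint and an additional common Gaussian variable near the right endpoint. -/
def slackKernel (c c₀ : ℝ) {K : ℕ} : (Fin K ⊕ Fin K) ⊕ Unit → (Fin K ⊕ Fin K) ⊕ Unit → ℝ
  | .inl (.inl j), .inl (.inl k) =>
    ∑ i ∈ Finset.range (min (j : ℕ) (k : ℕ) + 1), c * ((i : ℝ) + 1) ^ 2
  | .inl (.inr j), .inl (.inr k) =>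
    ∑ i ∈ Finset.range (min (j : ℕ) (k : ℕ) + 1), c * ((i : ℝ) + 1) ^ 2 + c₀
  | .inl (.inr _), .inr _ => c₀
  | .inr _, .inl (.inr _) => c₀
  | .inr _, .inr _ => c₀
  | .inl (.inl _), .inl (.inr _) => 0
  | .inl (.inl _), .inr _ => 0
  | .inl (.inr _), .inl (.inl _) => 0
  | .inr _, .inl (.inl _) => 0

theorem slackKernel_comm (c c₀ : ℝ) {K : ℕ} (i j : (Fin K ⊕ Fin K) ⊕ Unit) :
    slackKernel c c₀ i j = slackKernel c c₀ j i := by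
  rcases i with (i | i) | i <;> rcases j with (j | j) | j <;> simp [slackKernel, min_comm]

theorem mul_sum_abs_sq_le_slackKernel {C : ℝ} (hC : 0 < C) {K : ℕ}
    (l : (Fin K ⊕ Fin K) ⊕ Unit → ℝ) :
    C * (∑ i, |l i|) ^ 2 ≤ ∑ i, ∑ j, l i * l j * slackKernel (96 * C) (3 * C) i j := by
  set x : Fin K → ℝ := fun k => l (.inl (.inl k))
  set y : Fin K → ℝ := fun k => l (.inl (.inr k))
  set z : ℝ := l (.inr ())
  have hx := mul_sum_abs_sq_le_walk_quadraticForm (by positivity : 0 < 96 * C) x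
  have hy := mul_sum_abs_sq_le_walk_quadraticForm (by positivity : 0 < 96 * C) y
  set Dx := ∑ j, ∑ k, x j * x k *
      ∑ i ∈ Finset.range (min (j : ℕ) (k : ℕ) + 1), 96 * C * ((i : ℝ) + 1) ^ 2
  set Dy := ∑ j, ∑ k, y j * y k *
      ∑ i ∈ Finset.range (min (j : ℕ) (k : ℕ) + 1), 96 * C * ((i : ℝ) + 1) ^ 2
  have hform : ∑ i, ∑ j, l i * l j * slackKernel (96 * C) (3 * C) i j =
      Dx + Dy + 3 * C * (∑ k, y k + z) ^ 2 := by
    have hyy : ∑ j, ∑ k, y j * y k * (3 * C) = 3 * C * (∑ k, y k) ^ 2 := by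
      simp_rw [← Finset.sum_mul]
      rw [sq, Finset.sum_mul_sum]; ring
    have hyz : ∑ k, y k * z * (3 * C) = 3 * C * z * ∑ k, y k := by
      rw [Finset.mul_sum]; exact Finset.sum_congr rfl fun _ _ => by ring
    have hzy : ∑ k, z * y k * (3 * C) = 3 * C * z * ∑ k, y k := by
      rw [Finset.mul_sum]; exact Finset.sum_congr rfl fun _ _ => by ring
    simp only [Fintype.sum_sum_type, slackKernel, mul_zero, Finset.sum_const_zero, add_zero,
      zero_add, Finset.univ_unique, Finset.sum_singleton, mul_add, Finset.sum_add_distrib]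
    change Dx + (Dy + ∑ j, ∑ k, y j * y k * (3 * C) + ∑ k, z * y k * (3 * C)) +
      (∑ k, y k * z * (3 * C) + z * z * (3 * C)) = _
    rw [hyy, hyz, hzy]
    ring
  have hsum : ∑ i, |l i| = ∑ k, |x k| + ∑ k, |y k| + |z| := by
    simp [Fintype.sum_sum_type, x, y, z]
  have hyabs : |∑ k, y k| ≤ ∑ k, |y k| := Finset.abs_sum_le_sum_abs _ _
  have hz : |z| ≤ |∑ k, y k + z| + ∑ k, |y k| := by
    have := abs_sub (∑ k, y k + z) (∑ k, y k)
    rw [add_sub_cancel_left] at this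
    linarith
  set u := ∑ k, |x k|
  set v := ∑ k, |y k|
  set s := |∑ k, y k + z| with hs
  have hu : 0 ≤ u := Finset.sum_nonneg fun _ _ => abs_nonneg _
  have hv : 0 ≤ v := Finset.sum_nonneg fun _ _ => abs_nonneg _
  have hs0 : 0 ≤ s := abs_nonneg _
  rw [hform, hsum, ← sq_abs (∑ k, y k + z), ← hs]
  have h1 : (u + v + |z|) ^ 2 ≤ (u + 2 * v + s) ^ 2 := by
    gcongr ?_ ^ 2
    linarith
  have h2 : (u + 2 * v + s) ^ 2 ≤ 3 * (u ^ 2 + 4 * v ^ 2 + s ^ 2) := by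
    nlinarith [sq_nonneg (u - 2 * v), sq_nonneg (u - s), sq_nonneg (2 * v - s)]
  nlinarith [mul_le_mul_of_nonneg_left (h1.trans h2) hC.le]

theorem ProbabilityTheory.HasGaussianLaw.comp_measurePreserving {Ω Ω' E : Type*}
    {mΩ : MeasurableSpace Ω} {mΩ' : MeasurableSpace Ω'} {P : Measure Ω} {P' : Measure Ω'}
    [TopologicalSpace E] [AddCommMonoid E] [Module ℝ E] [MeasurableSpace E] {X : Ω → E}
    (hX : HasGaussianLaw X P) {g : Ω' → Ω} (hg : MeasurePreserving g P' P) :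
    HasGaussianLaw (fun ω => X (g ω)) P' := by
  constructor
  have h := AEMeasurable.map_map_of_aemeasurable (μ := P') (f := g) (g := X)
    (by rw [hg.map_eq]; exact hX.aemeasurable) hg.measurable.aemeasurable
  rw [hg.map_eq] at h
  have h2 := hX.isGaussian_map
  rwa [h] at h2

theorem covariance_comp_measurePreserving {Ω Ω' : Type*} {mΩ : MeasurableSpace Ω}
    {mΩ' : MeasurableSpace Ω'} {P : Measure Ω} {P' : Measure Ω'} {X Y : Ω → ℝ}
    (hX : AEStronglyMeasurable X P) (hY : AEStronglyMeasurable Y P) {g : Ω' → Ω}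
    (hg : MeasurePreserving g P' P) :
    cov[fun ω => X (g ω), fun ω => Y (g ω); P'] = cov[X, Y; P] := by
  have h := covariance_map_fun (μ := P') (Z := g) (X := X) (Y := Y) (by rwa [hg.map_eq])
    (by rwa [hg.map_eq]) hg.measurable.aemeasurable
  rw [hg.map_eq] at h
  exact h.symm

/-- A Gaussian family can be enlarged by an independent Gaussian vector of prescribed covariance. -/
theorem isGaussianProcess_add_multivariateGaussian {Ω ι : Type*} [Fintype ι] [DecidableEq ι]
    {mΩ : MeasurableSpace Ω} {P : Measure Ω} [IsProbabilityMeasure P] {X : ι → Ω → ℝ}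
    (hG : IsGaussianProcess X P) {Q : Matrix ι ι ℝ} (hQ : Q.PosSemidef) :
    let P' := P.prod (multivariateGaussian 0 Q)
    let Y := fun (i : ι) (p : Ω × EuclideanSpace ℝ ι) => X i p.1 + p.2 i
    IsGaussianProcess Y P' ∧
      (∀ i, ∫ p, Y i p ∂P' = ∫ ω, X i ω ∂P) ∧
      ∀ i j, cov[Y i, Y j; P'] = cov[X i, X j; P] + Q i j := by
  intro P' Y
  set γ := multivariateGaussian (0 : EuclideanSpace ℝ ι) Q with hγ
  have hX2 : ∀ i, MemLp (X i) 2 P := fun i => (hG.hasGaussianLaw_eval i).memLp_two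
  have hid : HasGaussianLaw (fun z : EuclideanSpace ℝ ι => z) γ := by
    constructor; rw [Measure.map_id']; infer_instance
  have hZ : ∀ i, HasGaussianLaw (fun z : EuclideanSpace ℝ ι => z i) γ := fun i =>
    hid.map_fun (EuclideanSpace.proj i)
  have hZ2 : ∀ i, MemLp (fun z : EuclideanSpace ℝ ι => z i) 2 γ := fun i => (hZ i).memLp_two
  have hZ0 : ∀ i, ∫ z : EuclideanSpace ℝ ι, z i ∂γ = 0 := by
    intro i
    have h := ContinuousLinearMap.integral_comp_comm (μ := γ)
      (EuclideanSpace.proj (𝕜 := ℝ) i : EuclideanSpace ℝ ι →L[ℝ] ℝ) hid.integrable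
    have h0 : ∫ z, z ∂γ = 0 := integral_id_multivariateGaussian
    rw [h0] at h
    exact h.trans (map_zero _)
  have hX1 : ∀ i, MemLp (fun p : Ω × EuclideanSpace ℝ ι => X i p.1) 2 P' := fun i =>
    (hX2 i).comp_fst γ
  have hZ1 : ∀ i, MemLp (fun p : Ω × EuclideanSpace ℝ ι => p.2 i) 2 P' := fun i =>
    (hZ2 i).comp_snd P
  refine ⟨?_, fun i => ?_, fun i j => ?_⟩
  · have hv : HasGaussianLaw (fun ω i => X i ω) P := by
      let R : ({i // i ∈ (Finset.univ : Finset ι)} → ℝ) →L[ℝ] ι → ℝ :=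
        ContinuousLinearMap.pi fun i => ContinuousLinearMap.proj ⟨i, Finset.mem_univ i⟩
      exact (hG.hasGaussianLaw Finset.univ).map_fun R
    have hX' : HasGaussianLaw (fun p : Ω × EuclideanSpace ℝ ι => fun i => X i p.1) P' :=
      hv.comp_measurePreserving measurePreserving_fst
    have hZ' : HasGaussianLaw (fun p : Ω × EuclideanSpace ℝ ι => p.2) P' :=
      hid.comp_measurePreserving measurePreserving_snd
    have hpair := (indepFun_prod₀ hv.aemeasurable (hid.aemeasurable)).hasGaussianLaw hX' hZ'
    refine ⟨fun I => ?_⟩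
    let R : (ι → ℝ) × EuclideanSpace ℝ ι →L[ℝ] I → ℝ := ContinuousLinearMap.pi fun i =>
      (ContinuousLinearMap.proj (R := ℝ) (φ := fun _ : ι => ℝ) (i : ι)).comp
        (ContinuousLinearMap.fst ℝ _ _) +
      (EuclideanSpace.proj (𝕜 := ℝ) (i : ι)).comp (ContinuousLinearMap.snd ℝ _ _)
    exact hpair.map_fun R
  · have h1 := integral_add ((hX1 i).integrable (by norm_num)) ((hZ1 i).integrable (by norm_num))
    refine h1.trans ?_
    have h2 := integral_fun_fst (μ := P) (ν := γ) (fun ω => X i ω)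
    have h3 := integral_fun_snd (μ := P) (ν := γ) (fun z : EuclideanSpace ℝ ι => z i)
    rw [h2, h3, hZ0]; simp
  · have h1 : cov[fun p : Ω × EuclideanSpace ℝ ι => X i p.1, fun p => X j p.1; P'] =
        cov[X i, X j; P] :=
      covariance_comp_measurePreserving (hX2 i).1 (hX2 j).1 measurePreserving_fst
    have h2 : cov[fun p : Ω × EuclideanSpace ℝ ι => p.2 i, fun p => p.2 j; P'] = Q i j :=
      (covariance_comp_measurePreserving (hZ2 i).1 (hZ2 j).1 measurePreserving_snd).trans
        (covariance_eval_multivariateGaussian hQ i j)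
    have h3 : ∀ i j, cov[fun p : Ω × EuclideanSpace ℝ ι => X i p.1, fun p => p.2 j; P'] = 0 :=
      fun i j => covariance_fst_snd_prod (hX2 i) (hZ2 j)
    change cov[(fun p : Ω × EuclideanSpace ℝ ι => X i p.1) + (fun p => p.2 i),
      (fun p : Ω × EuclideanSpace ℝ ι => X j p.1) + (fun p => p.2 j); P'] = _
    rw [covariance_add_left (hX1 i) (hZ1 i) ((hX1 j).add (hZ1 j)),
      covariance_add_right (hX1 i) (hX1 j) (hZ1 j), covariance_add_right (hZ1 i) (hX1 j) (hZ1 j),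
      h1, h2, h3, covariance_comm (fun p : Ω × EuclideanSpace ℝ ι => p.2 i), h3]
    ring

/-- A process in the sense of `IsCenteredGaussianCov`, sampled along finitely many times, has a
measurable version which is a Gaussian process in the sense of Mathlib. -/
theorem IsCenteredGaussianCov.exists_isGaussianProcess {Ω : Type} [MeasurableSpace Ω]
    {P : Measure Ω} [IsProbabilityMeasure P] {G : ℕ → Ω → ℝ} {n : ℕ} {R : ℕ → ℕ → ℝ}
    (hG : IsCenteredGaussianCov P G n R) {ι : Type*} [Fintype ι] (τ : ι → ℕ)
    (hτ : ∀ i, 1 ≤ τ i ∧ τ i ≤ n) :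
    ∃ X : ι → Ω → ℝ, (∀ i, Measurable (X i)) ∧ (∀ i, X i =ᵐ[P] G (τ i)) ∧
      IsGaussianProcess X P ∧ (∀ i, ∫ ω, X i ω ∂P = 0) ∧
      ∀ l : ι → ℝ, ∑ i, ∑ j, l i * l j * cov[X i, X j; P] =
        max (∑ i, ∑ j, l i * l j * R (τ i) (τ j)) 0 := by
  classical
  have hmap : ∀ l : ι → ℝ, P.map (fun ω => ∑ i, l i * G (τ i) ω) =
      gaussianReal 0 (∑ i, ∑ j, l i * l j * R (τ i) (τ j)).toNNReal := by
    intro l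
    let e := Fintype.equivFin ι
    have h := hG (Fintype.card ι) (fun a => τ (e.symm a)) (fun a => l (e.symm a)) fun a => hτ _
    have h1 : ∀ ω, ∑ a, l (e.symm a) * G (τ (e.symm a)) ω = ∑ i, l i * G (τ i) ω := fun ω =>
      e.symm.sum_comp fun i => l i * G (τ i) ω
    have h2 : ∑ a, ∑ b, l (e.symm a) * l (e.symm b) * R (τ (e.symm a)) (τ (e.symm b)) =
        ∑ i, ∑ j, l i * l j * R (τ i) (τ j) := by
      rw [← e.symm.sum_comp]
      exact Finset.sum_congr rfl fun a _ => e.symm.sum_comp fun j =>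
        l (e.symm a) * l j * R (τ (e.symm a)) (τ j)
    simp only [h1, h2] at h
    exact h
  have hmeas : ∀ i, AEMeasurable (G (τ i)) P := by
    intro i
    have h := hmap (Pi.single i 1)
    simp only [Pi.single_apply, ite_mul, one_mul, zero_mul, Finset.sum_ite_eq', Finset.mem_univ,
      if_true] at h
    by_contra hn
    rw [Measure.map_of_not_aemeasurable hn] at h
    exact (IsProbabilityMeasure.ne_zero _) h.symm
  set X : ι → Ω → ℝ := fun i => (hmeas i).mk (G (τ i)) with hX
  have hXm : ∀ i, Measurable (X i) := fun i => (hmeas i).measurable_mk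
  have hXG : ∀ i, X i =ᵐ[P] G (τ i) := fun i => (hmeas i).ae_eq_mk.symm
  have hmapX : ∀ l : ι → ℝ, P.map (fun ω => ∑ i, l i * X i ω) =
      gaussianReal 0 (∑ i, ∑ j, l i * l j * R (τ i) (τ j)).toNNReal := by
    intro l
    rw [← hmap l]
    refine Measure.map_congr ?_
    filter_upwards [ae_all_iff.2 hXG] with ω hω
    exact Finset.sum_congr rfl fun i _ => by rw [hω i]
  have hvec : HasGaussianLaw (fun ω i => X i ω) P := by
    constructor
    refine isGaussian_of_map_eq_gaussianReal fun L => ⟨0,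
      (∑ i, ∑ j, L (Pi.single i 1) * L (Pi.single j 1) * R (τ i) (τ j)).toNNReal, ?_⟩
    rw [Measure.map_map L.measurable (measurable_pi_lambda _ hXm),
      ← hmapX fun i => L (Pi.single i 1)]
    congr 1
    ext ω
    simp only [Function.comp_apply]
    conv_lhs => rw [pi_eq_sum_univ' (fun i => X i ω), map_sum]
    refine Finset.sum_congr rfl fun i _ => ?_
    rw [map_smul, smul_eq_mul, mul_comm]
  have hproc : IsGaussianProcess X P := by
    refine ⟨fun I => ?_⟩
    let S : (ι → ℝ) →L[ℝ] I → ℝ := ContinuousLinearMap.pi fun i =>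
      ContinuousLinearMap.proj (i : ι)
    exact hvec.map_fun S
  have hlaw : ∀ l : ι → ℝ, HasLaw (fun ω => ∑ i, l i * X i ω)
      (gaussianReal 0 (∑ i, ∑ j, l i * l j * R (τ i) (τ j)).toNNReal) P := fun l =>
    ⟨(Finset.measurable_sum _ fun i _ => (hXm i).const_mul _).aemeasurable, hmapX l⟩
  refine ⟨X, hXm, hXG, hproc, fun i => ?_, fun l => ?_⟩
  · have h := (hlaw (Pi.single i 1)).integral_eq
    simpa [Pi.single_apply, ite_mul] using h
  · have h := (hlaw l).variance_eq
    rw [variance_id_gaussianReal, Real.coe_toNNReal'] at h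
    rw [← h, ← covariance_self (hlaw l).aemeasurable]
    have h2 : ∀ i, MemLp (fun ω => l i * X i ω) 2 P := fun i =>
      (hproc.hasGaussianLaw_eval i).memLp_two.const_mul _
    rw [covariance_fun_sum_fun_sum h2 h2]
    refine Finset.sum_congr rfl fun i _ => Finset.sum_congr rfl fun j _ => ?_
    rw [covariance_const_mul_left, covariance_const_mul_right]
    ring

theorem IsCenteredGaussianCov.exists_comparison {Ω : Type} [MeasurableSpace Ω] {P : Measure Ω}
    [IsProbabilityMeasure P] {G : ℕ → Ω → ℝ} {n : ℕ} {R : ℕ → ℕ → ℝ}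
    (hG : IsCenteredGaussianCov P G n R) {C : ℝ} (hC : 0 < C)
    (hR : ∀ i j, 1 ≤ i → i ≤ n → 1 ≤ j → j ≤ n → |R i j - ((min i j : ℕ) : ℝ)| ≤ C) {K : ℕ}
    (τ : (Fin K ⊕ Fin K) ⊕ Unit → ℕ) (hτ : ∀ i, 1 ≤ τ i ∧ τ i ≤ n) :
    ∃ (X : (Fin K ⊕ Fin K) ⊕ Unit → Ω → ℝ)
      (Q : Matrix ((Fin K ⊕ Fin K) ⊕ Unit) ((Fin K ⊕ Fin K) ⊕ Unit) ℝ),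
      (∀ i, Measurable (X i)) ∧ (∀ i, X i =ᵐ[P] G (τ i)) ∧ IsGaussianProcess X P ∧
      (∀ i, ∫ ω, X i ω ∂P = 0) ∧ Q.PosSemidef ∧
      (∀ i j, cov[X i, X j; P] + Q i j =
        ((min (τ i) (τ j) : ℕ) : ℝ) + slackKernel (96 * C) (3 * C) i j) ∧
      ∀ i, Q i i ≤ C + slackKernel (96 * C) (3 * C) i i := by
  classical
  obtain ⟨X, hXm, hXG, hX, hX0, hXcov⟩ := hG.exists_isGaussianProcess τ hτ
  have hR' : ∀ i j, |R (τ i) (τ j) - ((min (τ i) (τ j) : ℕ) : ℝ)| ≤ C := fun i j =>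
    hR _ _ (hτ i).1 (hτ i).2 (hτ j).1 (hτ j).2
  set Q : Matrix ((Fin K ⊕ Fin K) ⊕ Unit) ((Fin K ⊕ Fin K) ⊕ Unit) ℝ := Matrix.of fun i j =>
    ((min (τ i) (τ j) : ℕ) : ℝ) + slackKernel (96 * C) (3 * C) i j - cov[X i, X j; P] with hQ
  refine ⟨X, Q, hXm, hXG, hX, hX0, ?_, fun i j => ?_, fun i => ?_⟩
  · refine Matrix.PosSemidef.of_dotProduct_mulVec_nonneg ?_ fun l => ?_
    · ext i j
      simpa [hQ, slackKernel_comm _ _ i j, covariance_comm (X i)] using min_comm _ _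
    · have hform : star l ⬝ᵥ Q.mulVec l = ∑ i, ∑ j, l i * l j * ((min (τ i) (τ j) : ℕ) : ℝ) +
          ∑ i, ∑ j, l i * l j * slackKernel (96 * C) (3 * C) i j -
          ∑ i, ∑ j, l i * l j * cov[X i, X j; P] := by
        simp only [dotProduct, Matrix.mulVec, Finset.mul_sum, ← Finset.sum_add_distrib,
          ← Finset.sum_sub_distrib]
        refine Finset.sum_congr rfl fun i _ => Finset.sum_congr rfl fun j _ => ?_
        simp only [hQ, Matrix.of_apply, Pi.star_apply, star_trivial]
        ring
      have hmin := sum_sum_mul_min_nonneg τ l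
      have hslack := mul_sum_abs_sq_le_slackKernel hC l
      have hdiff : ∑ i, ∑ j, l i * l j * R (τ i) (τ j) ≤
          ∑ i, ∑ j, l i * l j * ((min (τ i) (τ j) : ℕ) : ℝ) + C * (∑ i, |l i|) ^ 2 := by
        rw [sq, Finset.sum_mul_sum, Finset.mul_sum, ← Finset.sum_add_distrib]
        refine Finset.sum_le_sum fun i _ => ?_
        rw [Finset.mul_sum, ← Finset.sum_add_distrib]
        refine Finset.sum_le_sum fun j _ => ?_
        have h1 : l i * l j * (R (τ i) (τ j) - ((min (τ i) (τ j) : ℕ) : ℝ)) ≤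
            |l i| * |l j| * C := by
          refine (le_abs_self _).trans ?_
          rw [abs_mul, abs_mul]
          gcongr
          exact hR' i j
        linarith
      rw [hform, hXcov l, sub_nonneg]
      have h0 : 0 ≤ C * (∑ i, |l i|) ^ 2 := by positivity
      exact max_le (by linarith) (by linarith)
  · simp only [hQ, Matrix.of_apply]; ring
  · have h := hXcov (Pi.single i 1)
    simp only [Pi.single_apply, ite_mul, one_mul, zero_mul, Finset.sum_ite_eq', Finset.mem_univ,
      if_true, mul_ite, mul_one, mul_zero] at h
    have h1 := hR' i i
    have h2 : R (τ i) (τ i) ≤ cov[X i, X i; P] := by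
      rw [h]; exact le_max_left _ _
    have h3 := (abs_le.1 h1).1
    simp only [hQ, Matrix.of_apply]
    linarith

/-- A union bound for a Gaussian vector, by Chebyshev's inequality. -/
theorem one_half_le_multivariateGaussian_box {ι : Type*} [Fintype ι] [DecidableEq ι]
    {Q : Matrix ι ι ℝ} (hQ : Q.PosSemidef) {s : ι → ℝ} (hs : ∀ i, 0 < s i) {v M : ℝ} (hM : 0 < M)
    (hQs : ∀ i, Q i i ≤ v * s i) (hsum : v * ∑ i, 1 / s i ≤ M ^ 2 / 2) :
    1 / 2 ≤ (multivariateGaussian 0 Q).real {z : EuclideanSpace ℝ ι | ∀ i, |z i| ≤ M * s i} := by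
  set γ := multivariateGaussian (0 : EuclideanSpace ℝ ι) Q with hγ
  have hid : HasGaussianLaw (fun z : EuclideanSpace ℝ ι => z) γ := by
    constructor; rw [Measure.map_id']; infer_instance
  have hZ : ∀ i, HasGaussianLaw (fun z : EuclideanSpace ℝ ι => z i) γ := fun i =>
    hid.map_fun (EuclideanSpace.proj i)
  have hZ0 : ∀ i, ∫ z : EuclideanSpace ℝ ι, z i ∂γ = 0 := by
    intro i
    have h := ContinuousLinearMap.integral_comp_comm (μ := γ)
      (EuclideanSpace.proj (𝕜 := ℝ) i : EuclideanSpace ℝ ι →L[ℝ] ℝ) hid.integrable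
    have h0 : ∫ z, z ∂γ = 0 := integral_id_multivariateGaussian
    rw [h0] at h
    exact h.trans (map_zero _)
  have hcheb : ∀ i, γ.real {z : EuclideanSpace ℝ ι | M * s i ≤ |z i|} ≤
      v / M ^ 2 * (1 / s i) := by
    intro i
    have h := meas_ge_le_variance_div_sq (hZ i).memLp_two (mul_pos hM (hs i))
    simp only [hZ0, sub_zero] at h
    have hvar : Var[fun z : EuclideanSpace ℝ ι => z i; γ] = Q i i := by
      rw [← covariance_self (hZ i).aemeasurable]
      exact covariance_eval_multivariateGaussian hQ i i
    rw [hvar] at h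
    have hQi : 0 ≤ Q i i / (M * s i) ^ 2 := div_nonneg hQ.diag_nonneg (sq_nonneg _)
    refine (ENNReal.toReal_le_of_le_ofReal hQi h).trans ?_
    have hsi := hs i
    calc Q i i / (M * s i) ^ 2 ≤ v * s i / (M * s i) ^ 2 := by gcongr; exact hQs i
      _ = v / M ^ 2 * (1 / s i) := by field_simp
  have hcompl : γ.real {z : EuclideanSpace ℝ ι | ∀ i, |z i| ≤ M * s i}ᶜ ≤ 1 / 2 := by
    calc γ.real {z : EuclideanSpace ℝ ι | ∀ i, |z i| ≤ M * s i}ᶜ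
        ≤ γ.real (⋃ i, {z : EuclideanSpace ℝ ι | M * s i ≤ |z i|}) := by
          refine measureReal_mono fun z hz => ?_
          simp only [Set.mem_compl_iff, Set.mem_ofPred_eq, not_forall, not_le] at hz
          obtain ⟨i, hi⟩ := hz
          exact Set.mem_iUnion.2 ⟨i, hi.le⟩
      _ ≤ ∑ i, γ.real {z : EuclideanSpace ℝ ι | M * s i ≤ |z i|} := measureReal_iUnion_fintype_le _
      _ ≤ ∑ i, v / M ^ 2 * (1 / s i) := Finset.sum_le_sum fun i _ => hcheb i
      _ = (v * ∑ i, 1 / s i) / M ^ 2 := by rw [← Finset.mul_sum]; ring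
      _ ≤ M ^ 2 / 2 / M ^ 2 := by gcongr
      _ = 1 / 2 := by field_simp
  have hmeas : MeasurableSet {z : EuclideanSpace ℝ ι | ∀ i, |z i| ≤ M * s i} := by
    rw [Set.ofPred_forall]
    refine MeasurableSet.iInter fun i => measurableSet_le ?_ measurable_const
    exact (EuclideanSpace.proj (𝕜 := ℝ) i).measurable.abs
  have h := probReal_add_probReal_compl (μ := γ) hmeas
  linarith

/-- The times `(k + 1) ^ 9` and `n - (k + 1) ^ 9` for `k < K`, and the final time `n`. -/
def sampleTime (n : ℕ) {K : ℕ} : (Fin K ⊕ Fin K) ⊕ Unit → ℕ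
  | .inl (.inl k) => ((k : ℕ) + 1) ^ 9
  | .inl (.inr k) => n - ((k : ℕ) + 1) ^ 9
  | .inr _ => n

/-- The tolerance `(k + 1) ^ 3` around the times `(k + 1) ^ 9` and `n - (k + 1) ^ 9`. -/
def sampleScale {K : ℕ} : (Fin K ⊕ Fin K) ⊕ Unit → ℝ
  | .inl (.inl k) => ((k : ℝ) + 1) ^ 3
  | .inl (.inr k) => ((k : ℝ) + 1) ^ 3
  | .inr _ => 1

theorem sampleScale_pos {K : ℕ} (i : (Fin K ⊕ Fin K) ⊕ Unit) : 0 < sampleScale i := by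
  rcases i with (i | i) | i <;> simp only [sampleScale] <;> positivity

theorem sum_one_div_sampleScale_le (K : ℕ) :
    ∑ i : (Fin K ⊕ Fin K) ⊕ Unit, 1 / sampleScale i ≤ 5 := by
  have h : ∑ k : Fin K, 1 / ((k : ℝ) + 1) ^ 3 ≤ 2 := by
    rw [Fin.sum_univ_eq_sum_range fun k => 1 / ((k : ℝ) + 1) ^ 3]
    refine (Finset.sum_le_sum fun k _ => ?_).trans (sum_one_div_succ_sq_le K)
    have hk : (1 : ℝ) ≤ (k : ℝ) + 1 := by simp
    exact one_div_le_one_div_of_le (by positivity) (pow_le_pow_right₀ hk (by norm_num))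
  simp only [Fintype.sum_sum_type, sampleScale, Finset.univ_unique, Finset.sum_singleton]
  linarith

theorem slackKernel_self_le {C : ℝ} (hC : 0 ≤ C) {K : ℕ} (i : (Fin K ⊕ Fin K) ⊕ Unit) :
    C + slackKernel (96 * C) (3 * C) i i ≤ 100 * C * sampleScale i := by
  have h : ∀ k : ℕ, ∑ i ∈ Finset.range (k + 1), 96 * C * ((i : ℝ) + 1) ^ 2 ≤
      96 * C * ((k : ℝ) + 1) ^ 3 := by
    intro k
    calc ∑ i ∈ Finset.range (k + 1), 96 * C * ((i : ℝ) + 1) ^ 2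
        ≤ ∑ _i ∈ Finset.range (k + 1), 96 * C * ((k : ℝ) + 1) ^ 2 := by
          refine Finset.sum_le_sum fun i hi => ?_
          have : (i : ℝ) ≤ k := by exact_mod_cast Nat.lt_succ_iff.1 (Finset.mem_range.1 hi)
          gcongr
      _ = 96 * C * ((k : ℝ) + 1) ^ 3 := by
          rw [Finset.sum_const, Finset.card_range, nsmul_eq_mul]; push_cast; ring
  have h1 : ∀ k : ℕ, C ≤ C * ((k : ℝ) + 1) ^ 3 := fun k =>
    le_mul_of_one_le_right hC (one_le_pow₀ (by simp))
  rcases i with (k | k) | _ <;> simp only [slackKernel, sampleScale, min_self]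
  · linarith [h k, h1 k]
  · linarith [h k, h1 k]
  · linarith

theorem succ_pow_nine_le {K n : ℕ} (h : 3 * K ^ 9 ≤ n) (k : Fin K) :
    3 * ((k : ℕ) + 1) ^ 9 ≤ n :=
  (Nat.mul_le_mul_left 3 (Nat.pow_le_pow_left k.2 9)).trans h

/-- Replacing the process by a Gaussian family with the covariance of Brownian motion plus
`slackKernel` costs a factor `2`, provided the barrier is relaxed polynomially away from the
endpoints. -/
theorem IsCenteredGaussianCov.exists_majorant {Ω : Type} [MeasurableSpace Ω] {P : Measure Ω}
    [IsProbabilityMeasure P] {G : ℕ → Ω → ℝ} {n : ℕ} {R : ℕ → ℕ → ℝ}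
    (hG : IsCenteredGaussianCov P G n R) {C : ℝ} (hC : 0 < C)
    (hR : ∀ i j, 1 ≤ i → i ≤ n → 1 ≤ j → j ≤ n → |R i j - ((min i j : ℕ) : ℝ)| ≤ C)
    {K : ℕ} (hK : 1 ≤ K) (hKn : 3 * K ^ 9 ≤ n) {M : ℝ} (hM : 0 < M) (hMC : 1000 * C ≤ M ^ 2)
    {h : ℕ → ℝ} {a : ℝ} (ha : ∀ i, 1 ≤ i → i ≤ n → h i ≤ a) (t : ℝ) :
    ∃ (Ω' : Type) (_ : MeasurableSpace Ω') (P' : Measure Ω')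
      (Y : (Fin K ⊕ Fin K) ⊕ Unit → Ω' → ℝ), IsProbabilityMeasure P' ∧ (∀ i, Measurable (Y i)) ∧
      IsGaussianProcess Y P' ∧ (∀ i, ∫ ω, Y i ω ∂P' = 0) ∧
      (∀ i j, cov[Y i, Y j; P'] = ((min (sampleTime n i) (sampleTime n j) : ℕ) : ℝ) +
        slackKernel (96 * C) (3 * C) i j) ∧
      P.real (barrierEvent G n t h) ≤ 2 * P'.real
        {ω | (∀ i : Fin K ⊕ Fin K, Y (.inl i) ω ≤ a + M * sampleScale (K := K) (.inl i)) ∧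
          |Y (.inr ()) ω - (t + 1 / 2)| ≤ M + 1 / 2} := by
  classical
  have hKpos : 1 ≤ K ^ 9 := Nat.one_le_pow _ _ hK
  have hτ : ∀ i : Fin K ⊕ Fin K, 1 ≤ sampleTime n (K := K) (.inl i) ∧
      sampleTime n (K := K) (.inl i) ≤ n - 1 := by
    rintro (k | k) <;> have h1 := succ_pow_nine_le hKn k <;>
      have h2 := Nat.one_le_pow 9 ((k : ℕ) + 1) (by omega) <;> simp only [sampleTime] <;> omega
  obtain ⟨X, Q, hXm, hXG, hX, hX0, hQ, hcov, hQd⟩ :=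
    hG.exists_comparison hC hR (sampleTime n (K := K))
    (by
      rintro (i | _)
      · have := hτ i
        omega
      · simp only [sampleTime]; omega)
  obtain ⟨hY, hY0, hYcov⟩ := isGaussianProcess_add_multivariateGaussian hX hQ
  set γ := multivariateGaussian (0 : EuclideanSpace ℝ ((Fin K ⊕ Fin K) ⊕ Unit)) Q with hγ
  have hbox := one_half_le_multivariateGaussian_box hQ sampleScale_pos hM
    (fun i => (hQd i).trans (slackKernel_self_le hC.le i)) (by
      nlinarith [mul_le_mul_of_nonneg_left (sum_one_div_sampleScale_le K) hC.le])
  refine ⟨_, _, P.prod γ, fun i p => X i p.1 + p.2 i, inferInstance, fun i => ?_, hY, fun i => ?_,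
    fun i j => ?_, ?_⟩
  · exact ((hXm i).comp measurable_fst).add
      ((EuclideanSpace.proj (𝕜 := ℝ) i).measurable.comp measurable_snd)
  · exact (hY0 i).trans (hX0 i)
  · exact (hYcov i j).trans (hcov i j)
  set E : Set Ω := {ω | (∀ i : Fin K ⊕ Fin K, X (.inl i) ω ≤ a) ∧ X (.inr ()) ω ∈ Set.Icc t (t + 1)}
  set B : Set (EuclideanSpace ℝ ((Fin K ⊕ Fin K) ⊕ Unit)) := {z | ∀ i, |z i| ≤ M * sampleScale i}
  have hE : P.real (barrierEvent G n t h) ≤ P.real E := by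
    refine ENNReal.toReal_mono (measure_ne_top _ _) (measure_mono_ae ?_)
    filter_upwards [ae_all_iff.2 hXG] with ω hω hωb
    refine ⟨fun i => ?_, ?_⟩
    · rw [hω]
      exact (hωb.1 _ (hτ i).1 (hτ i).2).trans (ha _ (hτ i).1 ((hτ i).2.trans (Nat.sub_le _ _)))
    · rw [hω]
      exact hωb.2
  have hprod : P.real E * γ.real B ≤ (P.prod γ).real
      {p | (∀ i : Fin K ⊕ Fin K, X (.inl i) p.1 + p.2 (.inl i) ≤
          a + M * sampleScale (K := K) (.inl i)) ∧
          |X (.inr ()) p.1 + p.2 (.inr ()) - (t + 1 / 2)| ≤ M + 1 / 2} := by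
    rw [← measureReal_prod_prod]
    refine measureReal_mono fun p hp => ⟨fun i => ?_, ?_⟩
    · exact add_le_add (hp.1.1 i) ((le_abs_self _).trans (hp.2 _))
    · have h1 := hp.1.2
      have h2 := abs_le.1 (hp.2 (.inr ()))
      simp only [sampleScale, mul_one] at h2
      rw [abs_le]
      constructor <;> linarith [h1.1, h1.2, h2.1, h2.2]
  nlinarith [mul_le_mul_of_nonneg_left hbox (measureReal_nonneg : 0 ≤ P.real E)]

/-- The family `Y` as the values at `1, …, K` of a sequence vanishing elsewhere. -/
def extendByZero {Ω : Type*} {K : ℕ} (Y : Fin K → Ω → ℝ) : ℕ → Ω → ℝ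
  | 0 => 0
  | k + 1 => if h : k < K then Y ⟨k, h⟩ else 0

theorem extendByZero_succ {Ω : Type*} {K : ℕ} (Y : Fin K → Ω → ℝ) {k : ℕ} (h : k < K) :
    extendByZero Y (k + 1) = Y ⟨k, h⟩ := dif_pos h

theorem extendByZero_mem {Ω : Type*} {K : ℕ} {Y : Fin K → Ω → ℝ} {S : Submodule ℝ (Ω → ℝ)}
    (hY : ∀ k, Y k ∈ S) (k : ℕ) : extendByZero Y k ∈ S := by
  cases k with
  | zero => exact S.zero_mem
  | succ k =>
    simp only [extendByZero]
    split_ifs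
    · exact hY _
    · exact S.zero_mem

theorem covariance_extendByZero {Ω : Type*} {mΩ : MeasurableSpace Ω} {P : Measure Ω} {K : ℕ}
    {Y Z : Fin K → Ω → ℝ} {r : ℕ → ℕ → ℝ} (h0 : ∀ k, r 0 k = 0) (h0' : ∀ k, r k 0 = 0)
    (h : ∀ j k : Fin K, cov[Y j, Z k; P] = r (j + 1) (k + 1)) {j k : ℕ} (hj : j ≤ K)
    (hk : k ≤ K) : cov[extendByZero Y j, extendByZero Z k; P] = r j k := by
  cases j with
  | zero => simp [extendByZero, h0]
  | succ j =>
    cases k with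
    | zero => simp [extendByZero, h0']
    | succ k =>
      rw [extendByZero_succ Y hj, extendByZero_succ Z hk]
      exact h _ _

theorem covariance_extendByZero_right {Ω : Type*} {mΩ : MeasurableSpace Ω} {P : Measure Ω} {K : ℕ}
    {N : Ω → ℝ} {Z : Fin K → Ω → ℝ} {r : ℕ → ℝ} (h0 : r 0 = 0)
    (h : ∀ k : Fin K, cov[N, Z k; P] = r (k + 1)) {k : ℕ} (hk : k ≤ K) :
    cov[N, extendByZero Z k; P] = r k := by
  cases k with
  | zero => simp [extendByZero, h0]
  | succ k =>
    rw [extendByZero_succ Z hk]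
    exact h _

theorem walkVariance_zero (c : ℝ) : walkVariance c 0 = 0 := by simp [walkVariance]

/-- The two-sided persistence estimate for Brownian motion plus `slackKernel`. -/
theorem exists_slackKernel_persistence_bound {C M : ℝ} (hC : 0 < C) (hM : 0 ≤ M) :
    ∃ A : ℝ, 0 < A ∧ ∀ {Ω : Type} [MeasurableSpace Ω] (P : Measure Ω) [IsProbabilityMeasure P]
      (n K : ℕ) (Y : (Fin K ⊕ Fin K) ⊕ Unit → Ω → ℝ) (a₁ a₂ x w : ℝ), 1 ≤ K → 3 * K ^ 9 ≤ n →
      0 ≤ a₁ → 0 ≤ a₂ → 0 ≤ w → (∀ i, Measurable (Y i)) → IsGaussianProcess Y P →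
      (∀ i, ∫ ω, Y i ω ∂P = 0) →
      (∀ i j, cov[Y i, Y j; P] = ((min (sampleTime n i) (sampleTime n j) : ℕ) : ℝ) +
        slackKernel (96 * C) (3 * C) i j) →
      P.real {ω | (∀ k : Fin K, Y (.inl (.inl k)) ω ≤ a₁ + M * ((k : ℝ) + 1) ^ 3) ∧
          (∀ k : Fin K, Y (.inl (.inr k)) ω - Y (.inr ()) ω ≤ a₂ + M * ((k : ℝ) + 1) ^ 3) ∧
          Y (.inr ()) ω ∈ Set.Icc x (x + w)} ≤
        A * (a₁ + 1) / √((K : ℝ) ^ 9) * (A * (a₂ + 1) / √((K : ℝ) ^ 9)) * (w / √((n : ℝ) / 3)) := by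
  obtain ⟨A, hA, H⟩ := exists_two_sided_persistence_bound (96 * C) M (by positivity) hM
  refine ⟨A, hA, ?_⟩
  intro Ω _ P _ n K Y a₁ a₂ x w hK hKn ha₁ ha₂ hw hYm hY hY0 hcov
  set N : Ω → ℝ := Y (.inr ()) with hN
  set F : ℕ → Ω → ℝ := extendByZero fun k => Y (.inl (.inl k)) with hF
  set L : ℕ → Ω → ℝ := extendByZero fun k => Y (.inl (.inr k)) - N with hL
  have hmem : ∀ i, Y i ∈ Submodule.span ℝ (Set.range Y) := fun i =>
    Submodule.subset_span ⟨i, rfl⟩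
  have hFmem : ∀ k, F k ∈ Submodule.span ℝ (Set.range Y) := extendByZero_mem fun k => hmem _
  have hLmem : ∀ k, L k ∈ Submodule.span ℝ (Set.range Y) := extendByZero_mem fun k =>
    Submodule.sub_mem _ (hmem _) (hmem _)
  have hY2 : ∀ i, MemLp (Y i) 2 P := fun i => (hY.hasGaussianLaw_eval i).memLp_two
  have hnK : ∀ k : Fin K, 3 * ((k : ℕ) + 1) ^ 9 ≤ n := succ_pow_nine_le hKn
  have hpow : ∀ j k : ℕ, min ((j + 1) ^ 9) ((k + 1) ^ 9) = (min j k + 1) ^ 9 := by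
    intro j k
    rw [← (Nat.pow_left_strictMono (n := 9) (by norm_num)).monotone.map_min,
      Nat.add_min_add_right]
  have hbound := H P F L N K n a₁ a₂ x w hK (by exact_mod_cast hKn) ha₁ ha₂ hw
    (fun k => measurable_of_mem_span hYm (hFmem k)) (fun k => measurable_of_mem_span hYm (hLmem k))
    (hYm _) (hY.of_mem_span fun s => by
      rcases s with (s | s) | s
      · exact hFmem s
      · exact hLmem s
      · exact hmem _)
    (fun k => hY.integral_eq_zero_of_mem_span hY0 (hFmem k))
    (fun k => hY.integral_eq_zero_of_mem_span hY0 (hLmem k))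
    (fun _ => rfl) (fun _ => rfl) ?_ ?_ ?_ ?_ ?_ ?_
  · refine le_trans (measureReal_mono ?_) hbound
    rintro ω ⟨h1, h2, h3⟩
    refine ⟨fun j hj hjK => ?_, fun j hj hjK => ?_, h3⟩
    · obtain ⟨k, rfl⟩ := Nat.exists_eq_add_of_le' hj
      rw [hF, extendByZero_succ _ hjK]
      simpa using h1 ⟨k, hjK⟩
    · obtain ⟨k, rfl⟩ := Nat.exists_eq_add_of_le' hj
      rw [hL, extendByZero_succ _ hjK]
      simpa using h2 ⟨k, hjK⟩
  · intro j k hjk hk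
    rw [covariance_extendByZero (r := fun j k => walkVariance (96 * C) (min j k))
      (by simp [walkVariance_zero]) (by simp [walkVariance_zero]) ?_ (hjk.trans hk) hk,
      min_eq_left hjk]
    intro j k
    rw [hcov]
    simp only [sampleTime, slackKernel, walkVariance, Nat.add_min_add_right]
    rw [hpow]
    push_cast
    rfl
  · intro j k hjk hk
    rw [covariance_extendByZero (r := fun j k => walkVariance (96 * C) (min j k))
      (by simp [walkVariance_zero]) (by simp [walkVariance_zero]) ?_ (hjk.trans hk) hk,
      min_eq_left hjk]
    intro j k
    rw [covariance_sub_sub (hY2 _) (hY2 _) (hY2 _) (hY2 _), hcov, hcov, hcov, hcov]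
    have hj := hnK j
    have hk := hnK k
    simp only [sampleTime, slackKernel, walkVariance, Nat.add_min_add_right, min_self]
    have hmin : ((min (n - ((j : ℕ) + 1) ^ 9) (n - ((k : ℕ) + 1) ^ 9) + n : ℕ) : ℝ) =
        ((min (n - ((j : ℕ) + 1) ^ 9) n + min n (n - ((k : ℕ) + 1) ^ 9) +
          (min (j : ℕ) (k : ℕ) + 1) ^ 9 : ℕ) : ℝ) := by
      rw [← hpow]
      congr 1
      omega
    rw [Nat.cast_add, Nat.cast_add, Nat.cast_add, Nat.cast_pow] at hmin
    linarith
  · intro j k hj hk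
    refine covariance_extendByZero (r := fun j k => 0) (fun _ => rfl) (fun _ => rfl) ?_ hj hk
    intro j k
    rw [covariance_sub_right (hY2 _) (hY2 _) (hY2 _), hcov, hcov]
    have hj := hnK j
    have hk := hnK k
    simp only [sampleTime, slackKernel]
    rw [min_eq_left (by omega), min_eq_left (by omega)]
    ring
  · intro k hk
    refine covariance_extendByZero_right (r := fun k => (k : ℝ) ^ 9) (by simp) (fun k => ?_) hk
    have hk := hnK k
    rw [hcov]
    simp only [sampleTime, slackKernel]
    rw [min_eq_right (by omega)]
    push_cast
    ring
  · intro k hk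
    refine covariance_extendByZero_right (r := fun k => -(k : ℝ) ^ 9) (by simp) (fun k => ?_) hk
    have hk := hnK k
    rw [covariance_sub_right (hY2 _) (hY2 _) (hY2 _), hcov, hcov]
    simp only [sampleTime, slackKernel, min_self]
    rw [min_eq_right (by omega), Nat.cast_sub (by omega)]
    push_cast
    ring
  · rw [← covariance_self (hYm _).aemeasurable, hcov]
    simp only [sampleTime, slackKernel, min_self]
    linarith

theorem exists_three_mul_pow_nine_le {n : ℕ} (hn : 3 ≤ n) :
    ∃ K : ℕ, 1 ≤ K ∧ 3 * K ^ 9 ≤ n ∧ n ≤ 1536 * K ^ 9 := by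
  classical
  have hex : ∃ K : ℕ, n < 3 * (K + 1) ^ 9 :=
    ⟨n, by have := Nat.le_self_pow (n := 9) (by norm_num) (n + 1); omega⟩
  obtain ⟨m, hm⟩ : ∃ m, Nat.find hex = m + 1 :=
    Nat.exists_eq_succ_of_ne_zero fun h0 => by
      have := Nat.find_spec hex
      rw [h0] at this
      norm_num at this
      omega
  have h1 := Nat.find_spec hex
  have h2 := Nat.find_min hex (m := m) (by omega)
  rw [hm] at h1
  refine ⟨m + 1, by omega, by omega, ?_⟩
  have h3 : (m + 1 + 1) ^ 9 ≤ (2 * (m + 1)) ^ 9 := Nat.pow_le_pow_left (by omega) 9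
  rw [mul_pow] at h3
  omega

end

/-- Direct barrier upper bound for a centered Gaussian process whose covariance is
within `C` of `min(i,j)`, with an almost linear barrier `|h_i| ≤ C log n`:
for `t < h_{n−1}`, `|t| ≤ n^{1/4}`,
`p_{B,G}(n,t,h) ≤ C₁ (|t| + log n) log n / n^{3/2}`. -/
theorem stmt_19 (C : ℝ) (hC : 0 < C) :
    ∃ (C₁ : ℝ) (n₁ : ℕ), ∀ n : ℕ, n₁ ≤ n →
      ∀ (Ω : Type) (_ : MeasurableSpace Ω) (P : Measure Ω), IsProbabilityMeasure P →
      ∀ (G : ℕ → Ω → ℝ) (Rcov : ℕ → ℕ → ℝ),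
        IsCenteredGaussianCov P G n Rcov →
        (∀ i j, 1 ≤ i → i ≤ n → 1 ≤ j → j ≤ n →
          |Rcov i j - ((min i j : ℕ) : ℝ)| ≤ C) →
      ∀ h : ℕ → ℝ, (∀ i, 1 ≤ i → i ≤ n → |h i| ≤ C * Real.log n) →
      ∀ t : ℝ, t < h (n - 1) → |t| ≤ (n : ℝ) ^ ((1 : ℝ) / 4) →
        (P (barrierEvent G n t h)).toReal
          ≤ C₁ * (|t| + Real.log n) * Real.log n / (n : ℝ) ^ ((3 : ℝ) / 2) := by
  set M : ℝ := 1000 * C + 1 with hM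
  have hM0 : 0 < M := by positivity
  obtain ⟨A, hA, H⟩ := exists_slackKernel_persistence_bound hC hM0.le
  refine ⟨2 * A ^ 2 * (C + 1) * (C + M + 1) * (2 * M + 1) * 1536 * 2, 3, ?_⟩
  intro n hn Ω _ P _ G R hG hR h hh t _ _
  obtain ⟨K, hK, hKn, hnK⟩ := exists_three_mul_pow_nine_le hn
  have hn' : (3 : ℝ) ≤ n := by exact_mod_cast hn
  have hn0 : (0 : ℝ) < n := by linarith
  have hlog : 1 ≤ Real.log n := by
    rw [Real.le_log_iff_exp_le hn0]
    linarith [Real.exp_one_lt_d9]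
  obtain ⟨Ω', _, P', Y, _, hYm, hY, hY0, hYcov, hle⟩ := hG.exists_majorant hC hR hK hKn hM0
    (by nlinarith) (fun i h1 h2 => (le_abs_self _).trans (hh i h1 h2)) t
  have hb := H P' n K Y (C * Real.log n) (C * Real.log n + |t| + M) (t - M) (2 * M + 1) hK hKn
    (by positivity) (by positivity) (by positivity) hYm hY hY0 hYcov
  have hsub : P'.real {ω | (∀ i : Fin K ⊕ Fin K,
      Y (.inl i) ω ≤ C * Real.log n + M * sampleScale (K := K) (.inl i)) ∧
      |Y (.inr ()) ω - (t + 1 / 2)| ≤ M + 1 / 2} ≤ _ := (measureReal_mono (by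
    rintro ω ⟨h1, h2⟩
    rw [abs_le] at h2
    refine ⟨fun k => h1 (.inl k), fun k => ?_, by linarith, by linarith⟩
    have h3 := h1 (.inr k)
    simp only [sampleScale] at h3
    linarith [neg_abs_le t])).trans hb
  have hK0 : (0 : ℝ) < (K : ℝ) ^ 9 := by positivity
  have hnK' : (n : ℝ) ≤ 1536 * (K : ℝ) ^ 9 := by exact_mod_cast hnK
  have hsqrt : √(n : ℝ) / 2 ≤ √((n : ℝ) / 3) := by
    rw [div_le_iff₀ two_pos, ← Real.sqrt_sq (zero_le_two : (0 : ℝ) ≤ 2),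
      ← Real.sqrt_mul (by positivity)]
    exact Real.sqrt_le_sqrt (by linarith)
  have hs0 : 0 < √(n : ℝ) := Real.sqrt_pos.2 hn0
  have hpow : (n : ℝ) ^ ((3 : ℝ) / 2) = n * √(n : ℝ) := by
    rw [Real.sqrt_eq_rpow, ← Real.rpow_one_add' hn0.le (by norm_num)]
    norm_num
  have ht0 := abs_nonneg t
  have ha₁ : C * Real.log n + 1 ≤ (C + 1) * Real.log n := by linarith
  have ha₂ : C * Real.log n + |t| + M + 1 ≤ (C + M + 1) * (|t| + Real.log n) := by
    nlinarith [mul_nonneg hC.le ht0, mul_nonneg hM0.le ht0, mul_le_mul_of_nonneg_left hlog hM0.le]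
  calc (P (barrierEvent G n t h)).toReal
      ≤ 2 * (A * (C * Real.log n + 1) / √((K : ℝ) ^ 9) *
          (A * (C * Real.log n + |t| + M + 1) / √((K : ℝ) ^ 9)) *
          ((2 * M + 1) / √((n : ℝ) / 3))) := hle.trans (by gcongr)
    _ = 2 * A ^ 2 * (C * Real.log n + 1) * (C * Real.log n + |t| + M + 1) * (2 * M + 1) /
          ((K : ℝ) ^ 9 * √((n : ℝ) / 3)) := by
        rw [div_mul_div_comm, Real.mul_self_sqrt hK0.le, div_mul_div_comm]
        ring
    _ ≤ 2 * A ^ 2 * ((C + 1) * Real.log n) * ((C + M + 1) * (|t| + Real.log n)) * (2 * M + 1) /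
          ((n : ℝ) / 1536 * (√(n : ℝ) / 2)) := by
        gcongr
        linarith
    _ = _ := by
        rw [hpow]
        field_simp

end
end
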